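/- Let n ≥ 3, let Γ ⊂ O(n) be a finite subgroup acting freely on ℝⁿ\{0}, and let u : ℝⁿ → [0,∞) be locally Lipschitz, Γ-symmetric, 1-homogeneous, harmonic in the open set {u>0}, with Σ := ∂{u>0}\{0} a smooth embedded hypersurface, u smooth up to Σ from within {u>0} and |∇u| = 1 on Σ. Suppose there exist μ ∈ ℝ, a constant γ ≥ (n/2 − 1 − μ)², and a Γ-symmetric nonnegative function v̄ on {u>0}\{0}, homogeneous of degree −μ, C² on {u>0}, C¹ up to Σ, not identically zero, such that Δv̄ ≥ γ v̄/|x|² in {u>0} and ∂_ν v̄ ≤ H v̄ on Σ, and such that the subsolution is strict in the sense that either Δv̄(x₀) > γ v̄(x₀)/|x₀|² at some point x₀ ∈ {u>0} with v̄(x₀) > 0, or ∂_ν v̄(x₀) < H(x₀) v̄(x₀) at some point x₀ ∈ Σ with v̄(x₀) > 0. Then u is not a Γ-symmetric minimizer against Γ-symmetric competitors. -/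

import Mathlib

open MeasureTheory Metric Set
open scoped RealInnerProductSpace

noncomputable section

/-- The Alt–Caffarelli energy `E_Q(u, U) = ∫_U |∇u|² + Q²·1_{u>0}`. -/
def acEnergy {n : ℕ} (Q : ℝ) (u : EuclideanSpace ℝ (Fin n) → ℝ)
    (U : Set (EuclideanSpace ℝ (Fin n))) : ℝ :=
  ∫ x in U, (‖gradient u x‖ ^ 2 + Q ^ 2 * Set.indicator {y | 0 < u y} (fun _ => (1 : ℝ)) x)

/-- `u` is invariant under the group `Γ` of linear isometries. -/
def IsSymmetricUnder {n : ℕ}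
    (Γ : Subgroup (EuclideanSpace ℝ (Fin n) ≃ₗᵢ[ℝ] EuclideanSpace ℝ (Fin n)))
    (u : EuclideanSpace ℝ (Fin n) → ℝ) : Prop :=
  ∀ g ∈ Γ, ∀ x, u (g x) = u x

/-- A nonnegative locally Lipschitz `Γ`-symmetric function `u` is a `Γ`-symmetric minimizer
against `Γ`-symmetric competitors (with `Q = 1`). -/
def IsSymMinimizer {n : ℕ}
    (Γ : Subgroup (EuclideanSpace ℝ (Fin n) ≃ₗᵢ[ℝ] EuclideanSpace ℝ (Fin n)))
    (u : EuclideanSpace ℝ (Fin n) → ℝ) : Prop :=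
  (∀ x, 0 ≤ u x) ∧ LocallyLipschitz u ∧ IsSymmetricUnder Γ u ∧
    ∀ R > 0, ∀ v : EuclideanSpace ℝ (Fin n) → ℝ, (∀ x, 0 ≤ v x) → LocallyLipschitz v →
      IsSymmetricUnder Γ v →
      (∀ x ∉ ball (0 : EuclideanSpace ℝ (Fin n)) R, v x = u x) →
      acEnergy 1 u (ball 0 R) ≤ acEnergy 1 v (ball 0 R)

/-- The Euclidean Laplacian, as the trace of the Hessian. -/
def lap {n : ℕ} (f : EuclideanSpace ℝ (Fin n) → ℝ) (x : EuclideanSpace ℝ (Fin n)) : ℝ :=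
  ∑ i : Fin n, fderiv ℝ (fun y => fderiv ℝ f y (EuclideanSpace.single i 1)) x
    (EuclideanSpace.single i 1)

/-- The free boundary away from the origin: `Σ = ∂{u>0} \ {0}`. -/
def freeBoundary {n : ℕ} (u : EuclideanSpace ℝ (Fin n) → ℝ) :
    Set (EuclideanSpace ℝ (Fin n)) :=
  frontier {x | 0 < u x} \ {0}

/-- The outward unit normal along `Σ`, computed from a smooth extension `Uext` of `u`
across `Σ` (on `Σ` one has `u = 0`, `u > 0` inside, and `|∇Uext| = 1`, so `-∇Uext` is the
unit normal pointing out of `{u > 0}`). -/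
def nuVec {n : ℕ} (Uext : EuclideanSpace ℝ (Fin n) → ℝ) (x : EuclideanSpace ℝ (Fin n)) :
    EuclideanSpace ℝ (Fin n) :=
  -(gradient Uext x)

/-- The outward mean curvature `H = -∂²u/∂ν²` of `Σ`, computed from the smooth extension. -/
def meanCurv {n : ℕ} (Uext : EuclideanSpace ℝ (Fin n) → ℝ) (x : EuclideanSpace ℝ (Fin n)) : ℝ :=
  -(fderiv ℝ (fun y => (⟪gradient Uext y, nuVec Uext x⟫ : ℝ)) x (nuVec Uext x))

/-- One-sided directional derivative `∂_ν f(x)` in the outward normal direction,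
taken from within `{u > 0}` (i.e. from the side `t ≤ 0`). -/
def dNu {n : ℕ} (Uext f : EuclideanSpace ℝ (Fin n) → ℝ) (x : EuclideanSpace ℝ (Fin n)) : ℝ :=
  derivWithin (fun t : ℝ => f (x + t • nuVec Uext x)) (Set.Iic 0) 0

/-!
If `u` is a minimizer, compare it with `u - min(u, ε ζ v)`, where `ζ` is a radial cutoff. This loses
the thin strip `{0 < u ≤ ε ζ v}`, and the free boundary terms of the energy are read off from
integrals over that strip, divided by `ε`, rather than from surface integrals. As `ε → 0` the first
order terms cancel, and the second order terms give the stability inequality: the defects in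
`Δv ≥ γ v / |x|²` and `∂_ν v ≤ H v`, weighted with powers of `ζ`, plus `∫ γ ζ² v² / |x|²`, are at
most `∫ v² |∇ζ|²`.

Put `a = n / 2 - 1 - μ`. The power `|x|^(-a)` is critical for the resulting radial Hardy inequality:
for `ζ = |x|^(-a) φ(log |x| / L)` homogeneity turns `∫ v² (|∇ζ|² - a² ζ² / |x|²)` into a
one-dimensional integral of size `O(1 / L)`, because `ζ² v²` then has degree `2 - n`. Since
`a² ≤ γ`, the defects are `O(1 / L)` as well, but strictness at a single point bounds them below by
a constant which does not depend on `L`.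
-/

open Filter Topology

section Gradient

variable {F : Type*} [NormedAddCommGroup F] [InnerProductSpace ℝ F] [CompleteSpace F]
  {f g : F → ℝ} {x : F}

lemma norm_gradient_eq_norm_fderiv (f : F → ℝ) (x : F) : ‖gradient f x‖ = ‖fderiv ℝ f x‖ := by
  rw [gradient, LinearIsometryEquiv.norm_map]

lemma gradient_fun_mul (hf : DifferentiableAt ℝ f x) (hg : DifferentiableAt ℝ g x) :
    gradient (fun y => f y * g y) x = f x • gradient g x + g x • gradient f x := by
  simp [gradient, fderiv_fun_mul hf hg]

lemma gradient_fun_sub (hf : DifferentiableAt ℝ f x) (hg : DifferentiableAt ℝ g x) :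
    gradient (fun y => f y - g y) x = gradient f x - gradient g x := by
  simp [gradient, fderiv_fun_sub hf hg]

lemma gradient_fun_sub_const (f : F → ℝ) (c : ℝ) (x : F) :
    gradient (fun y => f y - c) x = gradient f x := by
  rw [gradient, fderiv_sub_const, gradient]

lemma gradient_fun_neg (f : F → ℝ) (x : F) : gradient (fun y => -f y) x = -gradient f x := by
  simp [gradient, fderiv_fun_neg]

lemma gradient_fun_const_mul (hf : DifferentiableAt ℝ f x) (c : ℝ) :
    gradient (fun y => c * f y) x = c • gradient f x := by
  simp [gradient, fderiv_const_mul hf]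

lemma gradient_eq_zero_of_isLocalMin (h : IsLocalMin f x) : gradient f x = 0 := by
  simp [gradient, h.fderiv_eq_zero]

lemma gradient_eq_of_eventually_le (hf : DifferentiableAt ℝ f x) (hg : DifferentiableAt ℝ g x)
    (hle : ∀ᶠ y in 𝓝 x, f y ≤ g y) (hx : f x = g x) : gradient f x = gradient g x := by
  have hmin : IsLocalMin (fun y => g y - f y) x := by
    filter_upwards [hle] with y hy
    simpa [hx] using hy
  have hzero := gradient_eq_zero_of_isLocalMin hmin
  rw [gradient_fun_sub hg hf, sub_eq_zero] at hzero
  exact hzero.symm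

lemma gradient_max_sub_const_zero (hf : Continuous f) (δ : ℝ) (x : F) :
    gradient (fun y => max (f y - δ) 0) x = {y | δ < f y}.indicator (gradient f) x := by
  by_cases hx : δ < f x
  · have hev : (fun y => max (f y - δ) 0) =ᶠ[𝓝 x] fun y => f y - δ := by
      filter_upwards [(isOpen_lt continuous_const hf).mem_nhds hx] with y (hy : δ < f y)
      exact max_eq_left (sub_nonneg.2 hy.le)
    rw [hev.gradient_eq, gradient_fun_sub_const, indicator_of_mem (by exact hx)]
  · rw [indicator_of_notMem (by exact hx)]
    refine gradient_eq_zero_of_isLocalMin (Eventually.of_forall fun y => ?_)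
    simp only [max_eq_right (sub_nonpos.2 (not_lt.1 hx)), le_max_right]

lemma norm_gradient_le_of_lipschitzWith {C : NNReal} (hf : LipschitzWith C f) (x : F) :
    ‖gradient f x‖ ≤ C :=
  (norm_gradient_eq_norm_fderiv f x).trans_le (norm_fderiv_le_of_lipschitz ℝ hf)

lemma measurable_gradient [MeasurableSpace F] [BorelSpace F] (f : F → ℝ) :
    Measurable (gradient f) :=
  (LinearIsometryEquiv.continuous _).measurable.comp (measurable_fderiv ℝ f)

lemma measurable_inner_gradient [MeasurableSpace F] [BorelSpace F] [SecondCountableTopology F]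
    (f g : F → ℝ) : Measurable fun x => ⟪gradient f x, gradient g x⟫ :=
  (measurable_gradient f).inner (measurable_gradient g)

lemma abs_inner_gradient_le {C : NNReal} {M : ℝ} (hf : LipschitzWith C f)
    (hg : ‖gradient g x‖ ≤ M) : |⟪gradient f x, gradient g x⟫| ≤ C * M :=
  (abs_real_inner_le_norm _ _).trans
    (mul_le_mul (norm_gradient_le_of_lipschitzWith hf x) hg (norm_nonneg _) C.2)

end Gradient

section BoundedIntegrable

variable {X : Type*} [MeasurableSpace X] {μ : Measure X}

lemma integrableOn_of_abs_le {A : Set X} (hA : MeasurableSet A) (hfin : μ A ≠ ⊤) {f : X → ℝ}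
    (hf : AEStronglyMeasurable f (μ.restrict A)) {C : ℝ} (hC : ∀ x ∈ A, |f x| ≤ C) :
    IntegrableOn f A μ := by
  have : IsFiniteMeasure (μ.restrict A) := isFiniteMeasure_restrict.2 hfin
  exact Integrable.of_bound hf C (ae_restrict_of_forall_mem hA hC)

lemma measure_inter_compact_ne_top [TopologicalSpace X] [IsFiniteMeasureOnCompacts μ] {D K : Set X}
    (hK : IsCompact K) : μ (D ∩ K) ≠ ⊤ :=
  measure_ne_top_of_subset inter_subset_right hK.measure_ne_top

end BoundedIntegrable

section Extension

variable {E F : Type*} [NormedAddCommGroup E] [NormedSpace ℝ E] [FiniteDimensional ℝ E]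
  [NormedAddCommGroup F] [NormedSpace ℝ F]

lemma exists_contDiff_hasCompactSupport_eventuallyEq {D T : Set E} (hD : IsOpen D)
    (hT : IsCompact T) (hTD : T ⊆ D) {k : ℕ} {g : E → F} (hg : ContDiffOn ℝ k g D) :
    ∃ g' : E → F, ContDiff ℝ k g' ∧ HasCompactSupport g' ∧ ∀ x ∈ T, g' =ᶠ[𝓝 x] g := by
  obtain ⟨V, hV, hTV, hVD, hVc⟩ := exists_open_between_and_isCompact_closure hT hD hTD
  obtain ⟨θ, hθ1, hθ0, -⟩ := exists_contMDiffMap_one_nhds_of_subset_interior (n := (⊤ : ℕ∞))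
    (modelWithCornersSelf ℝ E) hT.isClosed (hTV.trans_eq hV.interior_eq.symm)
  have hθsmooth : ContDiff ℝ k θ := θ.contMDiff.contDiff.of_le (by exact_mod_cast le_top)
  have hθsupp : tsupport θ ⊆ closure V :=
    closure_mono fun x hx => by_contra fun h => hx (hθ0 x h)
  have hθcpt : HasCompactSupport θ :=
    .of_support_subset_isCompact hVc ((subset_tsupport _).trans hθsupp)
  refine ⟨fun x => θ x • g x, ?_, hθcpt.smul_right, fun x hx => ?_⟩
  · refine (contMDiff_of_tsupport fun x hx => ContDiffAt.contMDiffAt ?_).contDiff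
    have hxD : x ∈ D := hVD (hθsupp (tsupport_smul_subset_left θ g hx))
    exact hθsmooth.contDiffAt.smul (hg.contDiffAt (hD.mem_nhds hxD))
  · filter_upwards [hθ1.filter_mono (nhds_le_nhdsSet hx)] with y hy
    simp [hy]

end Extension

section IntegrationByParts

variable {n : ℕ}

local notation "ℝⁿ" => EuclideanSpace ℝ (Fin n)

lemma inner_gradient_eq_sum (f g : ℝⁿ → ℝ) (x : ℝⁿ) :
    ⟪gradient f x, gradient g x⟫ = ∑ i : Fin n,
      fderiv ℝ f x (EuclideanSpace.single i 1) * fderiv ℝ g x (EuclideanSpace.single i 1) := by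
  rw [← (EuclideanSpace.basisFun (Fin n) ℝ).sum_inner_mul_inner (gradient f x) (gradient g x)]
  simp only [EuclideanSpace.basisFun_apply, inner_gradient_left, inner_gradient_right,
    conj_trivial]

lemma lap_congr_of_eventuallyEq {f g : ℝⁿ → ℝ} {x : ℝⁿ} (h : f =ᶠ[𝓝 x] g) :
    lap f x = lap g x := by
  refine Finset.sum_congr rfl fun i _ => ?_
  have hi : (fun y => fderiv ℝ f y (EuclideanSpace.single i 1)) =ᶠ[𝓝 x]
      fun y => fderiv ℝ g y (EuclideanSpace.single i 1) :=
    (h.fderiv (𝕜 := ℝ)).mono fun y hy => by simp only [hy]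
  rw [hi.fderiv_eq]

lemma lap_fun_neg (g : ℝⁿ → ℝ) (x : ℝⁿ) : lap (fun y => -g y) x = -lap g x := by
  simp [lap, fderiv_fun_neg, Finset.sum_neg_distrib]

lemma integral_fderiv_mul_eq_neg_integral_mul_fderiv {E : Type*} [NormedAddCommGroup E]
    [NormedSpace ℝ E] [FiniteDimensional ℝ E] [MeasurableSpace E] [BorelSpace E] {μ : Measure E}
    [μ.IsAddHaarMeasure] {f g : E → ℝ} {C : NNReal} (hf : LipschitzWith C f)
    (hg : ContDiff ℝ 1 g) (hgc : HasCompactSupport g) (v : E) :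
    ∫ x, fderiv ℝ f x v * g x ∂μ = -∫ x, f x * fderiv ℝ g x v ∂μ := by
  obtain ⟨C', hg'⟩ := ContDiff.lipschitzWith_of_hasCompactSupport hgc hg one_ne_zero
  have hf_ae : ∀ᵐ x ∂μ, lineDeriv ℝ f x v = fderiv ℝ f x v := by
    filter_upwards [hf.ae_differentiableAt (μ := μ)] with x hx using hx.lineDeriv_eq_fderiv
  calc ∫ x, fderiv ℝ f x v * g x ∂μ
      = ∫ x, lineDeriv ℝ f x v * g x ∂μ :=
        integral_congr_ae (hf_ae.mono fun x hx => by simp only [hx])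
    _ = ∫ x, lineDeriv ℝ g x (-v) * f x ∂μ := hf.integral_lineDeriv_mul_eq hg' hgc v
    _ = ∫ x, -(f x * fderiv ℝ g x v) ∂μ := by
        congr with x
        rw [(hg.differentiable one_ne_zero x).lineDeriv_eq_fderiv, map_neg]
        ring
    _ = -∫ x, f x * fderiv ℝ g x v ∂μ := integral_neg _

lemma integrable_mul_lap {f g : ℝⁿ → ℝ} (hf : Continuous f) (hfc : HasCompactSupport f)
    (hg : ContDiff ℝ 2 g) : Integrable fun x => f x * lap g x := by
  refine Continuous.integrable_of_hasCompactSupport (hf.mul ?_) hfc.mul_right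
  refine continuous_finsetSum _ fun i _ => ?_
  have hgi : ContDiff ℝ 1 fun y => fderiv ℝ g y (EuclideanSpace.single i 1) :=
    (hg.fderiv_right (m := 1) (by norm_num)).clm_apply contDiff_const
  exact (hgi.continuous_fderiv one_ne_zero).clm_apply continuous_const

lemma integral_inner_gradient_eq_neg_integral_mul_lap {f g : ℝⁿ → ℝ} {C : NNReal}
    (hf : LipschitzWith C f) (hfc : HasCompactSupport f) (hg : ContDiff ℝ 2 g)
    (hgc : HasCompactSupport g) :
    ∫ x, ⟪gradient f x, gradient g x⟫ = -∫ x, f x * lap g x := by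
  set e : Fin n → ℝⁿ := fun i => EuclideanSpace.single i 1
  have hgi (i) : ContDiff ℝ 1 fun y => fderiv ℝ g y (e i) :=
    (hg.fderiv_right (m := 1) (by norm_num)).clm_apply contDiff_const
  have hgic (i) : HasCompactSupport fun y => fderiv ℝ g y (e i) := hgc.fderiv_apply ℝ (e i)
  have hint_left (i) : Integrable fun x => fderiv ℝ f x (e i) * fderiv ℝ g x (e i) :=
    ((hgi i).continuous.integrable_of_hasCompactSupport (hgic i)).bdd_mul (c := C * ‖e i‖)
      (measurable_fderiv_apply_const ℝ f (e i)).aestronglyMeasurable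
      (Eventually.of_forall fun x =>
        ContinuousLinearMap.le_of_opNorm_le _ (norm_fderiv_le_of_lipschitz ℝ hf) _)
  have hint_right (i) : Integrable fun x => f x * fderiv ℝ (fun y => fderiv ℝ g y (e i)) x (e i) :=
    (hf.continuous.mul
      (((hgi i).continuous_fderiv one_ne_zero).clm_apply continuous_const)
      ).integrable_of_hasCompactSupport hfc.mul_right
  simp only [inner_gradient_eq_sum, lap, Finset.mul_sum]
  rw [integral_finsetSum _ fun i _ => hint_left i, integral_finsetSum _ fun i _ => hint_right i,
    ← Finset.sum_neg_distrib]
  exact Finset.sum_congr rfl fun i _ =>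
    integral_fderiv_mul_eq_neg_integral_mul_fderiv hf (hgi i) (hgic i) (e i)

lemma integral_inner_gradient_of_support_subset {D T : Set ℝⁿ} (hD : IsOpen D)
    (hT : IsCompact T) (hTD : T ⊆ D) {f g : ℝⁿ → ℝ} {C : NNReal} (hf : LipschitzWith C f)
    (hfT : Function.support f ⊆ T) (hg : ContDiffOn ℝ 2 g D) :
    Integrable (fun x => f x * lap g x) ∧
      ∫ x, ⟪gradient f x, gradient g x⟫ = -∫ x, f x * lap g x := by
  obtain ⟨g', hg', hgc', heq⟩ :=
    exists_contDiff_hasCompactSupport_eventuallyEq hD hT hTD (k := 2) hg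
  have hfc : HasCompactSupport f := .of_support_subset_isCompact hT hfT
  have hlap : (fun x => f x * lap g x) = fun x => f x * lap g' x := by
    ext x
    by_cases hx : x ∈ T
    · rw [lap_congr_of_eventuallyEq (heq x hx)]
    · rw [Function.notMem_support.1 fun h => hx (hfT h), zero_mul, zero_mul]
  have hinner : (fun x => ⟪gradient f x, gradient g x⟫) =
      fun x => ⟪gradient f x, gradient g' x⟫ := by
    ext x
    by_cases hx : x ∈ T
    · rw [(heq x hx).gradient_eq]
    · have hzero : f =ᶠ[𝓝 x] fun _ => 0 := by
        filter_upwards [hT.isClosed.isOpen_compl.mem_nhds hx] with y hy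
        exact Function.notMem_support.1 fun h => hy (hfT h)
      rw [hzero.gradient_eq, gradient_fun_const, inner_zero_left, inner_zero_left]
  rw [hlap, hinner]
  exact ⟨integrable_mul_lap hf.continuous hfc hg',
    integral_inner_gradient_eq_neg_integral_mul_lap hf hfc hg' hgc'⟩

section OpenCompact

variable {D K : Set (EuclideanSpace ℝ (Fin n))} {f g G : EuclideanSpace ℝ (Fin n) → ℝ}
  {C : NNReal} {M : ℝ}

lemma integrableOn_inner_gradient (hD : IsOpen D) (hK : IsCompact K) (hf : LipschitzWith C f)
    (hgM : ∀ x ∈ D ∩ K, ‖gradient g x‖ ≤ M) :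
    IntegrableOn (fun x => ⟪gradient f x, gradient g x⟫) (D ∩ K) :=
  integrableOn_of_abs_le (hD.measurableSet.inter hK.measurableSet)
    (measure_inter_compact_ne_top hK) (measurable_inner_gradient f g).aestronglyMeasurable
    fun x hx => abs_inner_gradient_le hf (hgM x hx)

lemma exists_abs_le_of_support_subset (hK : IsCompact K) (hf : Continuous f)
    (hfK : Function.support f ⊆ K) : ∃ B, ∀ x, |f x| ≤ B :=
  (HasCompactSupport.of_support_subset_isCompact hK hfK).exists_bound_of_continuous hf

lemma setIntegral_inner_gradient_add_mul_le_of_isCompact {T : Set ℝⁿ} (hD : IsOpen D)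
    (hK : IsCompact K) (hT : IsCompact T) (hTDK : T ⊆ D ∩ K) (hf : LipschitzWith C f)
    (hf0 : ∀ x, 0 ≤ f x) (hfT : Function.support f ⊆ T) (hg : ContDiffOn ℝ 2 g D)
    (hgM : ∀ x ∈ D ∩ K, ‖gradient g x‖ ≤ M)
    (hGm : AEStronglyMeasurable G (volume.restrict (D ∩ K)))
    (hGM : ∀ x ∈ D ∩ K, |G x| ≤ M) (hlap : ∀ x ∈ D ∩ K, G x ≤ lap g x) :
    ∫ x in D ∩ K, (⟪gradient f x, gradient g x⟫ + f x * G x) ≤ 0 := by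
  have hDK : MeasurableSet (D ∩ K) := hD.measurableSet.inter hK.measurableSet
  obtain ⟨B, hB⟩ := exists_abs_le_of_support_subset hT hf.continuous hfT
  obtain ⟨hint_lap, hparts⟩ := integral_inner_gradient_of_support_subset hD hT
    (hTDK.trans inter_subset_left) hf hfT hg
  have hint_fG : IntegrableOn (fun x => f x * G x) (D ∩ K) :=
    integrableOn_of_abs_le hDK (measure_inter_compact_ne_top hK)
      (hf.continuous.aestronglyMeasurable.mul hGm) (C := B * M) fun x hx => by
        rw [abs_mul]
        exact mul_le_mul (hB x) (hGM x hx) (abs_nonneg _) ((abs_nonneg _).trans (hB x))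
  have hvanish (x) (hx : x ∉ D ∩ K) : f x = 0 :=
    Function.notMem_support.1 fun h => hx (hTDK (hfT h))
  have hgrad_vanish (x) (hx : x ∉ D ∩ K) : gradient f x = 0 :=
    gradient_eq_zero_of_isLocalMin
      (Eventually.of_forall fun y => (hvanish x hx).trans_le (hf0 y))
  calc ∫ x in D ∩ K, (⟪gradient f x, gradient g x⟫ + f x * G x)
      = (∫ x in D ∩ K, ⟪gradient f x, gradient g x⟫) + ∫ x in D ∩ K, f x * G x :=
        integral_add (integrableOn_inner_gradient hD hK hf hgM) hint_fG
    _ ≤ (∫ x in D ∩ K, ⟪gradient f x, gradient g x⟫) + ∫ x in D ∩ K, f x * lap g x := by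
        refine add_le_add le_rfl
          (setIntegral_mono_on hint_fG hint_lap.integrableOn hDK fun x hx => ?_)
        exact mul_le_mul_of_nonneg_left (hlap x hx) (hf0 x)
    _ = (∫ x, ⟪gradient f x, gradient g x⟫) + ∫ x, f x * lap g x := by
        rw [setIntegral_eq_integral_of_forall_compl_eq_zero fun x hx => by
            rw [hgrad_vanish x hx, inner_zero_left],
          setIntegral_eq_integral_of_forall_compl_eq_zero fun x hx => by
            rw [hvanish x hx, zero_mul]]
    _ = 0 := by rw [hparts, neg_add_cancel]

lemma lipschitzWith_max_sub_const_zero (hf : LipschitzWith C f) (δ : ℝ) :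
    LipschitzWith C fun x => max (f x - δ) 0 :=
  LipschitzWith.max_const (fun x y => by simpa using hf x y) 0

lemma tendsto_max_sub_const_zero {a : ℝ} (ha : 0 ≤ a) :
    Tendsto (fun δ : ℝ => max (a - δ) 0) (𝓝[>] 0) (𝓝 a) := by
  have hcont : Continuous fun δ : ℝ => max (a - δ) 0 := by fun_prop
  simpa [ha] using (hcont.tendsto 0).mono_left nhdsWithin_le_nhds

lemma tendsto_inner_gradient_max_sub_const_zero (hf : Continuous f) (hf0 : ∀ x, 0 ≤ f x) (x : ℝⁿ) :
    Tendsto (fun δ : ℝ => ⟪gradient (fun y => max (f y - δ) 0) x, gradient g x⟫) (𝓝[>] 0)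
      (𝓝 ⟪gradient f x, gradient g x⟫) := by
  refine tendsto_const_nhds.congr' ?_
  simp only [gradient_max_sub_const_zero hf]
  rcases (hf0 x).eq_or_lt with hzero | hpos
  · have hgrad : gradient f x = 0 :=
      gradient_eq_zero_of_isLocalMin (Eventually.of_forall fun y => hzero.symm.trans_le (hf0 y))
    exact Eventually.of_forall fun δ => by simp [indicator_apply, hgrad]
  · filter_upwards [nhdsWithin_le_nhds (gt_mem_nhds hpos)] with δ hδ
    rw [indicator_of_mem (by exact hδ)]

theorem setIntegral_inner_gradient_add_mul_le (hD : IsOpen D) (hK : IsCompact K)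
    (hf : LipschitzWith C f) (hf0 : ∀ x, 0 ≤ f x) (hfDK : Function.support f ⊆ D ∩ K)
    (hg : ContDiffOn ℝ 2 g D) (hgM : ∀ x ∈ D ∩ K, ‖gradient g x‖ ≤ M)
    (hGm : AEStronglyMeasurable G (volume.restrict (D ∩ K)))
    (hGM : ∀ x ∈ D ∩ K, |G x| ≤ M) (hlap : ∀ x ∈ D ∩ K, G x ≤ lap g x) :
    ∫ x in D ∩ K, (⟪gradient f x, gradient g x⟫ + f x * G x) ≤ 0 := by
  have : IsFiniteMeasure (volume.restrict (D ∩ K)) :=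
    isFiniteMeasure_restrict.2 (measure_inter_compact_ne_top hK)
  have hDK : MeasurableSet (D ∩ K) := hD.measurableSet.inter hK.measurableSet
  obtain ⟨B, hB⟩ :=
    exists_abs_le_of_support_subset hK hf.continuous (hfDK.trans inter_subset_right)
  have hLip (δ) := lipschitzWith_max_sub_const_zero hf δ
  have htrunc {δ : ℝ} (hδ : 0 < δ) : ∫ x in D ∩ K,
      (⟪gradient (fun y => max (f y - δ) 0) x, gradient g x⟫ + max (f x - δ) 0 * G x) ≤ 0 := by
    have hTDK : {x | δ ≤ f x} ⊆ D ∩ K := fun x hx => hfDK (hδ.trans_le hx).ne'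
    refine setIntegral_inner_gradient_add_mul_le_of_isCompact hD hK
      (hK.of_isClosed_subset (isClosed_le continuous_const hf.continuous)
        (hTDK.trans inter_subset_right)) hTDK (hLip δ) (fun x => le_max_right _ _)
      (fun x hx => ?_) hg hgM hGm hGM hlap
    by_contra hlt
    exact hx (max_eq_right (sub_nonpos.2 (not_le.1 hlt).le))
  have hlim : Tendsto (fun δ : ℝ => ∫ x in D ∩ K,
        (⟪gradient (fun y => max (f y - δ) 0) x, gradient g x⟫ + max (f x - δ) 0 * G x))
      (𝓝[>] 0) (𝓝 (∫ x in D ∩ K, (⟪gradient f x, gradient g x⟫ + f x * G x))) := by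
    refine tendsto_integral_filter_of_dominated_convergence (fun _ => C * M + B * M)
      (Eventually.of_forall fun δ => (measurable_inner_gradient _ g).aestronglyMeasurable.add
        ((hLip δ).continuous.aestronglyMeasurable.mul hGm)) ?_ (integrable_const _)
      (ae_of_all _ fun x => (tendsto_inner_gradient_max_sub_const_zero hf.continuous hf0 x).add
        ((tendsto_max_sub_const_zero (hf0 x)).mul_const _))
    filter_upwards [self_mem_nhdsWithin] with δ (hδ : 0 < δ)
    refine ae_restrict_of_forall_mem hDK fun x hx => (abs_add_le _ _).trans ?_
    have hfB : |max (f x - δ) 0| ≤ B := by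
      rw [abs_of_nonneg (le_max_right _ _)]
      exact max_le (by linarith [le_abs_self (f x), hB x]) ((abs_nonneg _).trans (hB x))
    rw [abs_mul]
    exact add_le_add (abs_inner_gradient_le (hLip δ) (hgM x hx))
      (mul_le_mul hfB (hGM x hx) (abs_nonneg _) ((abs_nonneg _).trans hfB))
  exact le_of_tendsto hlim (by filter_upwards [self_mem_nhdsWithin] with δ hδ using htrunc hδ)

lemma setIntegral_inner_gradient_eq_zero_of_nonneg (hD : IsOpen D) (hK : IsCompact K)
    (hf : LipschitzWith C f) (hf0 : ∀ x, 0 ≤ f x) (hfDK : Function.support f ⊆ D ∩ K)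
    (hg : ContDiffOn ℝ 2 g D) (hgM : ∀ x ∈ D ∩ K, ‖gradient g x‖ ≤ M)
    (hlap : ∀ x ∈ D, lap g x = 0) : ∫ x in D ∩ K, ⟪gradient f x, gradient g x⟫ = 0 := by
  have hM (x) (hx : x ∈ D ∩ K) : |(0 : ℝ)| ≤ M := by
    simpa using (norm_nonneg _).trans (hgM x hx)
  have hle := setIntegral_inner_gradient_add_mul_le (G := fun _ => 0) hD hK hf hf0 hfDK hg hgM
    aestronglyMeasurable_const hM fun x hx => (hlap x hx.1).ge
  have hge := setIntegral_inner_gradient_add_mul_le (G := fun _ => 0) hD hK hf hf0 hfDK hg.neg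
    (fun x hx => by rw [gradient_fun_neg, norm_neg]; exact hgM x hx) aestronglyMeasurable_const hM
    fun x hx => by rw [lap_fun_neg, hlap x hx.1, neg_zero]
  simp only [gradient_fun_neg, inner_neg_right, mul_zero, add_zero, integral_neg] at hle hge
  linarith

theorem setIntegral_inner_gradient_eq_zero (hD : IsOpen D) (hK : IsCompact K)
    (hf : LipschitzWith C f) (hfDK : Function.support f ⊆ D ∩ K) (hg : ContDiffOn ℝ 2 g D)
    (hgM : ∀ x ∈ D ∩ K, ‖gradient g x‖ ≤ M) (hlap : ∀ x ∈ D, lap g x = 0) :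
    ∫ x in D ∩ K, ⟪gradient f x, gradient g x⟫ = 0 := by
  have hpos : LipschitzWith C fun x => max (f x) 0 := hf.max_const 0
  have hneg : LipschitzWith C fun x => max (-f x) 0 := hf.neg.max_const 0
  have hpos_zero := setIntegral_inner_gradient_eq_zero_of_nonneg hD hK hpos
    (fun x => le_max_right _ _) (fun x hx => hfDK fun h => hx (by simp [h])) hg hgM hlap
  have hneg_zero := setIntegral_inner_gradient_eq_zero_of_nonneg hD hK hneg
    (fun x => le_max_right _ _) (fun x hx => hfDK fun h => hx (by simp [h])) hg hgM hlap
  have hsplit : (fun x => max (f x) 0 - max (-f x) 0) = f :=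
    funext fun x => max_zero_sub_eq_self (f x)
  calc ∫ x in D ∩ K, ⟪gradient f x, gradient g x⟫
      = ∫ x in D ∩ K, (⟪gradient (fun y => max (f y) 0) x, gradient g x⟫ -
          ⟪gradient (fun y => max (-f y) 0) x, gradient g x⟫) := by
        refine integral_congr_ae (ae_restrict_of_ae ?_)
        filter_upwards [hpos.ae_differentiableAt (μ := volume),
          hneg.ae_differentiableAt (μ := volume)] with x hxpos hxneg
        rw [← inner_sub_left, ← gradient_fun_sub hxpos hxneg, hsplit]
    _ = 0 := by
        rw [integral_sub (integrableOn_inner_gradient hD hK hpos hgM)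
          (integrableOn_inner_gradient hD hK hneg hgM), hpos_zero, hneg_zero, sub_zero]

end OpenCompact

end IntegrationByParts

section SegmentLipschitz

variable {E : Type*} [NormedAddCommGroup E] [NormedSpace ℝ E] {D : Set E} {F G : E → ℝ}

/-- `F` is bounded on `D` and Lipschitz with respect to the length of segments contained in `D`.
Unlike Lipschitz continuity on `D`, this holds for every bounded `F` with bounded gradient on an
open set `D`, convex or not. -/
def BddSegmentLipschitzOn (F : E → ℝ) (D : Set E) : Prop :=
  ∃ M : ℝ, 0 ≤ M ∧ (∀ x ∈ D, |F x| ≤ M) ∧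
    ∀ x y, segment ℝ x y ⊆ D → |F x - F y| ≤ M * ‖x - y‖

namespace BddSegmentLipschitzOn

lemma of_norm_fderiv_le {M : ℝ} (hM : 0 ≤ M) (hd : ∀ x ∈ D, DifferentiableAt ℝ F x)
    (hF : ∀ x ∈ D, |F x| ≤ M) (hF' : ∀ x ∈ D, ‖fderiv ℝ F x‖ ≤ M) :
    BddSegmentLipschitzOn F D := by
  refine ⟨M, hM, hF, fun x y hxy => ?_⟩
  simpa using (convex_segment x y).norm_image_sub_le_of_norm_fderiv_le (𝕜 := ℝ)
    (fun z hz => hd z (hxy hz)) (fun z hz => hF' z (hxy hz))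
    (right_mem_segment ℝ x y) (left_mem_segment ℝ x y)

lemma const (c : ℝ) : BddSegmentLipschitzOn (fun _ => c) D :=
  ⟨|c|, abs_nonneg _, fun _ _ => le_rfl, fun x y _ => by
    simp only [sub_self, abs_zero]
    positivity⟩

lemma congr (hF : BddSegmentLipschitzOn F D) (hFG : EqOn F G D) : BddSegmentLipschitzOn G D := by
  obtain ⟨M, hM, hFM, hFl⟩ := hF
  refine ⟨M, hM, fun x hx => hFG hx ▸ hFM x hx, fun x y hxy => ?_⟩
  rw [← hFG (hxy (left_mem_segment ℝ x y)), ← hFG (hxy (right_mem_segment ℝ x y))]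
  exact hFl x y hxy

lemma sub (hF : BddSegmentLipschitzOn F D) (hG : BddSegmentLipschitzOn G D) :
    BddSegmentLipschitzOn (fun x => F x - G x) D := by
  obtain ⟨M, hM, hFM, hFl⟩ := hF
  obtain ⟨N, hN, hGN, hGl⟩ := hG
  refine ⟨M + N, by positivity,
    fun x hx => (abs_sub _ _).trans (add_le_add (hFM x hx) (hGN x hx)), fun x y hxy => ?_⟩
  calc |F x - G x - (F y - G y)| = |(F x - F y) - (G x - G y)| := by ring_nf
    _ ≤ |F x - F y| + |G x - G y| := abs_sub _ _
    _ ≤ M * ‖x - y‖ + N * ‖x - y‖ := add_le_add (hFl x y hxy) (hGl x y hxy)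
    _ = (M + N) * ‖x - y‖ := by ring

lemma mul (hF : BddSegmentLipschitzOn F D) (hG : BddSegmentLipschitzOn G D) :
    BddSegmentLipschitzOn (fun x => F x * G x) D := by
  obtain ⟨M, hM, hFM, hFl⟩ := hF
  obtain ⟨N, hN, hGN, hGl⟩ := hG
  refine ⟨2 * (M * N), by positivity, fun x hx => ?_, fun x y hxy => ?_⟩
  · rw [abs_mul]
    have := mul_le_mul (hFM x hx) (hGN x hx) (abs_nonneg _) hM
    linarith [mul_nonneg hM hN]
  · have hx := hFM x (hxy (left_mem_segment ℝ x y))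
    have hy := hGN y (hxy (right_mem_segment ℝ x y))
    calc |F x * G x - F y * G y| = |F x * (G x - G y) + G y * (F x - F y)| := by ring_nf
      _ ≤ |F x| * |G x - G y| + |G y| * |F x - F y| := by
        simpa only [abs_mul] using abs_add_le (F x * (G x - G y)) (G y * (F x - F y))
      _ ≤ M * (N * ‖x - y‖) + N * (M * ‖x - y‖) := by
        gcongr
        exacts [hGl x y hxy, hFl x y hxy]
      _ = 2 * (M * N) * ‖x - y‖ := by ring

lemma min_of_lipschitzWith {u : E → ℝ} {C : NNReal} (hu : LipschitzWith C u) (hu0 : ∀ x, 0 ≤ u x)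
    (hF : BddSegmentLipschitzOn F D) (hF0 : ∀ x ∈ D, 0 ≤ F x) :
    BddSegmentLipschitzOn (fun x => min (u x) (F x)) D := by
  obtain ⟨M, hM, hFM, hFl⟩ := hF
  refine ⟨max C M, le_max_of_le_right hM, fun x hx => ?_, fun x y hxy => ?_⟩
  · rw [abs_of_nonneg (le_min (hu0 x) (hF0 x hx))]
    exact (min_le_right _ _).trans ((le_abs_self _).trans ((hFM x hx).trans (le_max_right _ _)))
  · have hul : |u x - u y| ≤ C * ‖x - y‖ := by
      simpa only [Real.dist_eq, dist_eq_norm, Real.norm_eq_abs] using hu.dist_le_mul x y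
    refine (abs_min_sub_min_le_max _ _ _ _).trans ?_
    rw [max_mul_of_nonneg _ _ (norm_nonneg _)]
    exact max_le_max hul (hFl x y hxy)

/-- A segment joining two points and leaving `D` meets a zero of `u`, so that `u`, and hence `F`, is
controlled at both ends by the length of the segment. -/
lemma exists_lipschitzWith_indicator {u : E → ℝ} {C : NNReal} {c : ℝ}
    (hF : BddSegmentLipschitzOn F D) (hu : LipschitzWith C u) (huD : ∀ x ∉ D, u x = 0)
    (hc : 0 ≤ c) (hFu : ∀ x ∈ D, |F x| ≤ c * u x) :
    ∃ C' : NNReal, LipschitzWith C' (D.indicator F) := by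
  obtain ⟨M, hM, -, hFl⟩ := hF
  refine ⟨⟨M + 2 * c * C, by positivity⟩, LipschitzWith.of_dist_le_mul fun x y => ?_⟩
  rw [Real.dist_eq, dist_eq_norm]
  change _ ≤ (M + 2 * c * C) * ‖x - y‖
  by_cases hxy : segment ℝ x y ⊆ D
  · rw [indicator_of_mem (hxy (left_mem_segment ℝ x y)),
      indicator_of_mem (hxy (right_mem_segment ℝ x y))]
    refine (hFl x y hxy).trans ?_
    gcongr
    exact le_add_of_nonneg_right (by positivity)
  · obtain ⟨z, hz, hzD⟩ := not_subset.1 hxy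
    have hend (w) (hw : ‖w - z‖ ≤ ‖x - y‖) : |D.indicator F w| ≤ c * (C * ‖x - y‖) := by
      by_cases hwD : w ∈ D
      · have hwz : |u w - u z| ≤ C * ‖w - z‖ := by
          simpa only [Real.dist_eq, dist_eq_norm, Real.norm_eq_abs] using hu.dist_le_mul w z
        rw [huD z hzD, sub_zero] at hwz
        rw [indicator_of_mem hwD]
        refine (hFu w hwD).trans (mul_le_mul_of_nonneg_left ?_ hc)
        exact (le_abs_self _).trans (hwz.trans (mul_le_mul_of_nonneg_left hw C.2))
      · rw [indicator_of_notMem hwD, abs_zero]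
        positivity
    have hx := hend x (by
      rw [norm_sub_rev x z, norm_sub_rev x y]
      exact norm_sub_le_of_mem_segment hz)
    have hy := hend y (by
      rw [norm_sub_rev y z]
      exact norm_sub_le_of_mem_segment (segment_symm ℝ x y ▸ hz))
    calc |D.indicator F x - D.indicator F y| ≤ |D.indicator F x| + |D.indicator F y| := abs_sub _ _
      _ ≤ c * (C * ‖x - y‖) + c * (C * ‖x - y‖) := add_le_add hx hy
      _ ≤ (M + 2 * c * C) * ‖x - y‖ := by nlinarith [mul_nonneg hM (norm_nonneg (x - y))]

end BddSegmentLipschitzOn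

end SegmentLipschitz

/-- The positivity phase `{u > 0}`. -/
abbrev positivitySet {X : Type*} (u : X → ℝ) : Set X := {x | 0 < u x}

/-- The truncation `min(u, ψ)` on `{u > 0}`, extended by zero. Subtracting it from `u` gives the
competitor `max(u - ψ, 0)` for the Alt–Caffarelli energy. -/
def decrement {X : Type*} (u ψ : X → ℝ) : X → ℝ :=
  (positivitySet u).indicator fun x => min (u x) (ψ x)

/-- The part of `{u > 0}` on which `u - decrement u ψ` vanishes. -/
def lostStrip {X : Type*} (u ψ : X → ℝ) : Set X := {x | 0 < u x ∧ u x ≤ ψ x}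

section Decrement

section Basic

variable {X : Type*} {u ψ : X → ℝ} {x : X}

lemma decrement_of_pos (hx : 0 < u x) : decrement u ψ x = min (u x) (ψ x) :=
  indicator_of_mem (s := positivitySet u) hx _

lemma decrement_of_not_pos (hx : ¬0 < u x) : decrement u ψ x = 0 :=
  indicator_of_notMem (s := positivitySet u) hx _

lemma decrement_le_self (hu0 : ∀ x, 0 ≤ u x) (x : X) : decrement u ψ x ≤ u x := by
  by_cases hx : 0 < u x
  · exact (decrement_of_pos hx).trans_le (min_le_left _ _)
  · exact (decrement_of_not_pos hx).trans_le (hu0 x)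

lemma decrement_nonneg (hψ0 : ∀ x ∈ positivitySet u, 0 ≤ ψ x) (x : X) :
    0 ≤ decrement u ψ x :=
  indicator_nonneg (fun x hx => le_min (le_of_lt hx) (hψ0 x hx)) x

lemma support_decrement_subset {K : Set X} (hψK : ∀ x ∉ K, ψ x = 0) :
    Function.support (decrement u ψ) ⊆ positivitySet u ∩ K := by
  refine fun x hx => ⟨by_contra fun h => hx (decrement_of_not_pos h), by_contra fun h => hx ?_⟩
  by_cases hux : 0 < u x
  · rw [decrement_of_pos hux, hψK x h, min_eq_right hux.le]
  · exact decrement_of_not_pos hux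

lemma lostStrip_subset {K : Set X} (hψK : ∀ x ∉ K, ψ x = 0) :
    lostStrip u ψ ⊆ positivitySet u ∩ K :=
  fun x hx => ⟨hx.1, by_contra fun h => (hx.1.trans_le hx.2).ne' (hψK x h)⟩

lemma indicator_one_positivitySet_sub_decrement (x : X) :
    (positivitySet fun y => u y - decrement u ψ y).indicator (fun _ => (1 : ℝ)) x =
      (positivitySet u).indicator (fun _ => 1) x - (lostStrip u ψ).indicator (fun _ => 1) x := by
  by_cases hux : 0 < u x
  · by_cases hS : u x ≤ ψ x
    · simp [indicator, lostStrip, decrement_of_pos hux, hux, hS]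
    · simp [indicator, lostStrip, decrement_of_pos hux, hux, hS, min_eq_right (not_le.1 hS).le,
        not_le.1 hS]
  · simp [indicator, lostStrip, decrement_of_not_pos hux, hux]

lemma measurableSet_lostStrip [TopologicalSpace X] [MeasurableSpace X] [BorelSpace X]
    (hu : Continuous u) (hψ : ContinuousOn ψ (positivitySet u)) :
    MeasurableSet (lostStrip u ψ) := by
  have hD : IsOpen (positivitySet u) := isOpen_lt continuous_const hu
  have hopen : IsOpen (positivitySet u ∩ (fun x => ψ x - u x) ⁻¹' Iio 0) :=
    (hψ.sub hu.continuousOn).isOpen_inter_preimage hD isOpen_Iio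
  have heq : lostStrip u ψ =
      positivitySet u \ (positivitySet u ∩ (fun x => ψ x - u x) ⁻¹' Iio 0) := by
    ext x
    simp only [lostStrip, mem_ofPred_eq, sdiff_self_inter, Set.mem_sdiff, mem_preimage, mem_Iio,
      sub_neg, not_lt]
  exact heq ▸ hD.measurableSet.diff hopen.measurableSet

lemma eventually_decrement_eq [TopologicalSpace X] (hu : Continuous u) (hx : 0 < u x) :
    ∀ᶠ y in 𝓝 x, decrement u ψ y = min (u y) (ψ y) := by
  filter_upwards [(isOpen_lt continuous_const hu).mem_nhds hx] with y hy using decrement_of_pos hy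

end Basic

section Lipschitz

variable {E : Type*} [NormedAddCommGroup E] [NormedSpace ℝ E] {u ψ F : E → ℝ} {C : NNReal}

lemma bddSegmentLipschitzOn_decrement (hu : LipschitzWith C u) (hu0 : ∀ x, 0 ≤ u x)
    (hψ : BddSegmentLipschitzOn ψ (positivitySet u)) (hψ0 : ∀ x ∈ positivitySet u, 0 ≤ ψ x) :
    BddSegmentLipschitzOn (decrement u ψ) (positivitySet u) :=
  (hψ.min_of_lipschitzWith hu hu0 hψ0).congr fun _ hx => (decrement_of_pos hx).symm

lemma exists_lipschitzWith_mul_decrement (hu : LipschitzWith C u) (hu0 : ∀ x, 0 ≤ u x)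
    (hψ : BddSegmentLipschitzOn ψ (positivitySet u)) (hψ0 : ∀ x ∈ positivitySet u, 0 ≤ ψ x)
    (hF : BddSegmentLipschitzOn F (positivitySet u)) :
    ∃ C' : NNReal, LipschitzWith C' fun x => F x * decrement u ψ x := by
  obtain ⟨M, hM, hFM, -⟩ := id hF
  obtain ⟨C', hC'⟩ := (hF.mul
    (bddSegmentLipschitzOn_decrement hu hu0 hψ hψ0)).exists_lipschitzWith_indicator hu
    (fun x hx => (not_lt.1 hx).antisymm (hu0 x)) hM fun x hx => by
      rw [abs_mul, abs_of_nonneg (decrement_nonneg hψ0 x)]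
      exact mul_le_mul (hFM x hx) (decrement_le_self hu0 x) (decrement_nonneg hψ0 x) hM
  have hind : ((positivitySet u).indicator fun x => F x * decrement u ψ x) =
      fun x => F x * decrement u ψ x :=
    indicator_eq_self.2 fun x hx => by_contra fun h =>
      hx (mul_eq_zero_of_right _ (decrement_of_not_pos h))
  exact ⟨C', hind ▸ hC'⟩

lemma exists_lipschitzWith_decrement (hu : LipschitzWith C u) (hu0 : ∀ x, 0 ≤ u x)
    (hψ : BddSegmentLipschitzOn ψ (positivitySet u)) (hψ0 : ∀ x ∈ positivitySet u, 0 ≤ ψ x) :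
    ∃ C' : NNReal, LipschitzWith C' (decrement u ψ) := by
  simpa only [one_mul] using exists_lipschitzWith_mul_decrement hu hu0 hψ hψ0 (.const 1)

end Lipschitz

section Gradient

variable {E : Type*} [NormedAddCommGroup E] [InnerProductSpace ℝ E] [CompleteSpace E]
  {u ψ : E → ℝ} {x : E}

lemma gradient_decrement_of_le (hu : Continuous u) (hx : 0 < u x)
    (hm : DifferentiableAt ℝ (decrement u ψ) x) (hu' : DifferentiableAt ℝ u x)
    (hle : u x ≤ ψ x) : gradient (decrement u ψ) x = gradient u x := by
  refine gradient_eq_of_eventually_le hm hu' ?_ (by rw [decrement_of_pos hx, min_eq_left hle])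
  filter_upwards [eventually_decrement_eq hu hx] with y hy using hy.trans_le (min_le_left _ _)

lemma gradient_decrement_of_ge (hu : Continuous u) (hx : 0 < u x)
    (hm : DifferentiableAt ℝ (decrement u ψ) x) (hψ : DifferentiableAt ℝ ψ x)
    (hge : ψ x ≤ u x) : gradient (decrement u ψ) x = gradient ψ x := by
  refine gradient_eq_of_eventually_le hm hψ ?_ (by rw [decrement_of_pos hx, min_eq_right hge])
  filter_upwards [eventually_decrement_eq hu hx] with y hy using hy.trans_le (min_le_right _ _)

lemma gradient_decrement_of_not_pos (hψ0 : ∀ x ∈ positivitySet u, 0 ≤ ψ x)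
    (hx : ¬0 < u x) : gradient (decrement u ψ) x = 0 :=
  gradient_eq_zero_of_isLocalMin <| Eventually.of_forall fun y => by
    simpa only [decrement_of_not_pos hx] using decrement_nonneg hψ0 y

end Gradient

end Decrement

section StripEstimate

lemma abs_strip_remainder_le {M ε U a p P B F h ζ G : ℝ} (hM : 1 ≤ M) (hε : 0 < ε) (hU0 : 0 ≤ U)
    (hUa : U ≤ ε * a) (ha : a ≤ M ^ 2) (hζ0 : 0 ≤ ζ) (hζ : ζ ≤ M) (hh : |h| ≤ M) (hG : |G| ≤ M)
    (hB : |B| ≤ M ^ 2) (hF : |F| ≤ M ^ 2) (hP : |P| ≤ 2 * M ^ 3) (hp : |p - 1| ≤ 3 * M * U) :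
    |ε * (U * (B + ζ * G)) + h * (p - 1) * (ε * a - 2 * U) + h * U * (ε * P) +
      U * (ε * a - U) * F| ≤ 8 * M ^ 6 * ε ^ 2 := by
  have hM0 : 0 ≤ M := zero_le_one.trans hM
  have hεa : ε * a ≤ ε * M ^ 2 := mul_le_mul_of_nonneg_left ha hε.le
  have hUM : U ≤ ε * M ^ 2 := hUa.trans hεa
  have hsource : |ε * (U * (B + ζ * G))| ≤ 2 * M ^ 6 * ε ^ 2 := by
    have hBG : |B + ζ * G| ≤ M ^ 2 + M * M := by
      refine (abs_add_le _ _).trans (add_le_add hB ?_)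
      rw [abs_mul, abs_of_nonneg hζ0]
      exact mul_le_mul hζ hG (abs_nonneg _) hM0
    rw [abs_mul, abs_mul, abs_of_nonneg hU0, abs_of_pos hε]
    calc ε * (U * |B + ζ * G|) ≤ ε * (ε * M ^ 2 * (M ^ 2 + M * M)) := by gcongr
      _ = 2 * M ^ 4 * ε ^ 2 := by ring
      _ ≤ 2 * M ^ 6 * ε ^ 2 := by gcongr; norm_num
  have hspeed : |h * (p - 1) * (ε * a - 2 * U)| ≤ 3 * M ^ 6 * ε ^ 2 := by
    have hdiff : |ε * a - 2 * U| ≤ ε * M ^ 2 := abs_le.2 ⟨by linarith, by linarith⟩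
    rw [abs_mul, abs_mul]
    calc |h| * |p - 1| * |ε * a - 2 * U| ≤ M * (3 * M * (ε * M ^ 2)) * (ε * M ^ 2) := by
          gcongr
          exact hp.trans (by gcongr)
      _ = 3 * M ^ 6 * ε ^ 2 := by ring
  have htangential : |h * U * (ε * P)| ≤ 2 * M ^ 6 * ε ^ 2 := by
    rw [abs_mul, abs_mul, abs_mul, abs_of_nonneg hU0, abs_of_pos hε]
    calc |h| * U * (ε * |P|) ≤ M * (ε * M ^ 2) * (ε * (2 * M ^ 3)) := by gcongr
      _ = 2 * M ^ 6 * ε ^ 2 := by ring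
  have hcurvature : |U * (ε * a - U) * F| ≤ M ^ 6 * ε ^ 2 := by
    rw [abs_mul, abs_mul, abs_of_nonneg hU0, abs_of_nonneg (sub_nonneg.2 hUa)]
    calc U * (ε * a - U) * |F| ≤ (ε * M ^ 2) * (ε * M ^ 2) * M ^ 2 := by
          gcongr
          linarith
      _ = M ^ 6 * ε ^ 2 := by ring
  refine (abs_add_le _ _).trans ((add_le_add_left (abs_add_three _ _ _) _).trans ?_)
  linarith

lemma strip_main_terms_le {M ε η U p A h ζ v G b z : ℝ} (hM : 1 ≤ M) (hε : 0 < ε) (hη : 0 < η)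
    (hU : U ≤ ε * M ^ 2) (hζ0 : 0 ≤ ζ) (hζ : ζ ≤ M) (hv0 : 0 ≤ v) (hv : v ≤ M)
    (hG : |G| ≤ M) (hp : |p - 1 + 2 * U * h| ≤ η * U) (hA : b - h * v - η ≤ A) :
    p - 1 + 2 * U * h - ε * ζ * (A + h * v) ≤
      ε ^ 2 * (v ^ 2 * z ^ 2 - G * ζ ^ 2 * v) - ε * (ζ * b) +
        M ^ 6 * (2 * (η * ε) + ε ^ 2) := by
  have hspeed : p - 1 + 2 * U * h ≤ M ^ 6 * (η * ε) := by
    calc p - 1 + 2 * U * h ≤ η * U := (le_abs_self _).trans hp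
      _ ≤ η * (ε * M ^ 2) := by gcongr
      _ = M ^ 2 * (η * ε) := by ring
      _ ≤ M ^ 6 * (η * ε) := by gcongr; norm_num
  have hflux : -(ε * ζ * (A + h * v)) ≤ -(ε * (ζ * b)) + M ^ 6 * (η * ε) := by
    have hAb : ε * ζ * (b - η) ≤ ε * ζ * (A + h * v) := by
      gcongr
      linarith
    have hζM : ζ * (η * ε) ≤ M ^ 6 * (η * ε) := by
      gcongr
      exact hζ.trans (le_self_pow₀ hM (by norm_num))
    linarith
  have hsource : ε ^ 2 * (G * ζ ^ 2 * v) ≤ M ^ 6 * ε ^ 2 := by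
    calc ε ^ 2 * (G * ζ ^ 2 * v) ≤ ε ^ 2 * (M * M ^ 2 * M) := by
          gcongr
          exact (le_abs_self G).trans hG
      _ = M ^ 4 * ε ^ 2 := by ring
      _ ≤ M ^ 6 * ε ^ 2 := by gcongr; norm_num
  have hgrad : 0 ≤ ε ^ 2 * (v ^ 2 * z ^ 2) := by positivity
  linarith

variable {E : Type*} [NormedAddCommGroup E] [InnerProductSpace ℝ E] {gu gv gζ gh : E}
  {M ε η U h ζ v G b : ℝ}

lemma abs_inner_le_of_norm_le {x y : E} {A B : ℝ} (hx : ‖x‖ ≤ A) (hy : ‖y‖ ≤ B) :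
    |⟪x, y⟫| ≤ A * B :=
  (abs_real_inner_le_norm x y).trans
    (mul_le_mul hx hy (norm_nonneg _) ((norm_nonneg x).trans hx))

lemma norm_smul_add_smul_le_of_le (hM : 0 ≤ M) (hζ0 : 0 ≤ ζ) (hζ : ζ ≤ M) (hv0 : 0 ≤ v)
    (hv : v ≤ M) (hgv : ‖gv‖ ≤ M) (hgζ : ‖gζ‖ ≤ M) : ‖ζ • gv + v • gζ‖ ≤ 2 * M ^ 2 := by
  calc ‖ζ • gv + v • gζ‖ ≤ ζ * ‖gv‖ + v * ‖gζ‖ := by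
        simpa only [norm_smul, Real.norm_of_nonneg hζ0, Real.norm_of_nonneg hv0] using
          norm_add_le (ζ • gv) (v • gζ)
    _ ≤ M * M + M * M := by gcongr
    _ = 2 * M ^ 2 := by ring

/-- With `U = u(x)`, the subtracted terms come from the test functions `ζu` and `h(εζv - u)u`; they
are chosen to cancel the terms of first order in `ε`. -/
lemma second_variation_integrand_le_on_strip (hM : 1 ≤ M) (hε : 0 < ε) (hη : 0 < η) (hη1 : η ≤ 1)
    (hU0 : 0 ≤ U) (hUa : U ≤ ε * (ζ * v)) (hζ0 : 0 ≤ ζ) (hζ : ζ ≤ M) (hv0 : 0 ≤ v) (hv : v ≤ M)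
    (hh : |h| ≤ M) (hG : |G| ≤ M) (hgv : ‖gv‖ ≤ M) (hgζ : ‖gζ‖ ≤ M) (hgu : ‖gu‖ ≤ M)
    (hgh : ‖gh‖ ≤ M) (hp : |‖gu‖ ^ 2 - 1 + 2 * U * h| ≤ η * U)
    (hA : b - h * v - η ≤ ⟪gv, gu⟫) :
    ‖gu‖ ^ 2 - 1 - ε * (⟪ζ • gu + U • gζ, gv⟫ + ζ * U * G) -
      ⟪(h * (ε * (ζ * v) - U)) • gu +
        U • (h • (ε • (ζ • gv + v • gζ) - gu) + (ε * (ζ * v) - U) • gh), gu⟫ ≤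
      ε ^ 2 * (v ^ 2 * ‖gζ‖ ^ 2 - G * ζ ^ 2 * v) - ε * (ζ * b) +
        9 * M ^ 6 * (η * ε + ε ^ 2) := by
  have hM0 : 0 ≤ M := zero_le_one.trans hM
  have ha : ζ * v ≤ M ^ 2 := (mul_le_mul hζ hv hv0 hM0).trans_eq (sq M).symm
  have hp1 : |‖gu‖ ^ 2 - 1| ≤ 3 * M * U := by
    calc |‖gu‖ ^ 2 - 1| = |(‖gu‖ ^ 2 - 1 + 2 * U * h) - 2 * U * h| := by ring_nf
      _ ≤ η * U + 2 * U * M := by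
        refine (abs_sub _ _).trans (add_le_add hp ?_)
        rw [abs_mul, abs_of_nonneg (by positivity : 0 ≤ 2 * U)]
        gcongr
      _ ≤ 3 * M * U := by nlinarith
  have hrem := abs_strip_remainder_le hM hε hU0 hUa ha hζ0 hζ hh hG
    ((abs_inner_le_of_norm_le hgζ hgv).trans_eq (sq M).symm)
    ((abs_inner_le_of_norm_le hgh hgu).trans_eq (sq M).symm)
    ((abs_inner_le_of_norm_le (norm_smul_add_smul_le_of_le hM0 hζ0 hζ hv0 hv hgv hgζ)
      hgu).trans_eq (by ring)) hp1
  have hmain := strip_main_terms_le (z := ‖gζ‖) hM hε hη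
    (hUa.trans (mul_le_mul_of_nonneg_left ha hε.le)) hζ0 hζ hv0 hv hG hp hA
  refine le_trans (le_of_eq ?_) ((sub_le_sub hmain (abs_le.1 hrem).1).trans ?_)
  · simp only [inner_add_left, inner_sub_left, real_inner_smul_left,
      real_inner_self_eq_norm_sq, real_inner_comm gv gu]
    ring
  · have hηε : 0 ≤ M ^ 6 * (η * ε) := by positivity
    linarith

lemma second_variation_integrand_eq_off_strip :
    ‖ε • (ζ • gv + v • gζ)‖ ^ 2 -
      ε * (⟪ζ • ε • (ζ • gv + v • gζ) + (ε * (ζ * v)) • gζ, gv⟫ + ζ * (ε * (ζ * v)) * G) =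
      ε ^ 2 * (v ^ 2 * ‖gζ‖ ^ 2 - G * ζ ^ 2 * v) := by
  simp only [← real_inner_self_eq_norm_sq, inner_add_left, inner_add_right, real_inner_smul_left,
    real_inner_smul_right, real_inner_comm gζ gv]
  ring

end StripEstimate

section SecondVariation

/-- The amount `εζv` by which the competitor `max(u - εζv, 0)` lowers `u`. -/
abbrev perturbation {X : Type*} (ζ v : X → ℝ) (ε : ℝ) : X → ℝ := fun x => ε * (ζ x * v x)

/-- The data of the second variation of the energy at `u` in the direction `ζv`, where `ζ` is a
cutoff supported in the compact set `K`. The functions `h`, `G` and `b` stand for an extension of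
the mean curvature of the free boundary, a lower bound for `Δv`, and a lower bound for the gap
`hv - ∂_ν v`; the constant `M` bounds all quantities involved. -/
structure SecondVariationData {n : ℕ} (u v ζ h G b : EuclideanSpace ℝ (Fin n) → ℝ)
    (K : Set (EuclideanSpace ℝ (Fin n))) (C : NNReal) (M : ℝ) : Prop where
  lipschitz_u : LipschitzWith C u
  u_nonneg : ∀ x, 0 ≤ u x
  contDiffOn_u : ContDiffOn ℝ 2 u (positivitySet u)
  lap_u : ∀ x ∈ positivitySet u, lap u x = 0
  contDiffOn_v : ContDiffOn ℝ 2 v (positivitySet u)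
  v_nonneg : ∀ x ∈ positivitySet u, 0 ≤ v x
  isCompact : IsCompact K
  differentiable_ζ : Differentiable ℝ ζ
  ζ_nonneg : ∀ x, 0 ≤ ζ x
  ζ_eq_zero : ∀ x ∉ K, ζ x = 0
  differentiableAt_h : ∀ x ∈ positivitySet u, DifferentiableAt ℝ h x
  one_le : 1 ≤ M
  abs_h_le : ∀ x ∈ positivitySet u, |h x| ≤ M
  norm_gradient_h_le : ∀ x ∈ positivitySet u, ‖gradient h x‖ ≤ M
  ζ_le : ∀ x ∈ positivitySet u ∩ K, ζ x ≤ M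
  norm_gradient_ζ_le : ∀ x ∈ positivitySet u ∩ K, ‖gradient ζ x‖ ≤ M
  v_le : ∀ x ∈ positivitySet u ∩ K, v x ≤ M
  norm_gradient_v_le : ∀ x ∈ positivitySet u ∩ K, ‖gradient v x‖ ≤ M
  norm_gradient_u_le : ∀ x ∈ positivitySet u ∩ K, ‖gradient u x‖ ≤ M
  abs_G_le : ∀ x ∈ positivitySet u ∩ K, |G x| ≤ M
  abs_b_le : ∀ x ∈ positivitySet u ∩ K, |b x| ≤ M
  aestronglyMeasurable_G : AEStronglyMeasurable G (volume.restrict (positivitySet u ∩ K))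
  aestronglyMeasurable_b : AEStronglyMeasurable b (volume.restrict (positivitySet u ∩ K))
  le_lap : ∀ x ∈ positivitySet u ∩ K, G x ≤ lap v x

/-- The expansions, up to an error `η` and at depth `u < s`, of the free boundary condition
`|∇u| = 1` and of `⟪∇v, ∇u⟫ = -∂_ν v ≥ b - hv`. They replace all integrals over the free boundary
by integrals over thin strips inside `{u > 0}`. -/
def BoundaryExpansion {n : ℕ} (u v h b : EuclideanSpace ℝ (Fin n) → ℝ)
    (K : Set (EuclideanSpace ℝ (Fin n))) (η s : ℝ) : Prop :=
  ∀ x ∈ positivitySet u ∩ K, u x < s →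
    |‖gradient u x‖ ^ 2 - 1 + 2 * u x * h x| ≤ η * u x ∧
      b x - h x * v x - η ≤ ⟪gradient v x, gradient u x⟫

namespace SecondVariationData

variable {n : ℕ} {u v ζ h G b : EuclideanSpace ℝ (Fin n) → ℝ}
  {K : Set (EuclideanSpace ℝ (Fin n))} {C : NNReal} {M ε : ℝ} {x : EuclideanSpace ℝ (Fin n)}

lemma isOpen (H : SecondVariationData u v ζ h G b K C M) : IsOpen (positivitySet u) :=
  isOpen_lt continuous_const H.lipschitz_u.continuous

lemma measurableSet (H : SecondVariationData u v ζ h G b K C M) :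
    MeasurableSet (positivitySet u ∩ K) :=
  H.isOpen.measurableSet.inter H.isCompact.measurableSet

lemma isFiniteMeasure (H : SecondVariationData u v ζ h G b K C M) :
    IsFiniteMeasure (volume.restrict (positivitySet u ∩ K)) :=
  isFiniteMeasure_restrict.2 (measure_inter_compact_ne_top H.isCompact)

lemma integrableOn {f : EuclideanSpace ℝ (Fin n) → ℝ} {B : ℝ}
    (H : SecondVariationData u v ζ h G b K C M)
    (hf : AEStronglyMeasurable f (volume.restrict (positivitySet u ∩ K)))
    (hB : ∀ x ∈ positivitySet u ∩ K, |f x| ≤ B) : IntegrableOn f (positivitySet u ∩ K) :=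
  integrableOn_of_abs_le H.measurableSet (measure_inter_compact_ne_top H.isCompact) hf hB

lemma nonneg (H : SecondVariationData u v ζ h G b K C M) : 0 ≤ M := zero_le_one.trans H.one_le

lemma differentiableAt_u (H : SecondVariationData u v ζ h G b K C M) (hx : 0 < u x) :
    DifferentiableAt ℝ u x :=
  (H.contDiffOn_u.differentiableOn two_ne_zero).differentiableAt (H.isOpen.mem_nhds hx)

lemma differentiableAt_v (H : SecondVariationData u v ζ h G b K C M) (hx : 0 < u x) :
    DifferentiableAt ℝ v x :=
  (H.contDiffOn_v.differentiableOn two_ne_zero).differentiableAt (H.isOpen.mem_nhds hx)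

lemma differentiableAt_perturbation (H : SecondVariationData u v ζ h G b K C M) (hx : 0 < u x) :
    DifferentiableAt ℝ (perturbation ζ v ε) x :=
  ((H.differentiable_ζ x).mul (H.differentiableAt_v hx)).const_mul ε

lemma gradient_perturbation (H : SecondVariationData u v ζ h G b K C M) (hx : 0 < u x) :
    gradient (perturbation ζ v ε) x = ε • (ζ x • gradient v x + v x • gradient ζ x) := by
  rw [gradient_fun_const_mul ((H.differentiable_ζ x).fun_mul (H.differentiableAt_v hx)),
    gradient_fun_mul (H.differentiable_ζ x) (H.differentiableAt_v hx)]

lemma perturbation_nonneg (H : SecondVariationData u v ζ h G b K C M) (hε : 0 < ε) :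
    ∀ x ∈ positivitySet u, 0 ≤ perturbation ζ v ε x :=
  fun x hx => mul_nonneg hε.le (mul_nonneg (H.ζ_nonneg x) (H.v_nonneg x hx))

lemma perturbation_eq_zero (H : SecondVariationData u v ζ h G b K C M) :
    ∀ x ∉ K, perturbation ζ v ε x = 0 :=
  fun x hx => by simp only [perturbation, H.ζ_eq_zero x hx, zero_mul, mul_zero]

lemma gradient_ζ_eq_zero (H : SecondVariationData u v ζ h G b K C M) (hx : x ∉ K) :
    gradient ζ x = 0 :=
  gradient_eq_zero_of_isLocalMin <| Eventually.of_forall fun y =>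
    (H.ζ_eq_zero x hx).trans_le (H.ζ_nonneg y)

lemma perturbation_le (H : SecondVariationData u v ζ h G b K C M) (hε : 0 < ε) (hx : 0 < u x) :
    perturbation ζ v ε x ≤ ε * M ^ 2 := by
  by_cases hK : x ∈ K
  · rw [sq]
    exact mul_le_mul_of_nonneg_left (mul_le_mul (H.ζ_le x ⟨hx, hK⟩) (H.v_le x ⟨hx, hK⟩)
      (H.v_nonneg x hx) H.nonneg) hε.le
  · rw [H.perturbation_eq_zero x hK]
    positivity

lemma norm_gradient_perturbation_le (H : SecondVariationData u v ζ h G b K C M) (hε : 0 < ε)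
    (hx : 0 < u x) : ‖gradient (perturbation ζ v ε) x‖ ≤ ε * (2 * M ^ 2) := by
  rw [H.gradient_perturbation hx, norm_smul, Real.norm_of_nonneg hε.le]
  refine mul_le_mul_of_nonneg_left ?_ hε.le
  by_cases hK : x ∈ K
  · have hxK : x ∈ positivitySet u ∩ K := ⟨hx, hK⟩
    exact norm_smul_add_smul_le_of_le H.nonneg (H.ζ_nonneg x) (H.ζ_le x hxK) (H.v_nonneg x hx)
      (H.v_le x hxK) (H.norm_gradient_v_le x hxK) (H.norm_gradient_ζ_le x hxK)
  · rw [H.ζ_eq_zero x hK, H.gradient_ζ_eq_zero hK, zero_smul, smul_zero, add_zero, norm_zero]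
    positivity

lemma bddSegmentLipschitzOn_ζ (H : SecondVariationData u v ζ h G b K C M) :
    BddSegmentLipschitzOn ζ (positivitySet u) := by
  refine .of_norm_fderiv_le H.nonneg (fun x _ => H.differentiable_ζ x) (fun x hx => ?_)
    fun x hx => ?_
  · by_cases hK : x ∈ K
    · exact (abs_of_nonneg (H.ζ_nonneg x)).trans_le (H.ζ_le x ⟨hx, hK⟩)
    · simpa only [H.ζ_eq_zero x hK, abs_zero] using H.nonneg
  · rw [← norm_gradient_eq_norm_fderiv]
    by_cases hK : x ∈ K
    · exact H.norm_gradient_ζ_le x ⟨hx, hK⟩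
    · simpa only [H.gradient_ζ_eq_zero hK, norm_zero] using H.nonneg

lemma bddSegmentLipschitzOn_perturbation (H : SecondVariationData u v ζ h G b K C M)
    (hε : 0 < ε) : BddSegmentLipschitzOn (perturbation ζ v ε) (positivitySet u) := by
  refine .of_norm_fderiv_le (M := ε * (2 * M ^ 2)) (by positivity)
    (fun x hx => H.differentiableAt_perturbation hx) (fun x hx => ?_) fun x hx => ?_
  · rw [abs_of_nonneg (H.perturbation_nonneg hε x hx)]
    exact (H.perturbation_le hε hx).trans (by gcongr; linarith [sq_nonneg M])
  · exact (norm_gradient_eq_norm_fderiv _ _).symm.trans_le (H.norm_gradient_perturbation_le hε hx)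

lemma exists_lipschitzWith_mul_decrement {F : EuclideanSpace ℝ (Fin n) → ℝ}
    (H : SecondVariationData u v ζ h G b K C M) (hε : 0 < ε)
    (hF : BddSegmentLipschitzOn F (positivitySet u)) :
    ∃ C' : NNReal, LipschitzWith C' fun x => F x * decrement u (perturbation ζ v ε) x :=
  _root_.exists_lipschitzWith_mul_decrement H.lipschitz_u H.u_nonneg
    (H.bddSegmentLipschitzOn_perturbation hε) (H.perturbation_nonneg hε) hF

lemma exists_lipschitzWith_decrement (H : SecondVariationData u v ζ h G b K C M) (hε : 0 < ε) :
    ∃ C' : NNReal, LipschitzWith C' (decrement u (perturbation ζ v ε)) :=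
  _root_.exists_lipschitzWith_decrement H.lipschitz_u H.u_nonneg
    (H.bddSegmentLipschitzOn_perturbation hε) (H.perturbation_nonneg hε)

lemma support_mul_decrement_subset (H : SecondVariationData u v ζ h G b K C M)
    (F : EuclideanSpace ℝ (Fin n) → ℝ) :
    (Function.support fun x => F x * decrement u (perturbation ζ v ε) x) ⊆ positivitySet u ∩ K :=
  (Function.support_mul_subset_right _ _).trans (support_decrement_subset H.perturbation_eq_zero)

/-- The test function against the equation of `u` that removes the first-order terms on the strip;
it vanishes elsewhere. -/
def correction (u v ζ h : EuclideanSpace ℝ (Fin n) → ℝ) (ε : ℝ) : EuclideanSpace ℝ (Fin n) → ℝ :=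
  fun x => h x * (perturbation ζ v ε x - decrement u (perturbation ζ v ε) x) *
    decrement u (perturbation ζ v ε) x

lemma exists_lipschitzWith_correction (H : SecondVariationData u v ζ h G b K C M) (hε : 0 < ε) :
    ∃ C' : NNReal, LipschitzWith C' (correction u v ζ h ε) := by
  have hh : BddSegmentLipschitzOn h (positivitySet u) :=
    .of_norm_fderiv_le H.nonneg H.differentiableAt_h H.abs_h_le fun x hx =>
      (norm_gradient_eq_norm_fderiv h x).symm.trans_le (H.norm_gradient_h_le x hx)
  have hψ := H.bddSegmentLipschitzOn_perturbation hε
  exact H.exists_lipschitzWith_mul_decrement hε <| hh.mul <| hψ.sub <|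
    bddSegmentLipschitzOn_decrement H.lipschitz_u H.u_nonneg hψ (H.perturbation_nonneg hε)

lemma setIntegral_inner_gradient_decrement (H : SecondVariationData u v ζ h G b K C M)
    (hε : 0 < ε) : ∫ x in positivitySet u ∩ K,
      ⟪gradient (decrement u (perturbation ζ v ε)) x, gradient u x⟫ = 0 := by
  obtain ⟨C', hC'⟩ := H.exists_lipschitzWith_decrement hε
  exact setIntegral_inner_gradient_eq_zero H.isOpen H.isCompact hC'
    (support_decrement_subset H.perturbation_eq_zero) H.contDiffOn_u H.norm_gradient_u_le H.lap_u

lemma integrableOn_inner_gradient_correction (H : SecondVariationData u v ζ h G b K C M)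
    (hε : 0 < ε) : IntegrableOn (fun x => ⟪gradient (correction u v ζ h ε) x, gradient u x⟫)
      (positivitySet u ∩ K) := by
  obtain ⟨C', hC'⟩ := H.exists_lipschitzWith_correction hε
  exact integrableOn_inner_gradient H.isOpen H.isCompact hC' H.norm_gradient_u_le

lemma setIntegral_inner_gradient_correction (H : SecondVariationData u v ζ h G b K C M)
    (hε : 0 < ε) :
    ∫ x in positivitySet u ∩ K, ⟪gradient (correction u v ζ h ε) x, gradient u x⟫ = 0 := by
  obtain ⟨C', hC'⟩ := H.exists_lipschitzWith_correction hε
  exact setIntegral_inner_gradient_eq_zero H.isOpen H.isCompact hC'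
    (H.support_mul_decrement_subset _) H.contDiffOn_u H.norm_gradient_u_le H.lap_u

lemma setIntegral_subsolution_test_le (H : SecondVariationData u v ζ h G b K C M) (hε : 0 < ε) :
    ∫ x in positivitySet u ∩ K,
      (⟪gradient (fun y => ζ y * decrement u (perturbation ζ v ε) y) x, gradient v x⟫ +
        ζ x * decrement u (perturbation ζ v ε) x * G x) ≤ 0 := by
  obtain ⟨C', hC'⟩ := H.exists_lipschitzWith_mul_decrement hε H.bddSegmentLipschitzOn_ζ
  exact setIntegral_inner_gradient_add_mul_le H.isOpen H.isCompact hC'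
    (fun x => mul_nonneg (H.ζ_nonneg x) (decrement_nonneg (H.perturbation_nonneg hε) x))
    (H.support_mul_decrement_subset ζ) H.contDiffOn_v H.norm_gradient_v_le
    H.aestronglyMeasurable_G H.abs_G_le H.le_lap

lemma integrableOn_subsolution_test (H : SecondVariationData u v ζ h G b K C M) (hε : 0 < ε) :
    IntegrableOn (fun x =>
      ⟪gradient (fun y => ζ y * decrement u (perturbation ζ v ε) y) x, gradient v x⟫ +
        ζ x * decrement u (perturbation ζ v ε) x * G x) (positivitySet u ∩ K) := by
  obtain ⟨C', hC'⟩ := H.exists_lipschitzWith_mul_decrement hε H.bddSegmentLipschitzOn_ζ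
  obtain ⟨B, hB⟩ := exists_abs_le_of_support_subset H.isCompact hC'.continuous
    ((H.support_mul_decrement_subset ζ).trans inter_subset_right)
  refine (integrableOn_inner_gradient H.isOpen H.isCompact hC' H.norm_gradient_v_le).add
    (H.integrableOn (hC'.continuous.aestronglyMeasurable.mul H.aestronglyMeasurable_G)
      (B := B * M) fun x hx => ?_)
  rw [abs_mul]
  exact mul_le_mul (hB x) (H.abs_G_le x hx) (abs_nonneg _) ((abs_nonneg _).trans (hB x))

lemma measurableSet_strip (H : SecondVariationData u v ζ h G b K C M) :
    MeasurableSet (lostStrip u (perturbation ζ v ε)) :=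
  measurableSet_lostStrip H.lipschitz_u.continuous fun _ hx =>
    (H.differentiableAt_perturbation hx).continuousAt.continuousWithinAt

lemma integrableOn_indicator_strip (H : SecondVariationData u v ζ h G b K C M) :
    IntegrableOn ((lostStrip u (perturbation ζ v ε)).indicator fun _ => (1 : ℝ))
      (positivitySet u ∩ K) := by
  have := H.isFiniteMeasure
  exact (integrable_const 1).indicator H.measurableSet_strip

lemma integrableOn_firstVariation (H : SecondVariationData u v ζ h G b K C M) (hε : 0 < ε) :
    IntegrableOn (fun x => ‖gradient (decrement u (perturbation ζ v ε)) x‖ ^ 2 -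
      (lostStrip u (perturbation ζ v ε)).indicator (fun _ => 1) x) (positivitySet u ∩ K) := by
  obtain ⟨C', hC'⟩ := H.exists_lipschitzWith_decrement hε
  refine (H.integrableOn ((measurable_gradient _).norm.pow_const 2).aestronglyMeasurable
    (B := C' ^ 2) fun x _ => ?_).sub H.integrableOn_indicator_strip
  rw [abs_of_nonneg (by positivity)]
  exact pow_le_pow_left₀ (norm_nonneg _) (norm_gradient_le_of_lipschitzWith hC' x) 2

lemma aestronglyMeasurable_v (H : SecondVariationData u v ζ h G b K C M) :
    AEStronglyMeasurable v (volume.restrict (positivitySet u ∩ K)) :=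
  (H.contDiffOn_v.continuousOn.mono inter_subset_left).aestronglyMeasurable H.measurableSet

lemma aestronglyMeasurable_ζ (H : SecondVariationData u v ζ h G b K C M) :
    AEStronglyMeasurable ζ (volume.restrict (positivitySet u ∩ K)) :=
  H.differentiable_ζ.continuous.aestronglyMeasurable

lemma integrableOn_indicator_mul (H : SecondVariationData u v ζ h G b K C M) :
    IntegrableOn ((lostStrip u (perturbation ζ v ε)).indicator fun x => ζ x * b x)
      (positivitySet u ∩ K) := by
  refine Integrable.indicator (H.integrableOn (B := M * M)
    (H.aestronglyMeasurable_ζ.mul H.aestronglyMeasurable_b) fun x hx => ?_) H.measurableSet_strip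
  rw [abs_mul, abs_of_nonneg (H.ζ_nonneg x)]
  exact mul_le_mul (H.ζ_le x hx) (H.abs_b_le x hx) (abs_nonneg _) H.nonneg

lemma integrableOn_quadraticForm (H : SecondVariationData u v ζ h G b K C M) :
    IntegrableOn (fun x => v x ^ 2 * ‖gradient ζ x‖ ^ 2 - G x * ζ x ^ 2 * v x)
      (positivitySet u ∩ K) := by
  refine .sub (H.integrableOn (B := M ^ 2 * M ^ 2) ((H.aestronglyMeasurable_v.pow 2).mul
      ((measurable_gradient ζ).norm.pow_const 2).aestronglyMeasurable) fun x hx => ?_)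
    (H.integrableOn (B := M * M ^ 2 * M) ((H.aestronglyMeasurable_G.mul
      (H.aestronglyMeasurable_ζ.pow 2)).mul H.aestronglyMeasurable_v) fun x hx => ?_)
  all_goals
    have hv0 := H.v_nonneg x hx.1
    have hv := H.v_le x hx
  · have hζ := H.norm_gradient_ζ_le x hx
    rw [abs_of_nonneg (by positivity)]
    gcongr
  · have hζ0 := H.ζ_nonneg x
    have hζ := H.ζ_le x hx
    have hG := H.abs_G_le x hx
    have hM := H.nonneg
    rw [abs_mul, abs_mul, abs_of_nonneg hv0, abs_of_nonneg (sq_nonneg (ζ x))]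
    gcongr

end SecondVariationData

end SecondVariation

section SecondVariationInequality

namespace SecondVariationData

variable {n : ℕ} {u v ζ h G b : EuclideanSpace ℝ (Fin n) → ℝ}
  {K : Set (EuclideanSpace ℝ (Fin n))} {C : NNReal} {M ε η s : ℝ} {x : EuclideanSpace ℝ (Fin n)}

lemma gradient_correction (H : SecondVariationData u v ζ h G b K C M) (hx : 0 < u x)
    (hm : DifferentiableAt ℝ (decrement u (perturbation ζ v ε)) x) :
    gradient (correction u v ζ h ε) x =
      (h x * (perturbation ζ v ε x - decrement u (perturbation ζ v ε) x)) •
          gradient (decrement u (perturbation ζ v ε)) x +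
        decrement u (perturbation ζ v ε) x •
          (h x • (gradient (perturbation ζ v ε) x -
              gradient (decrement u (perturbation ζ v ε)) x) +
            (perturbation ζ v ε x - decrement u (perturbation ζ v ε) x) • gradient h x) := by
  have hψ := H.differentiableAt_perturbation (ε := ε) hx
  unfold correction
  rw [gradient_fun_mul ((H.differentiableAt_h x hx).fun_mul (hψ.fun_sub hm)) hm,
    gradient_fun_mul (H.differentiableAt_h x hx) (hψ.fun_sub hm), gradient_fun_sub hψ hm]

lemma integrand_le (H : SecondVariationData u v ζ h G b K C M)
    (hE : BoundaryExpansion u v h b K η s) (hε : 0 < ε) (hη : 0 < η) (hη1 : η ≤ 1)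
    (hεs : ε * M ^ 2 < s) (hx : x ∈ positivitySet u ∩ K)
    (hm : DifferentiableAt ℝ (decrement u (perturbation ζ v ε)) x) :
    (‖gradient (decrement u (perturbation ζ v ε)) x‖ ^ 2 -
        (lostStrip u (perturbation ζ v ε)).indicator (fun _ => 1) x) -
      ε * (⟪gradient (fun y => ζ y * decrement u (perturbation ζ v ε) y) x, gradient v x⟫ +
        ζ x * decrement u (perturbation ζ v ε) x * G x) -
      ⟪gradient (correction u v ζ h ε) x, gradient u x⟫ ≤
    ε ^ 2 * (v x ^ 2 * ‖gradient ζ x‖ ^ 2 - G x * ζ x ^ 2 * v x) -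
      ε * (lostStrip u (perturbation ζ v ε)).indicator (fun x => ζ x * b x) x +
      9 * M ^ 6 * (η * ε + ε ^ 2) *
        (lostStrip u (perturbation ζ v ε)).indicator (fun _ => 1) x := by
  have hux : 0 < u x := hx.1
  have hu' := H.differentiableAt_u hux
  have hψ := H.differentiableAt_perturbation (ε := ε) hux
  rw [H.gradient_correction hux hm, gradient_fun_mul (H.differentiable_ζ x) hm,
    decrement_of_pos hux]
  rcases le_or_gt (u x) (perturbation ζ v ε x) with hS | hS
  · have hmem : x ∈ lostStrip u (perturbation ζ v ε) := ⟨hux, hS⟩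
    obtain ⟨hp, hA⟩ := hE x hx (hS.trans_lt ((H.perturbation_le hε hux).trans_lt hεs))
    rw [gradient_decrement_of_le H.lipschitz_u.continuous hux hm hu' hS, min_eq_left hS,
      H.gradient_perturbation hux, indicator_of_mem hmem, indicator_of_mem hmem, mul_one]
    exact second_variation_integrand_le_on_strip H.one_le hε hη hη1 hux.le hS (H.ζ_nonneg x)
      (H.ζ_le x hx) (H.v_nonneg x hux) (H.v_le x hx) (H.abs_h_le x hux) (H.abs_G_le x hx)
      (H.norm_gradient_v_le x hx) (H.norm_gradient_ζ_le x hx) (H.norm_gradient_u_le x hx)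
      (H.norm_gradient_h_le x hux) hp hA
  · have hmem : x ∉ lostStrip u (perturbation ζ v ε) := fun h => h.2.not_gt hS
    rw [gradient_decrement_of_ge H.lipschitz_u.continuous hux hm hψ hS.le, min_eq_right hS.le,
      H.gradient_perturbation hux, indicator_of_notMem hmem, indicator_of_notMem hmem, sub_self,
      sub_self]
    simpa only [mul_zero, zero_smul, smul_zero, add_zero, sub_zero, inner_zero_left] using
      second_variation_integrand_eq_off_strip.le

lemma half_indicator_strip_le (H : SecondVariationData u v ζ h G b K C M)
    (hE : BoundaryExpansion u v h b K η s) (hε : 0 < ε) (hη1 : η ≤ 1) (hεs : ε * M ^ 2 < s)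
    (hεM : ε * (6 * M ^ 3) ≤ 1) (hx : x ∈ positivitySet u ∩ K)
    (hm : DifferentiableAt ℝ (decrement u (perturbation ζ v ε)) x) :
    1 / 2 * (lostStrip u (perturbation ζ v ε)).indicator (fun _ => (1 : ℝ)) x - 2 * M ^ 3 * ε ≤
      ⟪gradient (decrement u (perturbation ζ v ε)) x, gradient u x⟫ := by
  have hux : 0 < u x := hx.1
  have hM := H.nonneg
  rcases le_or_gt (u x) (perturbation ζ v ε x) with hS | hS
  · have hmem : x ∈ lostStrip u (perturbation ζ v ε) := ⟨hux, hS⟩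
    have hU : u x ≤ ε * M ^ 2 := hS.trans (H.perturbation_le hε hux)
    have hspeed := (abs_le.1 (hE x hx (hU.trans_lt hεs)).1).1
    have huh : u x * h x ≤ ε * M ^ 3 := by
      calc u x * h x ≤ u x * M :=
            mul_le_mul_of_nonneg_left ((le_abs_self _).trans (H.abs_h_le x hux)) hux.le
        _ ≤ ε * M ^ 2 * M := mul_le_mul_of_nonneg_right hU hM
        _ = ε * M ^ 3 := by ring
    have hηu : η * u x ≤ ε * M ^ 3 := by
      calc η * u x ≤ M * (ε * M ^ 2) := mul_le_mul (hη1.trans H.one_le) hU hux.le hM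
        _ = ε * M ^ 3 := by ring
    rw [gradient_decrement_of_le H.lipschitz_u.continuous hux hm (H.differentiableAt_u hux) hS,
      indicator_of_mem hmem, mul_one, real_inner_self_eq_norm_sq]
    linarith [(by positivity : 0 ≤ 2 * M ^ 3 * ε)]
  · have hmem : x ∉ lostStrip u (perturbation ζ v ε) := fun h => h.2.not_gt hS
    rw [gradient_decrement_of_ge H.lipschitz_u.continuous hux hm
      (H.differentiableAt_perturbation hux) hS.le, indicator_of_notMem hmem, mul_zero]
    have hinner := abs_inner_le_of_norm_le (H.norm_gradient_perturbation_le hε hux)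
      (H.norm_gradient_u_le x hx)
    linarith [(abs_le.1 hinner).1]

lemma ae_differentiableAt_decrement (H : SecondVariationData u v ζ h G b K C M) (hε : 0 < ε) :
    ∀ᵐ x ∂volume.restrict (positivitySet u ∩ K),
      DifferentiableAt ℝ (decrement u (perturbation ζ v ε)) x ∧ x ∈ positivitySet u ∩ K := by
  obtain ⟨C', hC'⟩ := H.exists_lipschitzWith_decrement hε
  exact (ae_restrict_of_ae hC'.ae_differentiableAt).and (ae_restrict_mem H.measurableSet)

lemma integrableOn_inner_gradient_decrement (H : SecondVariationData u v ζ h G b K C M)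
    (hε : 0 < ε) : IntegrableOn
      (fun x => ⟪gradient (decrement u (perturbation ζ v ε)) x, gradient u x⟫)
      (positivitySet u ∩ K) := by
  obtain ⟨C', hC'⟩ := H.exists_lipschitzWith_decrement hε
  exact integrableOn_inner_gradient H.isOpen H.isCompact hC' H.norm_gradient_u_le

lemma setIntegral_indicator_strip_le (H : SecondVariationData u v ζ h G b K C M)
    (hE : BoundaryExpansion u v h b K η s) (hε : 0 < ε) (hη1 : η ≤ 1) (hεs : ε * M ^ 2 < s)
    (hεM : ε * (6 * M ^ 3) ≤ 1) :
    ∫ x in positivitySet u ∩ K, (lostStrip u (perturbation ζ v ε)).indicator (fun _ => 1) x ≤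
      4 * M ^ 3 * ε * volume.real (positivitySet u ∩ K) := by
  have := H.isFiniteMeasure
  have hS := H.integrableOn_indicator_strip (ε := ε)
  have hle := integral_mono_ae ((hS.const_mul (1 / 2)).sub (integrable_const (2 * M ^ 3 * ε)))
    (H.integrableOn_inner_gradient_decrement hε) <| by
      filter_upwards [H.ae_differentiableAt_decrement hε] with x hx using
        H.half_indicator_strip_le hE hε hη1 hεs hεM hx.2 hx.1
  simp only [Pi.sub_apply] at hle
  rw [H.setIntegral_inner_gradient_decrement hε, integral_sub (hS.const_mul _)
    (integrable_const _), integral_const_mul, setIntegral_const, smul_eq_mul] at hle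
  linarith

lemma second_variation_le (H : SecondVariationData u v ζ h G b K C M)
    (hE : BoundaryExpansion u v h b K η s) (hε : 0 < ε) (hη : 0 < η) (hη1 : η ≤ 1)
    (hεs : ε * M ^ 2 < s) (hεM : ε * (6 * M ^ 3) ≤ 1)
    (hmin : 0 ≤ ∫ x in positivitySet u ∩ K,
      (‖gradient (decrement u (perturbation ζ v ε)) x‖ ^ 2 -
        (lostStrip u (perturbation ζ v ε)).indicator (fun _ => 1) x)) :
    0 ≤ ε ^ 2 * (∫ x in positivitySet u ∩ K,
        (v x ^ 2 * ‖gradient ζ x‖ ^ 2 - G x * ζ x ^ 2 * v x)) -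
      ε * (∫ x in positivitySet u ∩ K,
        (lostStrip u (perturbation ζ v ε)).indicator (fun x => ζ x * b x) x) +
      ε ^ 2 * ((η + ε) * (36 * M ^ 9 * volume.real (positivitySet u ∩ K))) := by
  have := H.nonneg
  have hT := (H.integrableOn_subsolution_test hε).const_mul ε
  have hC := H.integrableOn_inner_gradient_correction hε
  have hQ := H.integrableOn_quadraticForm.const_mul (ε ^ 2)
  have hB := (H.integrableOn_indicator_mul (ε := ε)).const_mul ε
  have hS := (H.integrableOn_indicator_strip (ε := ε)).const_mul (9 * M ^ 6 * (η * ε + ε ^ 2))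
  have hle := integral_mono_ae (((H.integrableOn_firstVariation hε).sub hT).sub hC)
    ((hQ.sub hB).add hS) <| by
      filter_upwards [H.ae_differentiableAt_decrement hε] with x hx using
        H.integrand_le hE hε hη hη1 hεs hx.2 hx.1
  rw [integral_sub' ((H.integrableOn_firstVariation hε).sub hT) hC,
    integral_sub' (H.integrableOn_firstVariation hε) hT, integral_add' (hQ.sub hB) hS,
    integral_sub' hQ hB, integral_const_mul, integral_const_mul, integral_const_mul,
    integral_const_mul, H.setIntegral_inner_gradient_correction hε, sub_zero] at hle
  have htest := mul_nonpos_of_nonneg_of_nonpos hε.le (H.setIntegral_subsolution_test_le hε)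
  have hstrip := mul_le_mul_of_nonneg_left (H.setIntegral_indicator_strip_le hE hε hη1 hεs hεM)
    (by positivity : 0 ≤ 9 * M ^ 6 * (η * ε + ε ^ 2))
  linear_combination hmin + htest + hle + hstrip

lemma setIntegral_add_inv_mul_strip_le (H : SecondVariationData u v ζ h G b K C M)
    (hE : ∀ η > 0, ∃ s > 0, BoundaryExpansion u v h b K η s)
    (hmin : ∀ ε > 0, 0 ≤ ∫ x in positivitySet u ∩ K,
      (‖gradient (decrement u (perturbation ζ v ε)) x‖ ^ 2 -
        (lostStrip u (perturbation ζ v ε)).indicator (fun _ => 1) x))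
    {θ : ℝ} (hθ : 0 < θ) :
    ∀ᶠ ε in 𝓝[>] (0 : ℝ),
      (∫ x in positivitySet u ∩ K, (G x * ζ x ^ 2 * v x - v x ^ 2 * ‖gradient ζ x‖ ^ 2)) +
        ε⁻¹ * (∫ x in positivitySet u ∩ K,
          (lostStrip u (perturbation ζ v ε)).indicator (fun x => ζ x * b x) x) ≤ θ := by
  have hM : 0 < M := zero_lt_one.trans_le H.one_le
  set Λ : ℝ := 36 * M ^ 9 * volume.real (positivitySet u ∩ K) with hΛ
  have hΛ0 : 0 ≤ Λ := by positivity
  set η : ℝ := min 1 (θ / (2 * (Λ + 1)))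
  have hη0 : 0 < η := by positivity
  obtain ⟨s, hs, hEs⟩ := hE η hη0
  filter_upwards [Ioo_mem_nhdsGT (div_pos hs (pow_pos hM 2)),
    Ioo_mem_nhdsGT (div_pos one_pos (by positivity : 0 < 6 * M ^ 3)),
    Ioo_mem_nhdsGT (by positivity : 0 < θ / (2 * (Λ + 1)))] with ε hεs hεM hεθ
  have hε : 0 < ε := hεs.1
  have hvar := H.second_variation_le hEs hε hη0 (min_le_left _ _)
    ((lt_div_iff₀ (by positivity)).1 hεs.2) ((le_div_iff₀ (by positivity)).1 hεM.2.le)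
    (hmin ε hε)
  have herr : (η + ε) * Λ ≤ θ := by
    calc (η + ε) * Λ ≤ (θ / (2 * (Λ + 1)) + θ / (2 * (Λ + 1))) * (Λ + 1) := by
          gcongr
          exacts [min_le_right _ _, hεθ.2.le, le_add_of_nonneg_right zero_le_one]
      _ = θ := by field_simp; ring
  have hneg : ∫ x in positivitySet u ∩ K,
      (G x * ζ x ^ 2 * v x - v x ^ 2 * ‖gradient ζ x‖ ^ 2) =
      -∫ x in positivitySet u ∩ K, (v x ^ 2 * ‖gradient ζ x‖ ^ 2 - G x * ζ x ^ 2 * v x) := by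
    simp only [← integral_neg, neg_sub]
  have hdiv := mul_nonneg (by positivity : 0 ≤ (ε ^ 2)⁻¹) hvar
  rw [← hΛ, mul_add, mul_sub, inv_mul_cancel_left₀ (by positivity),
    inv_mul_cancel_left₀ (by positivity), sq, mul_inv, mul_assoc,
    inv_mul_cancel_left₀ hε.ne'] at hdiv
  linarith

end SecondVariationData

end SecondVariationInequality

section EnergyComparison

variable {n : ℕ} {u w v ζ h G b : EuclideanSpace ℝ (Fin n) → ℝ}
  {K : Set (EuclideanSpace ℝ (Fin n))} {C : NNReal} {M ε : ℝ} {x : EuclideanSpace ℝ (Fin n)}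
  {Γ : Subgroup (EuclideanSpace ℝ (Fin n) ≃ₗᵢ[ℝ] EuclideanSpace ℝ (Fin n))}

lemma integrableOn_acEnergy_integrand (hw : LipschitzWith C w) (Q : ℝ)
    {U : Set (EuclideanSpace ℝ (Fin n))} (hU : MeasurableSet U) (hfin : volume U ≠ ⊤) :
    IntegrableOn (fun x => ‖gradient w x‖ ^ 2 +
      Q ^ 2 * (positivitySet w).indicator (fun _ => (1 : ℝ)) x) U := by
  have hmeas : MeasurableSet (positivitySet w) :=
    (isOpen_lt continuous_const hw.continuous).measurableSet
  refine integrableOn_of_abs_le hU hfin (((measurable_gradient w).norm.pow_const 2).add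
    ((measurable_const.indicator hmeas).const_mul _)).aestronglyMeasurable
    (C := C ^ 2 + Q ^ 2 * 1) fun x _ => ?_
  have hind : 0 ≤ (positivitySet w).indicator (fun _ => (1 : ℝ)) x :=
    indicator_nonneg (fun _ _ => zero_le_one) x
  rw [abs_of_nonneg (by positivity)]
  gcongr
  exacts [norm_gradient_le_of_lipschitzWith hw x, indicator_le_self' (fun _ _ => zero_le_one) x]

namespace IsSymmetricUnder

lemma perturbation (hζ : IsSymmetricUnder Γ ζ) (hv : IsSymmetricUnder Γ v) :
    IsSymmetricUnder Γ (perturbation ζ v ε) :=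
  fun g hg x => by simp only [_root_.perturbation, hζ g hg x, hv g hg x]

lemma sub_decrement (hu : IsSymmetricUnder Γ u) (hw : IsSymmetricUnder Γ w) :
    IsSymmetricUnder Γ fun x => u x - decrement u w x :=
  fun g hg x => by simp only [decrement, indicator, mem_ofPred_eq, hu g hg x, hw g hg x]

end IsSymmetricUnder

namespace SecondVariationData

lemma gradient_sub_decrement (H : SecondVariationData u v ζ h G b K C M) (hε : 0 < ε)
    (hm : DifferentiableAt ℝ (decrement u (perturbation ζ v ε)) x) :
    gradient (fun y => u y - decrement u (perturbation ζ v ε) y) x =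
      gradient u x - gradient (decrement u (perturbation ζ v ε)) x := by
  by_cases hx : 0 < u x
  · exact gradient_fun_sub (H.differentiableAt_u hx) hm
  · have hux : u x = 0 := (not_lt.1 hx).antisymm (H.u_nonneg x)
    have hgu : gradient u x = 0 := gradient_eq_zero_of_isLocalMin <|
      Eventually.of_forall fun y => hux.trans_le (H.u_nonneg y)
    rw [hgu, gradient_decrement_of_not_pos (H.perturbation_nonneg hε) hx, sub_zero]
    refine gradient_eq_zero_of_isLocalMin <| Eventually.of_forall fun y => ?_
    simpa only [hux, decrement_of_not_pos hx, sub_zero, sub_nonneg] using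
      decrement_le_self H.u_nonneg y

lemma acEnergy_integrand_sub (H : SecondVariationData u v ζ h G b K C M) (hε : 0 < ε)
    (hm : DifferentiableAt ℝ (decrement u (perturbation ζ v ε)) x) :
    (‖gradient (fun y => u y - decrement u (perturbation ζ v ε) y) x‖ ^ 2 +
        1 ^ 2 * (positivitySet fun y => u y - decrement u (perturbation ζ v ε) y).indicator
          (fun _ => (1 : ℝ)) x) -
      (‖gradient u x‖ ^ 2 + 1 ^ 2 * (positivitySet u).indicator (fun _ => 1) x) =
    (‖gradient (decrement u (perturbation ζ v ε)) x‖ ^ 2 -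
        (lostStrip u (perturbation ζ v ε)).indicator (fun _ => 1) x) -
      2 * ⟪gradient (decrement u (perturbation ζ v ε)) x, gradient u x⟫ := by
  rw [H.gradient_sub_decrement hε hm, norm_sub_sq_real, real_inner_comm,
    indicator_one_positivitySet_sub_decrement]
  ring

lemma firstVariation_eq_zero (H : SecondVariationData u v ζ h G b K C M) (hε : 0 < ε)
    (hx : x ∉ positivitySet u ∩ K) :
    (‖gradient (decrement u (perturbation ζ v ε)) x‖ ^ 2 -
        (lostStrip u (perturbation ζ v ε)).indicator (fun _ => 1) x) -
      2 * ⟪gradient (decrement u (perturbation ζ v ε)) x, gradient u x⟫ = 0 := by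
  have hm : decrement u (perturbation ζ v ε) x = 0 :=
    Function.notMem_support.1 fun h => hx (support_decrement_subset H.perturbation_eq_zero h)
  have hgrad : gradient (decrement u (perturbation ζ v ε)) x = 0 :=
    gradient_eq_zero_of_isLocalMin <| Eventually.of_forall fun y =>
      hm.trans_le (decrement_nonneg (H.perturbation_nonneg hε) y)
  rw [hgrad, indicator_of_notMem fun h => hx (lostStrip_subset H.perturbation_eq_zero h),
    norm_zero, inner_zero_left]
  norm_num

lemma firstVariation_nonneg (H : SecondVariationData u v ζ h G b K C M)
    (hmin : IsSymMinimizer Γ u) (hζ : IsSymmetricUnder Γ ζ) (hv : IsSymmetricUnder Γ v)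
    (hε : 0 < ε) : 0 ≤ ∫ x in positivitySet u ∩ K,
      (‖gradient (decrement u (perturbation ζ v ε)) x‖ ^ 2 -
        (lostStrip u (perturbation ζ v ε)).indicator (fun _ => 1) x) := by
  obtain ⟨R, hR, hKR⟩ := H.isCompact.isBounded.subset_ball_lt 0 0
  obtain ⟨C', hC'⟩ := H.exists_lipschitzWith_decrement hε
  have hwC := H.lipschitz_u.sub hC'
  have henergy := hmin.2.2.2 R hR (fun x => u x - decrement u (perturbation ζ v ε) x)
    (fun x => sub_nonneg.2 (decrement_le_self H.u_nonneg x)) hwC.locallyLipschitz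
    (hmin.2.2.1.sub_decrement (hζ.perturbation hv)) fun x hx => by
      rw [sub_eq_self]
      exact Function.notMem_support.1 fun hm =>
        hx (hKR (support_decrement_subset H.perturbation_eq_zero hm).2)
  rw [← sub_nonneg, acEnergy, acEnergy, ← integral_sub
    (integrableOn_acEnergy_integrand hwC 1 measurableSet_ball measure_ball_lt_top.ne)
    (integrableOn_acEnergy_integrand H.lipschitz_u 1 measurableSet_ball measure_ball_lt_top.ne),
    integral_congr_ae (ae_restrict_of_ae <| hC'.ae_differentiableAt.mono fun x =>
      H.acEnergy_integrand_sub hε),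
    setIntegral_eq_of_subset_of_forall_sdiff_eq_zero measurableSet_ball
      (inter_subset_right.trans hKR) fun x hx => H.firstVariation_eq_zero hε hx.2,
    integral_sub (H.integrableOn_firstVariation hε)
      ((H.integrableOn_inner_gradient_decrement hε).const_mul 2), integral_const_mul,
    H.setIntegral_inner_gradient_decrement hε, mul_zero, sub_zero] at henergy
  exact henergy

end SecondVariationData

end EnergyComparison

section NormedSpace

variable {E : Type*} [NormedAddCommGroup E] [NormedSpace ℝ E]

theorem add_smul_mem_ball {x z e : E} {t δ : ℝ} (he : ‖e‖ = 1) (h : dist x z + |t| < δ) :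
    x + t • e ∈ ball z δ := by
  have hdist : dist (x + t • e) x = |t| := by
    rw [dist_eq_norm, add_sub_cancel_left, norm_smul, he, mul_one, Real.norm_eq_abs]
  exact mem_ball.2 ((dist_triangle _ x _).trans_lt (by rwa [hdist, add_comm]))

theorem add_mul_le_of_le_fderiv {f : E → ℝ} {S : Set E} {e x : E} {c t : ℝ} (hS : Convex ℝ S)
    (hf : ∀ y ∈ S, DifferentiableAt ℝ f y) (hc : ∀ y ∈ S, c ≤ fderiv ℝ f y e)
    (hx : x ∈ S) (ht : 0 ≤ t) (hxt : x + t • e ∈ S) :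
    f x + c * t ≤ f (x + t • e) := by
  set D : Set ℝ := (fun s : ℝ => x + s • e) ⁻¹' S
  have hD : Convex ℝ D :=
    (hS.translate_preimage_right x).linear_preimage (LinearMap.toSpanSingleton ℝ E e)
  have hderiv : ∀ s ∈ D, HasDerivAt (fun s : ℝ => f (x + s • e))
      (fderiv ℝ f (x + s • e) e) s := fun s hs => by
    have hline : HasDerivAt (fun s : ℝ => x + s • e) e s := by
      simpa using ((hasDerivAt_id s).smul_const e).const_add x
    exact (hf _ hs).hasFDerivAt.comp_hasDerivAt s hline
  have hmean := hD.mul_sub_le_image_sub_of_le_deriv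
    (fun s hs => (hderiv s hs).continuousAt.continuousWithinAt)
    (fun s hs => (hderiv s (interior_subset hs)).differentiableAt.differentiableWithinAt)
    (fun s hs => by
      rw [(hderiv s (interior_subset hs)).deriv]
      exact hc (x + s • e) (interior_subset (s := D) hs))
    0 (by simpa [D] using hx) t hxt ht
  simp only [sub_zero, zero_smul, add_zero] at hmean
  linarith

theorem fderiv_eq_smul_of_isLocalExtrOn [CompleteSpace E] {f g : E → ℝ} {f' g' : E →L[ℝ] ℝ}
    {z e : E} (hext : IsLocalExtrOn f {x | g x = g z} z) (hg : HasStrictFDerivAt g g' z)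
    (hf : HasStrictFDerivAt f f' z) (he : g' e = 1) : f' = f' e • g' := by
  obtain ⟨a, b, hab, hmul⟩ := hext.exists_multipliers_of_hasStrictFDerivAt_1d hg hf
  have happly : ∀ y, a * g' y + b * f' y = 0 := fun y => by
    simpa using congrArg (fun L : E →L[ℝ] ℝ => L y) hmul
  have hae := happly e
  rw [he, mul_one] at hae
  have hb : b ≠ 0 := by
    rintro rfl
    exact hab (by simpa using hae)
  ext y
  refine mul_left_cancel₀ hb ?_
  simp only [smul_apply, smul_eq_mul]
  linear_combination happly y - g' y * hae

theorem exists_tendsto_fderiv_hasFDerivWithinAt {f : E → ℝ} {D S : Set E} {z : E}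
    (hf : ContDiffOn ℝ 1 f S) (hD : IsOpen D) (hDS : D ⊆ S) (hz : z ∈ S) :
    ∃ L : E →L[ℝ] ℝ, Tendsto (fderiv ℝ f) (𝓝[D] z) (𝓝 L) ∧ HasFDerivWithinAt f L S z := by
  have hfz : ContDiffWithinAt ℝ (0 + 1) f S z := by simpa using hf z hz
  obtain ⟨T, hT, -, f', hf', hcont⟩ :=
    (contDiffWithinAt_succ_iff_hasFDerivWithinAt (by simp)).1 hfz
  rw [insert_eq_of_mem hz] at hT
  have hzT : z ∈ T := mem_of_mem_nhdsWithin hz hT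
  have hTD : T ∈ 𝓝[D] z := nhdsWithin_mono z hDS hT
  refine ⟨f' z, ?_, (hf' z hzT).mono_of_mem_nhdsWithin hT⟩
  refine ((hcont.continuousWithinAt).mono_left (nhdsWithin_le_iff.2 hTD)).congr' ?_
  have hnhds : ∀ᶠ x in 𝓝[D] z, T ∈ 𝓝 x := by
    filter_upwards [eventually_eventually_nhdsWithin.2 hTD, self_mem_nhdsWithin] with x hx hxD
    rwa [hD.nhdsWithin_eq hxD] at hx
  filter_upwards [hnhds] with x hx
  exact ((hf' x (mem_of_mem_nhds hx)).hasFDerivAt hx).fderiv.symm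

end NormedSpace

/-- The geometric assumptions on a nonnegative function `u` with smooth free boundary: `U` is a
smooth extension of `u` from `{u > 0}` to a neighbourhood `W` of `closure {u > 0} \ {0}`, with
`|∇U| = 1` on the free boundary, which is locally the zero set of `U`. -/
structure SmoothFreeBoundary {n : ℕ} (u U : EuclideanSpace ℝ (Fin n) → ℝ)
    (W : Set (EuclideanSpace ℝ (Fin n))) : Prop where
  continuous : Continuous u
  nonneg : ∀ x, 0 ≤ u x
  map_zero : u 0 = 0
  isOpen : IsOpen W
  closure_sdiff_subset : closure (positivitySet u) \ {0} ⊆ W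
  contDiffOn : ContDiffOn ℝ (⊤ : ℕ∞) U W
  ext_eq : ∀ x ∈ closure (positivitySet u), U x = u x
  norm_gradient_ext : ∀ x ∈ freeBoundary u, ‖gradient U x‖ = 1
  exists_zeroSet_eq : ∀ x ∈ freeBoundary u, ∃ ε > 0,
    freeBoundary u ∩ ball x ε = {y ∈ ball x ε | U y = 0}

/-- The defect of `|∇U|² = 1` after its first-order correction at the free boundary. It vanishes
to second order there, because the normal derivative of `|∇U|²` is `-2 H`. -/
def gradientDefect {n : ℕ} (U : EuclideanSpace ℝ (Fin n) → ℝ) (x : EuclideanSpace ℝ (Fin n)) : ℝ :=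
  ‖gradient U x‖ ^ 2 - 1 + 2 * U x * meanCurv U x

/-- A ball about the free boundary point `z` inside which the zero set of `U` is the free boundary
and `U` increases at least at rate `1 / 2` in the inner normal direction `∇U z`. -/
structure IsNormalBall {n : ℕ} (u U : EuclideanSpace ℝ (Fin n) → ℝ)
    (z : EuclideanSpace ℝ (Fin n)) (δ : ℝ) : Prop where
  continuousOn : ContinuousOn U (ball z δ)
  mem_freeBoundary : ∀ y ∈ ball z δ, U y = 0 → y ∈ freeBoundary u
  add_half_le : ∀ x ∈ ball z δ, ∀ t, 0 ≤ t → x + t • gradient U z ∈ ball z δ →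
    U x + 1 / 2 * t ≤ U (x + t • gradient U z)

namespace SmoothFreeBoundary

variable {n : ℕ} {u U v : EuclideanSpace ℝ (Fin n) → ℝ} {W K : Set (EuclideanSpace ℝ (Fin n))}
  {x z : EuclideanSpace ℝ (Fin n)} {δ η : ℝ}

local notation "ℝⁿ" => EuclideanSpace ℝ (Fin n)

theorem isOpen_positivitySet (H : SmoothFreeBoundary u U W) : IsOpen (positivitySet u) :=
  isOpen_lt continuous_const H.continuous

theorem ne_zero_of_pos (H : SmoothFreeBoundary u U W) (hx : 0 < u x) : x ≠ 0 := by
  rintro rfl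
  exact hx.ne' H.map_zero

theorem mem_of_pos (H : SmoothFreeBoundary u U W) (hx : 0 < u x) : x ∈ W :=
  H.closure_sdiff_subset ⟨subset_closure hx, H.ne_zero_of_pos hx⟩

theorem mem_nhds_of_mem_freeBoundary (H : SmoothFreeBoundary u U W) (hz : z ∈ freeBoundary u) :
    W ∈ 𝓝 z :=
  H.isOpen.mem_nhds (H.closure_sdiff_subset ⟨frontier_subset_closure hz.1, hz.2⟩)

theorem mem_freeBoundary (H : SmoothFreeBoundary u U W) (hz : z ∈ closure (positivitySet u))
    (hz' : ¬0 < u z) (hz0 : z ≠ 0) : z ∈ freeBoundary u :=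
  ⟨by rw [H.isOpen_positivitySet.frontier_eq]; exact ⟨hz, hz'⟩, hz0⟩

theorem ext_eq_of_pos (H : SmoothFreeBoundary u U W) (hx : 0 < u x) : U x = u x :=
  H.ext_eq x (subset_closure hx)

theorem ext_eq_zero (H : SmoothFreeBoundary u U W) (hz : z ∈ frontier (positivitySet u)) :
    U z = 0 := by
  rw [H.ext_eq z (frontier_subset_closure hz)]
  rw [H.isOpen_positivitySet.frontier_eq] at hz
  exact le_antisymm (not_lt.1 hz.2) (H.nonneg z)

theorem eq_zero_of_mem_freeBoundary (H : SmoothFreeBoundary u U W) (hz : z ∈ freeBoundary u) :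
    u z = 0 := by
  rw [← H.ext_eq z (frontier_subset_closure hz.1), H.ext_eq_zero hz.1]

theorem gradient_eq (H : SmoothFreeBoundary u U W) (hx : 0 < u x) :
    gradient u x = gradient U x := by
  refine EventuallyEq.gradient_eq ?_
  filter_upwards [H.isOpen_positivitySet.mem_nhds hx] with y hy using (H.ext_eq_of_pos hy).symm

theorem contDiffOn_two (H : SmoothFreeBoundary u U W) : ContDiffOn ℝ 2 u (positivitySet u) :=
  ((H.contDiffOn.mono fun _ hx => H.mem_of_pos hx).of_le
    (WithTop.coe_le_coe.2 (le_top : (2 : ℕ∞) ≤ ⊤))).congr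
    fun _ hx => (H.ext_eq_of_pos hx).symm

theorem contDiffOn_gradient (H : SmoothFreeBoundary u U W) :
    ContDiffOn ℝ (⊤ : ℕ∞) (gradient U) W :=
  (InnerProductSpace.toDual ℝ ℝⁿ).symm.toContinuousLinearEquiv.contDiff.comp_contDiffOn
    (H.contDiffOn.fderiv_of_isOpen H.isOpen (by exact_mod_cast le_rfl))

theorem differentiableAt_ext (H : SmoothFreeBoundary u U W) (hx : W ∈ 𝓝 x) :
    DifferentiableAt ℝ U x :=
  (H.contDiffOn.contDiffAt hx).differentiableAt (by simp)

theorem differentiableAt_gradient (H : SmoothFreeBoundary u U W) (hx : W ∈ 𝓝 x) :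
    DifferentiableAt ℝ (gradient U) x :=
  (H.contDiffOn_gradient.contDiffAt hx).differentiableAt (by simp)

theorem continuousAt_gradient (H : SmoothFreeBoundary u U W) (hx : W ∈ 𝓝 x) :
    ContinuousAt (gradient U) x :=
  (H.contDiffOn_gradient.contDiffAt hx).continuousAt

theorem meanCurv_eq (H : SmoothFreeBoundary u U W) (hx : W ∈ 𝓝 x) :
    meanCurv U x = -⟪fderiv ℝ (gradient U) x (gradient U x), gradient U x⟫ := by
  rw [meanCurv, nuVec, fderiv_inner_apply ℝ (H.differentiableAt_gradient hx)
    (differentiableAt_const _)]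
  simp

theorem contDiffOn_meanCurv (H : SmoothFreeBoundary u U W) :
    ContDiffOn ℝ (⊤ : ℕ∞) (meanCurv U) W := by
  have hg := H.contDiffOn_gradient
  have hdg := hg.fderiv_of_isOpen H.isOpen (m := (⊤ : ℕ∞)) (by exact_mod_cast le_rfl)
  exact ((hdg.clm_apply hg).inner ℝ hg).neg.congr fun x hx =>
    H.meanCurv_eq (H.isOpen.mem_nhds hx)

theorem contDiffOn_gradientDefect (H : SmoothFreeBoundary u U W) :
    ContDiffOn ℝ (⊤ : ℕ∞) (gradientDefect U) W :=
  ((H.contDiffOn_gradient.norm_sq ℝ).sub contDiffOn_const).add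
    ((contDiffOn_const.mul H.contDiffOn).mul H.contDiffOn_meanCurv)

theorem gradientDefect_eq_zero (H : SmoothFreeBoundary u U W) (hz : z ∈ freeBoundary u) :
    gradientDefect U z = 0 := by
  rw [gradientDefect, H.norm_gradient_ext z hz, H.ext_eq_zero hz.1]
  ring

theorem fderiv_gradient_self (H : SmoothFreeBoundary u U W) (hz : z ∈ freeBoundary u) :
    fderiv ℝ U z (gradient U z) = 1 := by
  rw [← inner_gradient_left, real_inner_self_eq_norm_sq, H.norm_gradient_ext z hz, one_pow]

theorem fderiv_norm_gradient_sq (H : SmoothFreeBoundary u U W) (hz : z ∈ freeBoundary u) :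
    fderiv ℝ (fun x => ‖gradient U x‖ ^ 2) z = (-2 * meanCurv U z) • fderiv ℝ U z := by
  have hW := H.mem_nhds_of_mem_freeBoundary hz
  have hext : IsLocalExtrOn (fun x => ‖gradient U x‖ ^ 2) {x | U x = U z} z := by
    obtain ⟨ε, hε, hzero⟩ := H.exists_zeroSet_eq z hz
    refine Or.inl ?_
    filter_upwards [mem_nhdsWithin_of_mem_nhds (ball_mem_nhds z hε), self_mem_nhdsWithin]
      with x hxε hxz
    have hx : x ∈ freeBoundary u ∩ ball z ε := by
      rw [hzero]
      exact ⟨hxε, hxz.trans (H.ext_eq_zero hz.1)⟩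
    rw [H.norm_gradient_ext z hz, H.norm_gradient_ext x hx.1]
  have hnormal : fderiv ℝ (fun x => ‖gradient U x‖ ^ 2) z (gradient U z) = -2 * meanCurv U z := by
    have hsq : (fun x => ‖gradient U x‖ ^ 2) = fun x => ⟪gradient U x, gradient U x⟫ :=
      funext fun x => (real_inner_self_eq_norm_sq _).symm
    rw [H.meanCurv_eq hW, hsq, fderiv_inner_apply ℝ (H.differentiableAt_gradient hW)
      (H.differentiableAt_gradient hW), real_inner_comm]
    ring
  rw [← hnormal]
  exact fderiv_eq_smul_of_isLocalExtrOn hext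
    ((H.contDiffOn.contDiffAt hW).hasStrictFDerivAt (by simp))
    (((H.contDiffOn_gradient.norm_sq ℝ).contDiffAt hW).hasStrictFDerivAt (by simp))
    (H.fderiv_gradient_self hz)

theorem fderiv_gradientDefect (H : SmoothFreeBoundary u U W) (hz : z ∈ freeBoundary u) :
    fderiv ℝ (gradientDefect U) z = 0 := by
  have hW := H.mem_nhds_of_mem_freeBoundary hz
  have hsq : DifferentiableAt ℝ (fun x => ‖gradient U x‖ ^ 2) z :=
    (H.differentiableAt_gradient hW).norm_sq ℝ
  have hcurv : DifferentiableAt ℝ (meanCurv U) z :=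
    (H.contDiffOn_meanCurv.contDiffAt hW).differentiableAt (by simp)
  have hderiv : HasFDerivAt (gradientDefect U) _ z := (hsq.hasFDerivAt.sub_const 1).add
    (((H.differentiableAt_ext hW).hasFDerivAt.const_mul 2).mul hcurv.hasFDerivAt)
  rw [hderiv.fderiv, H.fderiv_norm_gradient_sq hz, H.ext_eq_zero hz.1]
  ext y
  simp
  ring

theorem exists_isNormalBall (H : SmoothFreeBoundary u U W) (hz : z ∈ freeBoundary u) {r : ℝ}
    (hr : 0 < r) : ∃ δ > 0, δ ≤ r ∧ IsNormalBall u U z δ := by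
  have hW := H.mem_nhds_of_mem_freeBoundary hz
  obtain ⟨ε, hε, hzero⟩ := H.exists_zeroSet_eq z hz
  have hslope : ∀ᶠ y in 𝓝 z, 1 / 2 < fderiv ℝ U y (gradient U z) := by
    simp only [← inner_gradient_left]
    refine Tendsto.eventually_const_lt ?_
      ((H.continuousAt_gradient hW).inner continuousAt_const).tendsto
    rw [real_inner_self_eq_norm_sq, H.norm_gradient_ext z hz]
    norm_num
  obtain ⟨δ, hδ, hball⟩ := Metric.eventually_nhds_iff_ball.1
    ((eventually_mem_nhds_iff.2 hW).and (hslope.and (ball_mem_nhds z hε)))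
  have hsub : ball z (min δ r) ⊆ ball z δ := ball_subset_ball (min_le_left _ _)
  refine ⟨min δ r, lt_min hδ hr, min_le_right _ _, fun y hy => ?_, fun y hy hy0 => ?_,
    fun x hx t ht hxt => ?_⟩
  · exact (H.differentiableAt_ext (hball y (hsub hy)).1).continuousAt.continuousWithinAt
  · exact (hzero.symm.subset ⟨(hball y (hsub hy)).2.2, hy0⟩).1
  · exact add_mul_le_of_le_fderiv (convex_ball z (min δ r))
      (fun y hy => H.differentiableAt_ext (hball y (hsub hy)).1)
      (fun y hy => (hball y (hsub hy)).2.1.le) hx ht hxt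

theorem exists_mem_freeBoundary_norm_sub_le (H : SmoothFreeBoundary u U W)
    (hz : z ∈ freeBoundary u) (hδ : IsNormalBall u U z δ) (hux : 0 < u x)
    (hx : dist x z + 2 * u x < δ) :
    ∃ y ∈ freeBoundary u, y ∈ ball z δ ∧ ‖x - y‖ ≤ 2 * u x := by
  have hN := H.norm_gradient_ext z hz
  have hUx := H.ext_eq_of_pos hux
  have habs : ∀ t ∈ Icc (-(2 * u x)) 0, |t| ≤ 2 * u x := fun t ht =>
    abs_le.2 ⟨ht.1, ht.2.trans (by positivity)⟩
  have hmem : ∀ t ∈ Icc (-(2 * u x)) 0, x + t • gradient U z ∈ ball z δ := fun t ht =>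
    add_smul_mem_ball hN ((add_le_add_right (habs t ht) _).trans_lt hx)
  have hle : -(2 * u x) ≤ 0 := by linarith
  have hback : U (x + (-(2 * u x)) • gradient U z) ≤ 0 := by
    have hcancel : x + (-(2 * u x)) • gradient U z + (2 * u x) • gradient U z = x := by
      rw [add_assoc, ← add_smul, neg_add_cancel, zero_smul, add_zero]
    have hmono := hδ.add_half_le _ (hmem _ (left_mem_Icc.2 hle)) (2 * u x) (by positivity)
      (by simpa [hcancel] using hmem 0 (right_mem_Icc.2 hle))
    rw [hcancel, hUx] at hmono
    linarith
  have hcont : ContinuousOn (fun t : ℝ => U (x + t • gradient U z)) (Icc (-(2 * u x)) 0) :=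
    hδ.continuousOn.comp (by fun_prop) hmem
  obtain ⟨t, ht, hUt⟩ := intermediate_value_Icc hle hcont
    (show (0 : ℝ) ∈ Icc _ _ from ⟨hback, by simpa [hUx] using hux.le⟩)
  refine ⟨x + t • gradient U z, hδ.mem_freeBoundary _ (hmem t ht) hUt, hmem t ht, ?_⟩
  rw [sub_add_cancel_left, norm_neg, norm_smul, hN, mul_one, Real.norm_eq_abs]
  exact habs t ht

theorem eventually_exists_mem_freeBoundary_norm_sub_le (H : SmoothFreeBoundary u U W)
    (hz : z ∈ freeBoundary u) {r : ℝ} (hr : 0 < r) :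
    ∀ᶠ x in 𝓝[positivitySet u] z, ∃ y ∈ freeBoundary u, y ∈ ball z r ∧ ‖x - y‖ ≤ 2 * u x := by
  obtain ⟨δ, hδ, hδr, hball⟩ := H.exists_isNormalBall hz hr
  have hcont : Continuous fun x => dist x z + 2 * u x :=
    (continuous_id.dist continuous_const).add (continuous_const.mul H.continuous)
  have hev : ∀ᶠ x in 𝓝[positivitySet u] z, dist x z + 2 * u x < δ := by
    refine (hcont.tendsto z).mono_left nhdsWithin_le_nhds |>.eventually_lt_const ?_
    simpa [H.eq_zero_of_mem_freeBoundary hz] using hδ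
  filter_upwards [hev, self_mem_nhdsWithin] with x hx hux
  obtain ⟨y, hy, hyδ, hxy⟩ := H.exists_mem_freeBoundary_norm_sub_le hz hball hux hx
  exact ⟨y, hy, ball_subset_ball hδr hyδ, hxy⟩

theorem eventually_abs_gradientDefect_le (H : SmoothFreeBoundary u U W)
    (hz : z ∈ freeBoundary u) (hη : 0 < η) :
    ∀ᶠ x in 𝓝[positivitySet u] z,
      |‖gradient u x‖ ^ 2 - 1 + 2 * u x * meanCurv U x| ≤ η * u x := by
  have hW := H.mem_nhds_of_mem_freeBoundary hz
  have hsmall : ∀ᶠ x in 𝓝 z, ‖fderiv ℝ (gradientDefect U) x‖ < η / 2 := by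
    have hcont : ContinuousAt (fderiv ℝ (gradientDefect U)) z :=
      (H.contDiffOn_gradientDefect.continuousOn_fderiv_of_isOpen H.isOpen (by simp)).continuousAt hW
    refine hcont.norm.tendsto.eventually_lt_const ?_
    simpa [H.fderiv_gradientDefect hz] using hη
  obtain ⟨δ, hδ, hball⟩ := Metric.eventually_nhds_iff_ball.1
    (hsmall.and (eventually_mem_nhds_iff.2 hW))
  filter_upwards [mem_nhdsWithin_of_mem_nhds (ball_mem_nhds z hδ), self_mem_nhdsWithin,
    H.eventually_exists_mem_freeBoundary_norm_sub_le hz hδ] with x hx hux ⟨y, hy, hyδ, hxy⟩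
  have hmean := (convex_ball z δ).norm_image_sub_le_of_norm_fderiv_le (𝕜 := ℝ)
    (fun w hw => (H.contDiffOn_gradientDefect.contDiffAt (hball w hw).2).differentiableAt (by simp))
    (fun w hw => (hball w hw).1.le) hyδ hx
  rw [H.gradientDefect_eq_zero hy, sub_zero, Real.norm_eq_abs, gradientDefect,
    ← H.gradient_eq hux, H.ext_eq_of_pos hux] at hmean
  calc |‖gradient u x‖ ^ 2 - 1 + 2 * u x * meanCurv U x|
      ≤ η / 2 * ‖x - y‖ := hmean
    _ ≤ η / 2 * (2 * u x) := by gcongr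
    _ = η * u x := by ring

theorem pos_add_smul_of_pos (H : SmoothFreeBoundary u U W) (hz : z ∈ freeBoundary u)
    (hδ : IsNormalBall u U z δ) (hux : 0 < u x) {s : ℝ} (hs : 0 ≤ s) (hx : dist x z + s < δ) :
    0 < u (x + s • gradient U z) := by
  have hseg : segment ℝ x (x + s • gradient U z) ⊆ positivitySet u := by
    refine (convex_segment x _).isPreconnected.subset_of_closure_inter_subset
      H.isOpen_positivitySet ⟨x, left_mem_segment ℝ _ _, hux⟩ fun w ⟨hwc, hw⟩ => ?_
    by_contra hwu
    have hUw := H.ext_eq_zero (H.isOpen_positivitySet.frontier_eq.symm.subset ⟨hwc, hwu⟩)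
    rw [segment_eq_image'] at hw
    obtain ⟨θ, hθ, rfl⟩ := hw
    have hθs : 0 ≤ θ * s := mul_nonneg hθ.1 hs
    simp only [add_sub_cancel_left, smul_smul] at hUw
    have hUx := H.ext_eq_of_pos hux
    have hmono := hδ.add_half_le x (mem_ball.2 (by linarith)) (θ * s) hθs
      (add_smul_mem_ball (H.norm_gradient_ext z hz) (by
        rw [abs_of_nonneg hθs]
        linarith [mul_le_of_le_one_left hs hθ.2]))
    linarith
  exact hseg (right_mem_segment ℝ _ _)

theorem pos_add_smul_gradient (H : SmoothFreeBoundary u U W) (hz : z ∈ freeBoundary u)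
    (hδ : IsNormalBall u U z δ) {s : ℝ} (hs : 0 < s) (hsδ : s < δ) :
    0 < u (z + s • gradient U z) := by
  have hclosure : z + s • gradient U z ∈ closure (positivitySet u) := by
    refine map_mem_closure (f := fun x => x + s • gradient U z) (by fun_prop)
      (isOpen_ball.inter_closure
        ⟨mem_ball_self (sub_pos.2 hsδ), frontier_subset_closure hz.1⟩) fun x hx => ?_
    exact H.pos_add_smul_of_pos hz hδ hx.2 hs.le (by linarith [mem_ball.1 hx.1])
  have hmono := hδ.add_half_le z (mem_ball_self (hs.trans hsδ)) s hs.le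
    (add_smul_mem_ball (H.norm_gradient_ext z hz) (by simpa [abs_of_pos hs] using hsδ))
  rw [H.ext_eq _ hclosure, H.ext_eq_zero hz.1] at hmono
  linarith

theorem dNu_eq (H : SmoothFreeBoundary u U W) (hz : z ∈ freeBoundary u) {L : ℝⁿ →L[ℝ] ℝ}
    (hv : HasFDerivWithinAt v L (positivitySet u ∪ freeBoundary u) z) :
    dNu U v z = -L (gradient U z) := by
  obtain ⟨δ, hδ, -, hball⟩ := H.exists_isNormalBall hz one_pos
  have hmaps : MapsTo (fun t : ℝ => z + t • -gradient U z) (Ioc (-δ) 0)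
      (positivitySet u ∪ freeBoundary u) := by
    rintro t ⟨htδ, ht0⟩
    rcases ht0.eq_or_lt with rfl | ht
    · exact Or.inr (by simpa using hz)
    · left
      simp only [smul_neg, ← neg_smul]
      exact H.pos_add_smul_gradient hz hball (by linarith) (by linarith)
  have hcurve : HasDerivWithinAt (fun t : ℝ => z + t • -gradient U z) (-gradient U z)
      (Ioc (-δ) 0) 0 := by
    simpa using (((hasDerivAt_id (0 : ℝ)).smul_const (-gradient U z)).const_add z).hasDerivWithinAt
  have hcomp : HasDerivWithinAt (fun t : ℝ => v (z + t • -gradient U z)) (L (-gradient U z))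
      (Ioc (-δ) 0) 0 :=
    HasFDerivWithinAt.comp_hasDerivWithinAt (0 : ℝ) (by simpa using hv) hcurve hmaps
  have hIic : HasDerivWithinAt (fun t : ℝ => v (z + t • -gradient U z)) (L (-gradient U z))
      (Iic 0) 0 :=
    hcomp.mono_of_mem_nhdsWithin (Ioc_mem_nhdsLE (by linarith))
  rw [dNu, nuVec, hIic.derivWithin (uniqueDiffWithinAt_Iic 0), map_neg]

theorem tendsto_inner_gradient_add (H : SmoothFreeBoundary u U W)
    (hv : ContDiffOn ℝ 1 v (positivitySet u ∪ freeBoundary u)) (hz : z ∈ freeBoundary u) :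
    Tendsto (fun x => ⟪gradient v x, gradient u x⟫ + meanCurv U x * v x)
      (𝓝[positivitySet u] z) (𝓝 (-dNu U v z + meanCurv U z * v z)) := by
  have hW := H.mem_nhds_of_mem_freeBoundary hz
  obtain ⟨L, hL, hvz⟩ := exists_tendsto_fderiv_hasFDerivWithinAt hv H.isOpen_positivitySet
    subset_union_left (Or.inr hz)
  have hgrad : Tendsto (gradient U) (𝓝[positivitySet u] z) (𝓝 (gradient U z)) :=
    (H.continuousAt_gradient hW).mono_left nhdsWithin_le_nhds
  have hcurv : Tendsto (meanCurv U) (𝓝[positivitySet u] z) (𝓝 (meanCurv U z)) :=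
    (H.contDiffOn_meanCurv.continuousOn.continuousAt hW).mono_left nhdsWithin_le_nhds
  have hvlim : Tendsto v (𝓝[positivitySet u] z) (𝓝 (v z)) :=
    hvz.continuousWithinAt.mono_left (nhdsWithin_mono z subset_union_left)
  rw [H.dNu_eq hz hvz, neg_neg]
  refine Tendsto.add ?_ (hcurv.mul hvlim)
  refine ((isBoundedBilinearMap_apply.continuous.tendsto (L, gradient U z)).comp
    (hL.prodMk_nhds hgrad)).congr' ?_
  filter_upwards [self_mem_nhdsWithin] with x hx
  rw [inner_gradient_left, H.gradient_eq hx]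
  rfl

theorem exists_pos_forall_lt_of_eventually (H : SmoothFreeBoundary u U W) (hK : IsCompact K)
    (hK0 : 0 ∉ K) {P : ℝⁿ → Prop}
    (hP : ∀ z ∈ freeBoundary u, z ∈ K → ∀ᶠ x in 𝓝[positivitySet u] z, P x) :
    ∃ s > 0, ∀ x ∈ positivitySet u ∩ K, u x < s → P x := by
  set O : Set ℝⁿ := {z | ∀ᶠ x in 𝓝 z, 0 < u x → P x}
  have hcompact : IsCompact ((closure (positivitySet u) ∩ K) \ O) :=
    (hK.inter_left isClosed_closure).diff isOpen_setOfPred_eventually_nhds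
  have hpos : ∀ x ∈ (closure (positivitySet u) ∩ K) \ O, 0 < u x := by
    rintro x ⟨⟨hx, hxK⟩, hxO⟩
    by_contra hux
    refine hxO (eventually_nhdsWithin_iff.1 (hP x (H.mem_freeBoundary hx hux ?_) hxK))
    rintro rfl
    exact hK0 hxK
  obtain ⟨s, hs, hle⟩ := hcompact.exists_forall_le' H.continuous.continuousOn hpos
  refine ⟨s, hs, fun x hx hxs => ?_⟩
  by_contra hPx
  exact hxs.not_ge (hle x ⟨⟨subset_closure hx.1, hx.2⟩, fun hO => hPx (hO.self_of_nhds hx.1)⟩)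

theorem exists_forall_le_of_isBoundedUnder (H : SmoothFreeBoundary u U W) (hK : IsCompact K)
    (hK0 : 0 ∉ K) {f : ℝⁿ → ℝ} (hf : ∀ x, 0 < u x → ContinuousAt f x)
    (hbdd : ∀ z ∈ freeBoundary u, IsBoundedUnder (· ≤ ·) (𝓝[positivitySet u] z) f) :
    ∃ M, ∀ x ∈ positivitySet u ∩ K, f x ≤ M := by
  have hcompact : IsCompact (closure (positivitySet u) ∩ K) := hK.inter_left isClosed_closure
  have hlocal : ∀ z ∈ closure (positivitySet u) ∩ K,
      IsBoundedUnder (· ≤ ·) (𝓝[positivitySet u] z) f := fun z hz => by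
    by_cases hu : 0 < u z
    · exact ((hf z hu).mono_left nhdsWithin_le_nhds).isBoundedUnder_le
    · refine hbdd z (H.mem_freeBoundary hz.1 hu ?_)
      rintro rfl
      exact hK0 hz.2
  have himage : BddAbove (f '' ((closure (positivitySet u) ∩ K) ∩ positivitySet u)) := by
    refine hcompact.induction_on (p := fun s => BddAbove (f '' (s ∩ positivitySet u)))
      (by simp) (fun s t hst ht => ht.mono (by gcongr)) (fun s t hs ht => ?_) fun z hz => ?_
    · rw [union_inter_distrib_right, image_union]
      exact hs.union ht
    · obtain ⟨M, hM⟩ := hlocal z hz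
      refine ⟨{x | 0 < u x → f x ≤ M},
        mem_nhdsWithin_of_mem_nhds (eventually_nhdsWithin_iff.1 (eventually_map.1 hM)), M, ?_⟩
      rintro _ ⟨x, ⟨hx, hux⟩, rfl⟩
      exact hx hux
  obtain ⟨M, hM⟩ := himage
  exact ⟨M, fun x hx => hM ⟨x, ⟨⟨subset_closure hx.1, hx.2⟩, hx.1⟩, rfl⟩⟩

end SmoothFreeBoundary

section PolarCoordinates

theorem integral_mul_comp_norm {E : Type*} [NormedAddCommGroup E] [NormedSpace ℝ E]
    [FiniteDimensional ℝ E] [MeasurableSpace E] [BorelSpace E] [Nontrivial E]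
    (μ : Measure E) [μ.IsAddHaarMeasure] {w : E → ℝ} (k : ℝ → ℝ)
    (hw : ∀ t : ℝ, 0 < t → ∀ x, x ≠ 0 → w (t • x) = w x) :
    ∫ x, w x * k ‖x‖ ∂μ = (∫ y : sphere (0 : E) 1, w y ∂μ.toSphere) *
      ∫ r in Ioi (0 : ℝ), r ^ (Module.finrank ℝ E - 1) * k r := by
  set d := Module.finrank ℝ E
  calc
    ∫ x, w x * k ‖x‖ ∂μ = ∫ x : ({0}ᶜ : Set E), w x.1 * k ‖x.1‖ ∂(μ.comap (↑)) := by
      rw [integral_subtype_comap (measurableSet_singleton _).compl fun x => w x * k ‖x‖,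
        restrict_compl_singleton]
    _ = ∫ p : sphere (0 : E) 1 × Ioi (0 : ℝ), w p.1 * k p.2
          ∂μ.toSphere.prod (.volumeIoiPow (d - 1)) := by
      rw [← μ.measurePreserving_homeomorphUnitSphereProd.integral_comp
        (Homeomorph.measurableEmbedding _)]
      refine integral_congr_ae (Eventually.of_forall fun x => ?_)
      have hx : (x : E) ≠ 0 := x.2
      simp only [homeomorphUnitSphereProd_apply_snd_coe, homeomorphUnitSphereProd_apply_fst_coe,
        hw _ (inv_pos.2 (norm_pos_iff.2 hx)) _ hx]
    _ = (∫ y : sphere (0 : E) 1, w y ∂μ.toSphere) *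
          ∫ r : Ioi (0 : ℝ), k r ∂.volumeIoiPow (d - 1) :=
      integral_prod_mul (fun y : sphere (0 : E) 1 => w y) fun r : Ioi (0 : ℝ) => k r
    _ = _ := by
      simp only [Measure.volumeIoiPow, ENNReal.ofReal]
      rw [integral_withDensity_eq_integral_smul (measurable_subtype_coe.pow_const _).real_toNNReal,
        integral_subtype_comap measurableSet_Ioi fun r => Real.toNNReal (r ^ (d - 1)) • k r]
      congr 1
      refine setIntegral_congr_fun measurableSet_Ioi fun r (hr : 0 < r) => ?_
      simp only [NNReal.smul_def, Real.coe_toNNReal _ (pow_nonneg hr.le _), smul_eq_mul]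

theorem integral_Ioi_inv_mul_comp_log_div (F : ℝ → ℝ) {L : ℝ} (hL : 0 < L) :
    ∫ r in Ioi (0 : ℝ), r⁻¹ * F (Real.log r / L) = L * ∫ s, F s := by
  have hcancel (s : ℝ) :
      |Real.exp s| • ((Real.exp s)⁻¹ * F (Real.log (Real.exp s) / L)) = F (s / L) := by
    rw [Real.log_exp, abs_of_pos (Real.exp_pos s), smul_eq_mul,
      mul_inv_cancel_left₀ (Real.exp_ne_zero s)]
  rw [← Real.range_exp, ← image_univ, integral_image_eq_integral_abs_deriv_smul MeasurableSet.univ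
    (fun x _ => (Real.hasDerivAt_exp x).hasDerivWithinAt) Real.exp_injective.injOn]
  simp_rw [hcancel]
  rw [setIntegral_univ, Measure.integral_comp_div, abs_of_pos hL, smul_eq_mul]

end PolarCoordinates

section LogBump

/-- The one-dimensional bump, equal to `1` on `[-1, 1]` and to `0` off `[-2, 2]`, that the radial
cutoffs apply to a multiple of `log ‖x‖`. -/
def logBump : ContDiffBump (0 : ℝ) := ⟨1, 2, one_pos, one_lt_two⟩

lemma logBump_eq_one {s : ℝ} (hs : |s| ≤ 1) : logBump s = 1 :=
  logBump.one_of_mem_closedBall (by simpa [logBump] using hs)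

lemma logBump_eq_zero {s : ℝ} (hs : 2 ≤ |s|) : logBump s = 0 :=
  logBump.zero_of_le_dist (by simpa [logBump] using hs)

lemma differentiable_logBump : Differentiable ℝ logBump :=
  (logBump.contDiff (n := 1)).differentiable one_ne_zero

lemma continuous_deriv_logBump : Continuous (deriv logBump) :=
  (logBump.contDiff (n := 1)).continuous_deriv le_rfl

lemma deriv_logBump_eq_zero {s : ℝ} (hs : 2 < |s|) : deriv logBump s = 0 := by
  have hev : (logBump : ℝ → ℝ) =ᶠ[𝓝 s] fun _ => 0 := by
    filter_upwards [continuous_abs.continuousAt.eventually_const_lt hs] with y hy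
    exact logBump_eq_zero hy.le
  rw [hev.deriv_eq, deriv_const]

lemma integral_logBump_mul_deriv : ∫ s, 2 * logBump s * deriv logBump s = 0 := by
  have hcont : Continuous fun s => 2 * logBump s * deriv logBump s :=
    (continuous_const.mul logBump.continuous).mul continuous_deriv_logBump
  have hderiv (s : ℝ) :
      HasDerivAt (fun s => logBump s ^ 2) (2 * logBump s * deriv logBump s) s := by
    simpa using (differentiable_logBump s).hasDerivAt.fun_pow 2
  refine integral_eq_zero_of_hasDerivAt_of_integrable hderiv
    (hcont.integrable_of_hasCompactSupport logBump.hasCompactSupport.deriv.mul_left)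
    ((logBump.continuous.pow 2).integrable_of_hasCompactSupport ?_)
  simp_rw [pow_two]
  exact logBump.hasCompactSupport.mul_left

/-- The terms involving `χ'` in the expansion of `(-aχ + χ'/L)²`, where `χ` is `logBump`. -/
def logBumpError (a L s : ℝ) : ℝ :=
  -2 * a * logBump s * deriv logBump s / L + deriv logBump s ^ 2 / L ^ 2

lemma sq_logBump_add_deriv (a L s : ℝ) :
    (-a * logBump s + deriv logBump s / L) ^ 2 = a ^ 2 * logBump s ^ 2 + logBumpError a L s := by
  rw [logBumpError]
  ring

lemma continuous_logBumpError (a L : ℝ) : Continuous (logBumpError a L) :=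
  (((continuous_const.mul logBump.continuous).mul continuous_deriv_logBump).div_const _).add
    ((continuous_deriv_logBump.pow 2).div_const _)

lemma logBumpError_eq_zero (a L : ℝ) {s : ℝ} (hs : 2 < |s|) : logBumpError a L s = 0 := by
  simp [logBumpError, deriv_logBump_eq_zero hs]

lemma integral_logBumpError (a L : ℝ) :
    ∫ s, logBumpError a L s = (∫ s, deriv logBump s ^ 2) / L ^ 2 := by
  have hcross : Integrable fun s => 2 * logBump s * deriv logBump s :=
    ((continuous_const.mul logBump.continuous).mul
      continuous_deriv_logBump).integrable_of_hasCompactSupport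
      logBump.hasCompactSupport.deriv.mul_left
  have hsq : Integrable fun s => deriv logBump s ^ 2 := by
    refine (continuous_deriv_logBump.pow 2).integrable_of_hasCompactSupport ?_
    simp_rw [pow_two]
    exact logBump.hasCompactSupport.deriv.mul_left
  calc ∫ s, logBumpError a L s
      = ∫ s, (-a / L * (2 * logBump s * deriv logBump s) + 1 / L ^ 2 * deriv logBump s ^ 2) := by
        refine integral_congr_ae (Eventually.of_forall fun s => ?_)
        simp only [logBumpError]
        ring
    _ = (∫ s, deriv logBump s ^ 2) / L ^ 2 := by
        rw [integral_add (hcross.const_mul _) (hsq.const_mul _), integral_const_mul,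
          integral_const_mul, integral_logBump_mul_deriv]
        ring

end LogBump

section LogAnnulus

variable {E : Type*} [NormedAddCommGroup E] {L : ℝ} {x : E}

/-- The closed annulus `e^{-L} ≤ ‖x‖ ≤ e^L`. -/
def logAnnulus (E : Type*) [NormedAddCommGroup E] (L : ℝ) : Set E :=
  {x | Real.exp (-L) ≤ ‖x‖ ∧ ‖x‖ ≤ Real.exp L}

lemma ne_zero_of_mem_logAnnulus (hx : x ∈ logAnnulus E L) : x ≠ 0 :=
  norm_pos_iff.1 ((Real.exp_pos _).trans_le hx.1)

lemma zero_notMem_logAnnulus : (0 : E) ∉ logAnnulus E L :=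
  fun h => ne_zero_of_mem_logAnnulus h rfl

lemma mem_logAnnulus_iff (hx : x ≠ 0) : x ∈ logAnnulus E L ↔ |Real.log ‖x‖| ≤ L := by
  have hpos := norm_pos_iff.2 hx
  rw [abs_le, Real.le_log_iff_exp_le hpos, Real.log_le_iff_le_exp hpos]
  rfl

lemma isCompact_logAnnulus [ProperSpace E] (L : ℝ) : IsCompact (logAnnulus E L) :=
  (isCompact_closedBall (0 : E) (Real.exp L)).of_isClosed_subset
    ((isClosed_le continuous_const continuous_norm).inter
      (isClosed_le continuous_norm continuous_const))
    fun _ hx => mem_closedBall_zero_iff.2 hx.2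

end LogAnnulus

section RadialCutoff

variable {E : Type*} [NormedAddCommGroup E] {a L : ℝ} {x : E}

/-- The radial cutoff `‖x‖^{-a} χ(log ‖x‖ / L)`, where `χ` is `logBump`; the value at the origin is
`0`. -/
def radialCutoff (a L : ℝ) (x : E) : ℝ :=
  ({0}ᶜ : Set E).indicator (fun y => ‖y‖ ^ (-a) * logBump (Real.log ‖y‖ / L)) x

lemma radialCutoff_of_ne_zero (a L : ℝ) (hx : x ≠ 0) :
    radialCutoff a L x = ‖x‖ ^ (-a) * logBump (Real.log ‖x‖ / L) :=
  indicator_of_mem hx _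

lemma radialCutoff_nonneg (a L : ℝ) (x : E) : 0 ≤ radialCutoff a L x :=
  indicator_nonneg (fun _ _ => mul_nonneg (Real.rpow_nonneg (norm_nonneg _) _) logBump.nonneg) x

lemma radialCutoff_eq_zero (a : ℝ) (hL : 0 < L) (hx : x ∉ logAnnulus E (2 * L)) :
    radialCutoff a L x = 0 := by
  by_cases h0 : x = 0
  · exact indicator_of_notMem (by simp [h0]) _
  · rw [mem_logAnnulus_iff h0, not_le] at hx
    rw [radialCutoff_of_ne_zero a L h0, logBump_eq_zero, mul_zero]
    rw [abs_div, abs_of_pos hL, le_div_iff₀ hL]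
    exact hx.le

lemma radialCutoff_of_mem_logAnnulus (a : ℝ) (hL : 0 < L) (hx : x ∈ logAnnulus E L) :
    radialCutoff a L x = ‖x‖ ^ (-a) := by
  have h0 := ne_zero_of_mem_logAnnulus hx
  rw [mem_logAnnulus_iff h0] at hx
  rw [radialCutoff_of_ne_zero a L h0, logBump_eq_one, mul_one]
  rwa [abs_div, abs_of_pos hL, div_le_one hL]

lemma isSymmetricUnder_radialCutoff {n : ℕ} (a L : ℝ)
    (Γ : Subgroup (EuclideanSpace ℝ (Fin n) ≃ₗᵢ[ℝ] EuclideanSpace ℝ (Fin n))) :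
    IsSymmetricUnder Γ (radialCutoff a L) :=
  fun g _ x => by simp [radialCutoff, indicator]

lemma sq_radialCutoff_div_sq_norm (a L : ℝ) (hx : x ≠ 0) :
    radialCutoff a L x ^ 2 / ‖x‖ ^ 2 =
      ‖x‖ ^ (-2 * a - 2) * logBump (Real.log ‖x‖ / L) ^ 2 := by
  have hr := norm_pos_iff.2 hx
  have hpow : (‖x‖ ^ (-a)) ^ 2 = ‖x‖ ^ (-2 * a - 2) * ‖x‖ ^ 2 := by
    rw [← Real.rpow_natCast ‖x‖ 2, ← Real.rpow_add hr, ← Real.rpow_mul_natCast hr.le]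
    congr 1
    push_cast
    ring
  rw [radialCutoff_of_ne_zero a L hx, mul_pow, hpow]
  field_simp

lemma eventuallyEq_radialCutoff (a L : ℝ) (hx : x ≠ 0) :
    (radialCutoff a L : E → ℝ) =ᶠ[𝓝 x] fun y => ‖y‖ ^ (-a) * logBump (Real.log ‖y‖ / L) := by
  filter_upwards [isOpen_compl_singleton.mem_nhds hx] with y hy
  exact radialCutoff_of_ne_zero a L hy

variable [InnerProductSpace ℝ E]

lemma contDiff_radialCutoff [ProperSpace E] (a : ℝ) (hL : 0 < L) :
    ContDiff ℝ 1 (radialCutoff a L : E → ℝ) := by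
  refine contDiff_iff_contDiffAt.2 fun x => ?_
  by_cases hx : x = 0
  · have hnear : (logAnnulus E (2 * L))ᶜ ∈ 𝓝 x :=
      (isCompact_logAnnulus _).isClosed.isOpen_compl.mem_nhds (hx ▸ zero_notMem_logAnnulus)
    refine (contDiffAt_const (c := (0 : ℝ))).congr_of_eventuallyEq ?_
    filter_upwards [hnear] with y hy using radialCutoff_eq_zero a hL hy
  · have hr := (norm_pos_iff.2 hx).ne'
    have hnorm : ContDiffAt ℝ 1 (fun y : E => ‖y‖) x := contDiffAt_norm ℝ hx
    have hbump : ContDiffAt ℝ 1 (fun y : E => logBump (Real.log ‖y‖ / L)) x :=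
      (logBump.contDiff (n := 1)).contDiffAt.comp x ((hnorm.log hr).div_const L)
    exact ((hnorm.rpow_const_of_ne hr).mul hbump).congr_of_eventuallyEq
      (eventuallyEq_radialCutoff a L hx)

lemma hasDerivAt_rpow_mul_logBump (a L : ℝ) {r : ℝ} (hr : r ≠ 0) :
    HasDerivAt (fun r : ℝ => r ^ (-a) * logBump (Real.log r / L))
      (r ^ (-a - 1) * (-a * logBump (Real.log r / L) + deriv logBump (Real.log r / L) / L)) r := by
  have hbump := (differentiable_logBump (Real.log r / L)).hasDerivAt.comp r
    ((Real.hasDerivAt_log hr).div_const L)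
  refine ((Real.hasDerivAt_rpow_const (p := -a) (Or.inl hr)).mul hbump).congr_deriv ?_
  have hpow : r ^ (-a) = r ^ (-a - 1) * r := by
    rw [← Real.rpow_add_one hr]
    congr 1
    ring
  simp only [Function.comp, hpow]
  field_simp

lemma sq_norm_gradient_radialCutoff_le [CompleteSpace E] (a L : ℝ) (hx : x ≠ 0) :
    ‖gradient (radialCutoff a L) x‖ ^ 2 ≤ ‖x‖ ^ (-2 * a - 2) *
      (a ^ 2 * logBump (Real.log ‖x‖ / L) ^ 2 + logBumpError a L (Real.log ‖x‖ / L)) := by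
  have hr := norm_pos_iff.2 hx
  have hnorm : DifferentiableAt ℝ (fun y : E => ‖y‖) x :=
    (contDiffAt_norm ℝ hx (n := 1)).differentiableAt one_ne_zero
  have hfderiv : ‖fderiv ℝ (fun y : E => ‖y‖) x‖ ^ 2 ≤ 1 := by
    have hle := norm_fderiv_le_of_lipschitz ℝ (x₀ := x) (lipschitzWith_one_norm (E := E))
    exact (sq_le_one_iff₀ (norm_nonneg _)).2 (by simpa using hle)
  have hpow : ‖x‖ ^ (-2 * a - 2) = (‖x‖ ^ (-a - 1)) ^ 2 := by
    rw [← Real.rpow_mul_natCast hr.le]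
    congr 1
    push_cast
    ring
  have hchain := ((hasDerivAt_rpow_mul_logBump a L hr.ne').comp_hasFDerivAt x
    hnorm.hasFDerivAt).congr_of_eventuallyEq (eventuallyEq_radialCutoff a L hx)
  rw [norm_gradient_eq_norm_fderiv, hchain.fderiv, norm_smul, mul_pow, Real.norm_eq_abs, sq_abs,
    mul_pow, sq_logBump_add_deriv, ← hpow]
  refine mul_le_of_le_one_right (mul_nonneg (Real.rpow_nonneg hr.le _) ?_) hfderiv
  rw [← sq_logBump_add_deriv]
  positivity

lemma neg_rpow_mul_logBumpError_le [CompleteSpace E] {γ : ℝ} (hγ : a ^ 2 ≤ γ) (L : ℝ)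
    (hx : x ≠ 0) :
    -(‖x‖ ^ (-2 * a - 2) * logBumpError a L (Real.log ‖x‖ / L)) ≤
      γ * radialCutoff a L x ^ 2 / ‖x‖ ^ 2 - ‖gradient (radialCutoff a L) x‖ ^ 2 := by
  have hgrad := sq_norm_gradient_radialCutoff_le a L hx
  have hsq : ‖x‖ ^ (-2 * a - 2) * (a ^ 2 * logBump (Real.log ‖x‖ / L) ^ 2) ≤
      ‖x‖ ^ (-2 * a - 2) * (γ * logBump (Real.log ‖x‖ / L) ^ 2) := by gcongr
  rw [mul_div_assoc, sq_radialCutoff_div_sq_norm a L hx]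
  linarith

end RadialCutoff

section Homogeneous

variable {E : Type*} [NormedAddCommGroup E] [NormedSpace ℝ E] {u : E → ℝ}

lemma exists_lipschitzWith_of_homogeneous (hu : LocallyLipschitz u)
    (hom : ∀ t : ℝ, 0 < t → ∀ x, u (t • x) = t * u x) : ∃ C, LipschitzWith C u := by
  obtain ⟨C, T, hT, hC⟩ := hu 0
  obtain ⟨r, hr, hrT⟩ := Metric.mem_nhds_iff.1 hT
  refine ⟨C, LipschitzWith.of_dist_le_mul fun x y => ?_⟩
  set t := r / (1 + ‖x‖ + ‖y‖)
  have hden : 0 < 1 + ‖x‖ + ‖y‖ := by positivity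
  have ht : 0 < t := by positivity
  have hmem (z : E) (hz : ‖z‖ < 1 + ‖x‖ + ‖y‖) : t • z ∈ T := by
    apply hrT
    rw [mem_ball_zero_iff, norm_smul, Real.norm_eq_abs, abs_of_pos ht, div_mul_eq_mul_div,
      div_lt_iff₀ hden]
    exact mul_lt_mul_of_pos_left hz hr
  have hdist := hC.dist_le_mul _ (hmem x (by linarith [norm_nonneg y])) _
    (hmem y (by linarith [norm_nonneg x]))
  rw [hom t ht, hom t ht, dist_smul₀, Real.dist_eq, ← mul_sub, abs_mul, abs_of_pos ht,
    Real.norm_eq_abs, abs_of_pos ht, ← Real.dist_eq, mul_left_comm] at hdist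
  exact le_of_mul_le_mul_left hdist ht

lemma eq_zero_of_homogeneous (hom : ∀ t : ℝ, 0 < t → ∀ x, u (t • x) = t * u x) : u 0 = 0 := by
  have htwo := hom 2 two_pos 0
  rw [smul_zero] at htwo
  linarith

lemma sq_mul_rpow_norm_smul {v : E → ℝ} {μ : ℝ}
    (hom : ∀ t : ℝ, 0 < t → ∀ x, x ≠ 0 → v (t • x) = t ^ (-μ) * v x)
    {t : ℝ} (ht : 0 < t) {x : E} (hx : x ≠ 0) :
    v (t • x) ^ 2 * ‖t • x‖ ^ (2 * μ) = v x ^ 2 * ‖x‖ ^ (2 * μ) := by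
  have hcancel : (t ^ (-μ)) ^ 2 * t ^ (2 * μ) = 1 := by
    rw [← Real.rpow_mul_natCast ht.le, ← Real.rpow_add ht]
    convert Real.rpow_zero t using 2
    push_cast
    ring
  rw [hom t ht x hx, norm_smul, Real.norm_eq_abs, abs_of_pos ht,
    Real.mul_rpow ht.le (norm_nonneg _)]
  linear_combination (v x ^ 2 * ‖x‖ ^ (2 * μ)) * hcancel

end Homogeneous

section HardyEstimate

open Module (finrank)

variable {E : Type*} [NormedAddCommGroup E] [InnerProductSpace ℝ E] [FiniteDimensional ℝ E]
  [MeasurableSpace E] [BorelSpace E] {D K : Set E} {v : E → ℝ} {a μ γ L M : ℝ}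

lemma integral_mul_logBumpError [Nontrivial E] {w : E → ℝ} (a : ℝ) (hL : 0 < L)
    (hw : ∀ t : ℝ, 0 < t → ∀ x, x ≠ 0 → w (t • x) = w x) :
    ∫ x, w x * (‖x‖ ^ (-(finrank ℝ E : ℝ)) * logBumpError a L (Real.log ‖x‖ / L)) =
      (∫ y : sphere (0 : E) 1, w y ∂(volume : Measure E).toSphere) *
        (∫ s, deriv logBump s ^ 2) / L := by
  rw [integral_mul_comp_norm volume
    (fun r => r ^ (-(finrank ℝ E : ℝ)) * logBumpError a L (Real.log r / L)) hw]
  have hradial : ∫ r in Ioi (0 : ℝ), r ^ (finrank ℝ E - 1) *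
      (r ^ (-(finrank ℝ E : ℝ)) * logBumpError a L (Real.log r / L)) =
      ∫ r in Ioi (0 : ℝ), r⁻¹ * logBumpError a L (Real.log r / L) := by
    refine setIntegral_congr_fun measurableSet_Ioi fun r (hr : 0 < r) => ?_
    have hpow : r ^ (finrank ℝ E - 1) * r ^ (-(finrank ℝ E : ℝ)) = r⁻¹ := by
      rw [← Real.rpow_natCast, ← Real.rpow_add hr, Nat.cast_sub Module.finrank_pos,
        ← Real.rpow_neg_one]
      congr 1
      push_cast
      ring
    simp only [← mul_assoc, hpow]
  rw [hradial, integral_Ioi_inv_mul_comp_log_div _ hL, integral_logBumpError]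
  field_simp

lemma integrableOn_sq_mul (hD : IsOpen D) (hK : IsCompact K) (hv : ContinuousOn v D)
    (hM : ∀ x ∈ D ∩ K, |v x| ≤ M) {q : E → ℝ} (hq : ContinuousOn q K) :
    IntegrableOn (fun x => v x ^ 2 * q x) (D ∩ K) := by
  obtain ⟨Q, hQ⟩ := hK.exists_bound_of_continuousOn hq
  have hmeas : MeasurableSet (D ∩ K) := hD.measurableSet.inter hK.measurableSet
  refine integrableOn_of_abs_le hmeas (measure_inter_compact_ne_top hK)
    ((((hv.mono inter_subset_left).pow 2).mul
      (hq.mono inter_subset_right)).aestronglyMeasurable hmeas) (C := M ^ 2 * Q) fun x hx => ?_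
  rw [abs_mul, abs_pow]
  gcongr
  exacts [hM x hx, hQ x hx.2]

lemma integrableOn_sq_mul_radialCutoff (hD : IsOpen D) (hv : ContinuousOn v D)
    (hM : ∀ x ∈ D ∩ logAnnulus E (2 * L), |v x| ≤ M) (a γ : ℝ) (hL : 0 < L) :
    IntegrableOn (fun x => v x ^ 2 * (γ * radialCutoff a L x ^ 2 / ‖x‖ ^ 2 -
      ‖gradient (radialCutoff a L) x‖ ^ 2)) (D ∩ logAnnulus E (2 * L)) := by
  have hsmooth := contDiff_radialCutoff (E := E) a hL
  have hgrad : Continuous fun x : E => ‖gradient (radialCutoff a L) x‖ := by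
    simp_rw [norm_gradient_eq_norm_fderiv]
    exact (hsmooth.continuous_fderiv one_ne_zero).norm
  exact integrableOn_sq_mul hD (isCompact_logAnnulus _) hv hM
    (((continuous_const.mul (hsmooth.continuous.pow 2)).continuousOn.div
      (continuous_norm.pow 2).continuousOn fun x hx =>
        pow_ne_zero 2 (norm_ne_zero_iff.2 (ne_zero_of_mem_logAnnulus hx))).sub
      (hgrad.pow 2).continuousOn)

lemma integrableOn_sq_mul_logBumpError (hD : IsOpen D) (hv : ContinuousOn v D)
    (hM : ∀ x ∈ D ∩ logAnnulus E (2 * L), |v x| ≤ M) (a p : ℝ) :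
    IntegrableOn (fun x => v x ^ 2 * (‖x‖ ^ p * logBumpError a L (Real.log ‖x‖ / L)))
      (D ∩ logAnnulus E (2 * L)) := by
  have hne (x : E) (hx : x ∈ logAnnulus E (2 * L)) : ‖x‖ ≠ 0 :=
    norm_ne_zero_iff.2 (ne_zero_of_mem_logAnnulus hx)
  have hnorm : ContinuousOn (fun x : E => ‖x‖) (logAnnulus E (2 * L)) :=
    continuous_norm.continuousOn
  exact integrableOn_sq_mul hD (isCompact_logAnnulus _) hv hM
    ((hnorm.rpow_const fun x hx => Or.inl (hne x hx)).mul
      ((continuous_logBumpError a L).comp_continuousOn ((hnorm.log hne).div_const L)))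

lemma setIntegral_sq_mul_logBumpError [Nontrivial E] (hD : IsOpen D) (h0 : (0 : E) ∉ D)
    (hcone : ∀ t : ℝ, 0 < t → ∀ x, t • x ∈ D ↔ x ∈ D)
    (hom : ∀ t : ℝ, 0 < t → ∀ x, x ≠ 0 → v (t • x) = t ^ (-μ) * v x) (a : ℝ) (hL : 0 < L) :
    ∫ x in D ∩ logAnnulus E (2 * L), v x ^ 2 *
        (‖x‖ ^ (2 * μ - finrank ℝ E) * logBumpError a L (Real.log ‖x‖ / L)) =
      (∫ y : sphere (0 : E) 1, D.indicator (fun x => v x ^ 2 * ‖x‖ ^ (2 * μ)) y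
        ∂(volume : Measure E).toSphere) * (∫ s, deriv logBump s ^ 2) / L := by
  have hw : ∀ t : ℝ, 0 < t → ∀ x, x ≠ 0 →
      D.indicator (fun x => v x ^ 2 * ‖x‖ ^ (2 * μ)) (t • x) =
        D.indicator (fun x => v x ^ 2 * ‖x‖ ^ (2 * μ)) x := fun t ht x hx => by
    by_cases hxD : x ∈ D
    · rw [indicator_of_mem ((hcone t ht x).2 hxD), indicator_of_mem hxD,
        sq_mul_rpow_norm_smul hom ht hx]
    · rw [indicator_of_notMem (mt (hcone t ht x).1 hxD), indicator_of_notMem hxD]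
  rw [← integral_mul_logBumpError a hL hw, eq_comm,
    ← setIntegral_eq_integral_of_forall_compl_eq_zero (s := D ∩ logAnnulus E (2 * L))]
  · refine setIntegral_congr_fun
      (hD.measurableSet.inter (isCompact_logAnnulus _).measurableSet) fun x hx => ?_
    simp only [indicator_of_mem hx.1, sub_eq_add_neg,
      Real.rpow_add (norm_pos_iff.2 (ne_zero_of_mem_logAnnulus hx.2)), mul_assoc]
  · intro x hx
    by_cases hxD : x ∈ D
    · have hx0 : x ≠ 0 := fun h => h0 (h ▸ hxD)
      have hfar : 2 < |Real.log ‖x‖ / L| := by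
        rw [abs_div, abs_of_pos hL, lt_div_iff₀ hL, ← not_le, ← mem_logAnnulus_iff hx0]
        exact fun h => hx ⟨hxD, h⟩
      rw [logBumpError_eq_zero a L hfar, mul_zero, mul_zero]
    · rw [indicator_of_notMem hxD, zero_mul]

/- The exponent `a = n/2 - 1 - μ` makes `v² |∇ζ|²` scale like `‖x‖^{-n}`, so the integral is `∫ ds`
over `s = log ‖x‖ / L`; there the first-order error `2χχ' = (χ²)'` integrates to zero. -/
theorem exists_neg_div_le_setIntegral_radialCutoff [Nontrivial E] (hD : IsOpen D)
    (h0 : (0 : E) ∉ D) (hcone : ∀ t : ℝ, 0 < t → ∀ x, t • x ∈ D ↔ x ∈ D) (hv : ContinuousOn v D)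
    (hom : ∀ t : ℝ, 0 < t → ∀ x, x ≠ 0 → v (t • x) = t ^ (-μ) * v x)
    (hb : ∀ L, ∃ M, ∀ x ∈ D ∩ logAnnulus E L, |v x| ≤ M)
    (ha : a = (finrank ℝ E : ℝ) / 2 - 1 - μ) (hγ : a ^ 2 ≤ γ) :
    ∃ B : ℝ, ∀ L : ℝ, 0 < L → -(B / L) ≤ ∫ x in D ∩ logAnnulus E (2 * L),
      v x ^ 2 * (γ * radialCutoff a L x ^ 2 / ‖x‖ ^ 2 - ‖gradient (radialCutoff a L) x‖ ^ 2) := by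
  refine ⟨(∫ y : sphere (0 : E) 1, D.indicator (fun x => v x ^ 2 * ‖x‖ ^ (2 * μ)) y
    ∂(volume : Measure E).toSphere) * ∫ s, deriv logBump s ^ 2, fun L hL => ?_⟩
  obtain ⟨M, hM⟩ := hb (2 * L)
  rw [← setIntegral_sq_mul_logBumpError hD h0 hcone hom a hL, ← integral_neg]
  refine setIntegral_mono_on (integrableOn_sq_mul_logBumpError hD hv hM a _).neg
    (integrableOn_sq_mul_radialCutoff hD hv hM a γ hL)
    (hD.measurableSet.inter (isCompact_logAnnulus _).measurableSet) fun x hx => ?_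
  have hexp : 2 * μ - finrank ℝ E = -2 * a - 2 := by
    rw [ha]
    ring
  rw [hexp, ← mul_neg]
  gcongr
  exact neg_rpow_mul_logBumpError_le hγ L (ne_zero_of_mem_logAnnulus hx.2)

end HardyEstimate

section Subsolution

/-- A one-phase free boundary cone: a locally Lipschitz `1`-homogeneous function, harmonic where it
is positive, with smooth free boundary away from the origin. -/
structure OnePhaseCone {n : ℕ} (u U : EuclideanSpace ℝ (Fin n) → ℝ)
    (W : Set (EuclideanSpace ℝ (Fin n))) : Prop extends SmoothFreeBoundary u U W where
  locallyLipschitz : LocallyLipschitz u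
  map_smul : ∀ t : ℝ, 0 < t → ∀ x, u (t • x) = t * u x
  lap_eq_zero : ∀ x ∈ positivitySet u, lap u x = 0

/-- A nonnegative `Γ`-symmetric function on `{u > 0}`, homogeneous of degree `-μ` and `C¹` up to the
free boundary: the direction of the second variation, without the differential inequalities, which
are the subject of `SubsolutionDefect`. -/
structure HomogeneousWeight {n : ℕ}
    (Γ : Subgroup (EuclideanSpace ℝ (Fin n) ≃ₗᵢ[ℝ] EuclideanSpace ℝ (Fin n)))
    (u v : EuclideanSpace ℝ (Fin n) → ℝ) (μ : ℝ) : Prop where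
  isSymmetricUnder : IsSymmetricUnder Γ v
  map_smul : ∀ t : ℝ, 0 < t → ∀ x, x ≠ 0 → v (t • x) = t ^ (-μ) * v x
  nonneg : ∀ x ∈ positivitySet u, 0 ≤ v x
  contDiffOn_two : ContDiffOn ℝ 2 v (positivitySet u)
  contDiffOn_one : ContDiffOn ℝ 1 v (positivitySet u ∪ freeBoundary u)

/-- `P` and `b` are lower bounds for the defects `Δv - γ v / |x|²` in `{u > 0}` and `H v - ∂_ν v` on
the free boundary. The latter is expressed through interior points, where `⟪∇v, ∇u⟫` tends to
`-∂_ν v`. -/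
structure SubsolutionDefect {n : ℕ} (u U v : EuclideanSpace ℝ (Fin n) → ℝ) (γ : ℝ)
    (P b : EuclideanSpace ℝ (Fin n) → ℝ) : Prop where
  measurable_interior : Measurable P
  measurable_boundary : Measurable b
  exists_abs_le : ∃ M, ∀ x, |P x| ≤ M ∧ |b x| ≤ M
  add_le_lap : ∀ x ∈ positivitySet u, γ * v x / ‖x‖ ^ 2 + P x ≤ lap v x
  eventually_sub_le : ∀ z ∈ freeBoundary u, ∀ η > 0, ∀ᶠ x in 𝓝[positivitySet u] z,
    b x - meanCurv U x * v x - η ≤ ⟪gradient v x, gradient u x⟫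

namespace SmoothFreeBoundary

variable {n : ℕ} {u U v : EuclideanSpace ℝ (Fin n) → ℝ} {W K : Set (EuclideanSpace ℝ (Fin n))}

local notation "ℝⁿ" => EuclideanSpace ℝ (Fin n)

lemma eventually_forall_norm_le_of_tendsto {F : Type*} [NormedAddCommGroup F] {f : ℝⁿ → F}
    (H : SmoothFreeBoundary u U W) (hK : IsCompact K) (hK0 : 0 ∉ K)
    (hf : ∀ x, 0 < u x → ContinuousAt f x)
    (hlim : ∀ z ∈ freeBoundary u, ∃ l, Tendsto f (𝓝[positivitySet u] z) (𝓝 l)) :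
    ∀ᶠ M in atTop, ∀ x ∈ positivitySet u ∩ K, ‖f x‖ ≤ M := by
  obtain ⟨M, hM⟩ := H.exists_forall_le_of_isBoundedUnder hK hK0 (fun x hx => (hf x hx).norm)
    fun z hz => (hlim z hz).choose_spec.norm.isBoundedUnder_le
  exact (eventually_ge_atTop M).mono fun N hN x hx => (hM x hx).trans hN

lemma eventually_forall_norm_le_of_continuousOn {F : Type*} [NormedAddCommGroup F] {f : ℝⁿ → F}
    (H : SmoothFreeBoundary u U W) (hK : IsCompact K) (hK0 : 0 ∉ K) (hf : ContinuousOn f W) :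
    ∀ᶠ M in atTop, ∀ x ∈ positivitySet u ∩ K, ‖f x‖ ≤ M :=
  H.eventually_forall_norm_le_of_tendsto hK hK0
    (fun _ hx => hf.continuousAt (H.isOpen.mem_nhds (H.mem_of_pos hx)))
    fun z hz => ⟨f z, (hf.continuousAt (H.mem_nhds_of_mem_freeBoundary hz)).mono_left
      nhdsWithin_le_nhds⟩

lemma eventually_forall_abs_le (H : SmoothFreeBoundary u U W) (hK : IsCompact K) (hK0 : 0 ∉ K)
    (hv : ContDiffOn ℝ 1 v (positivitySet u ∪ freeBoundary u)) :
    ∀ᶠ M in atTop, ∀ x ∈ positivitySet u ∩ K, |v x| ≤ M :=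
  H.eventually_forall_norm_le_of_tendsto hK hK0
    (fun _ hx => (hv.continuousOn.mono subset_union_left).continuousAt
      (H.isOpen_positivitySet.mem_nhds hx))
    fun z hz => ⟨v z, (hv.continuousOn z (Or.inr hz)).mono_left
      (nhdsWithin_mono z subset_union_left)⟩

lemma eventually_forall_norm_gradient_le (H : SmoothFreeBoundary u U W) (hK : IsCompact K)
    (hK0 : 0 ∉ K) (hv : ContDiffOn ℝ 1 v (positivitySet u ∪ freeBoundary u)) :
    ∀ᶠ M in atTop, ∀ x ∈ positivitySet u ∩ K, ‖gradient v x‖ ≤ M := by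
  have hcont := (hv.mono subset_union_left).continuousOn_fderiv_of_isOpen
    H.isOpen_positivitySet le_rfl
  simp_rw [norm_gradient_eq_norm_fderiv]
  refine H.eventually_forall_norm_le_of_tendsto hK hK0
    (fun _ hx => hcont.continuousAt (H.isOpen_positivitySet.mem_nhds hx)) fun z hz => ?_
  obtain ⟨L, hL, -⟩ := exists_tendsto_fderiv_hasFDerivWithinAt hv H.isOpen_positivitySet
    subset_union_left (Or.inr hz)
  exact ⟨L, hL⟩

end SmoothFreeBoundary

/-- The mean curvature `H`, cut off to a compact annulus so as to be bounded on all of `{u > 0}`.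
It agrees with `H` on the support of `radialCutoff a L`. -/
def cutoffMeanCurv {n : ℕ} (U : EuclideanSpace ℝ (Fin n) → ℝ) (L : ℝ)
    (x : EuclideanSpace ℝ (Fin n)) : ℝ :=
  radialCutoff 0 (2 * L) x * meanCurv U x

section CutoffMeanCurv

variable {n : ℕ} {u U : EuclideanSpace ℝ (Fin n) → ℝ} {W : Set (EuclideanSpace ℝ (Fin n))}
  {L : ℝ} {x : EuclideanSpace ℝ (Fin n)}

lemma cutoffMeanCurv_of_mem_logAnnulus (hL : 0 < L)
    (hx : x ∈ logAnnulus (EuclideanSpace ℝ (Fin n)) (2 * L)) :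
    cutoffMeanCurv U L x = meanCurv U x := by
  rw [cutoffMeanCurv, radialCutoff_of_mem_logAnnulus 0 (by positivity) hx, neg_zero,
    Real.rpow_zero, one_mul]

lemma cutoffMeanCurv_eq_zero (hL : 0 < L)
    (hx : x ∉ logAnnulus (EuclideanSpace ℝ (Fin n)) (2 * (2 * L))) :
    cutoffMeanCurv U L x = 0 := by
  rw [cutoffMeanCurv, radialCutoff_eq_zero 0 (by positivity) hx, zero_mul]

lemma gradient_cutoffMeanCurv_eq_zero (hL : 0 < L)
    (hx : x ∉ logAnnulus (EuclideanSpace ℝ (Fin n)) (2 * (2 * L))) :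
    gradient (cutoffMeanCurv U L) x = 0 := by
  have hzero : cutoffMeanCurv U L =ᶠ[𝓝 x] fun _ => 0 := by
    filter_upwards [(isCompact_logAnnulus _).isClosed.isOpen_compl.mem_nhds hx] with y hy
    exact cutoffMeanCurv_eq_zero hL hy
  rw [hzero.gradient_eq, gradient_fun_const]

namespace SmoothFreeBoundary

lemma contDiffOn_cutoffMeanCurv (H : SmoothFreeBoundary u U W) (hL : 0 < L) :
    ContDiffOn ℝ 1 (cutoffMeanCurv U L) W :=
  (contDiff_radialCutoff 0 (by positivity)).contDiffOn.mul
    (H.contDiffOn_meanCurv.of_le (by exact_mod_cast le_top))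

lemma eventually_forall_abs_cutoffMeanCurv_le (H : SmoothFreeBoundary u U W) (hL : 0 < L) :
    ∀ᶠ M in atTop, ∀ x ∈ positivitySet u, |cutoffMeanCurv U L x| ≤ M := by
  filter_upwards [H.eventually_forall_norm_le_of_continuousOn (isCompact_logAnnulus _)
    zero_notMem_logAnnulus (H.contDiffOn_cutoffMeanCurv hL).continuousOn, eventually_ge_atTop 0]
    with M hM hM0 x hx
  by_cases hK : x ∈ logAnnulus _ (2 * (2 * L))
  · exact hM x ⟨hx, hK⟩
  · rwa [cutoffMeanCurv_eq_zero hL hK, abs_zero]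

lemma eventually_forall_norm_gradient_cutoffMeanCurv_le (H : SmoothFreeBoundary u U W)
    (hL : 0 < L) :
    ∀ᶠ M in atTop, ∀ x ∈ positivitySet u, ‖gradient (cutoffMeanCurv U L) x‖ ≤ M := by
  filter_upwards [H.eventually_forall_norm_le_of_continuousOn (isCompact_logAnnulus _)
    zero_notMem_logAnnulus
    ((H.contDiffOn_cutoffMeanCurv hL).continuousOn_fderiv_of_isOpen H.isOpen le_rfl),
    eventually_ge_atTop 0] with M hM hM0 x hx
  by_cases hK : x ∈ logAnnulus _ (2 * (2 * L))
  · exact (norm_gradient_eq_norm_fderiv _ x).trans_le (hM x ⟨hx, hK⟩)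
  · rwa [gradient_cutoffMeanCurv_eq_zero hL hK, norm_zero]

end SmoothFreeBoundary

end CutoffMeanCurv

namespace SubsolutionDefect

variable {n : ℕ} {Γ : Subgroup (EuclideanSpace ℝ (Fin n) ≃ₗᵢ[ℝ] EuclideanSpace ℝ (Fin n))}
  {u U v P b : EuclideanSpace ℝ (Fin n) → ℝ} {W : Set (EuclideanSpace ℝ (Fin n))}
  {C : NNReal} {a L γ μ η : ℝ}

local notation "ℝⁿ" => EuclideanSpace ℝ (Fin n)

lemma continuousOn_div_sq_norm (H : SmoothFreeBoundary u U W)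
    (hv : HomogeneousWeight Γ u v μ) (γ : ℝ) :
    ContinuousOn (fun x => γ * v x / ‖x‖ ^ 2) (positivitySet u ∪ freeBoundary u) := by
  refine (continuousOn_const.mul hv.contDiffOn_one.continuousOn).div
    (continuous_norm.pow 2).continuousOn fun x hx => pow_ne_zero 2 (norm_ne_zero_iff.2 ?_)
  exact hx.elim H.ne_zero_of_pos fun h => h.2

lemma eventually_forall_abs_div_sq_norm_add_le (hPb : SubsolutionDefect u U v γ P b)
    (H : SmoothFreeBoundary u U W) (hv : HomogeneousWeight Γ u v μ) (L : ℝ) :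
    ∀ᶠ M in atTop, ∀ x ∈ positivitySet u ∩ logAnnulus ℝⁿ L,
      |γ * v x / ‖x‖ ^ 2 + P x| ≤ M := by
  have hcont := continuousOn_div_sq_norm H hv γ
  obtain ⟨N, hN⟩ := (H.eventually_forall_norm_le_of_tendsto (isCompact_logAnnulus L)
    zero_notMem_logAnnulus
    (fun _ hx => (hcont.mono subset_union_left).continuousAt (H.isOpen_positivitySet.mem_nhds hx))
    fun z hz => ⟨_, (hcont z (Or.inr hz)).mono_left (nhdsWithin_mono z subset_union_left)⟩).exists
  obtain ⟨M, hM⟩ := hPb.exists_abs_le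
  filter_upwards [eventually_ge_atTop (N + M)] with R hR x hx
  exact (abs_add_le _ _).trans ((add_le_add (hN x hx) (hM x).1).trans hR)

lemma aestronglyMeasurable_div_sq_norm_add (hPb : SubsolutionDefect u U v γ P b)
    (H : SmoothFreeBoundary u U W) (hv : HomogeneousWeight Γ u v μ) {K : Set ℝⁿ}
    (hK : MeasurableSet K) : AEStronglyMeasurable (fun x => γ * v x / ‖x‖ ^ 2 + P x)
      (volume.restrict (positivitySet u ∩ K)) :=
  (((continuousOn_div_sq_norm H hv γ).mono
    (inter_subset_left.trans subset_union_left)).aestronglyMeasurable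
      (H.isOpen_positivitySet.measurableSet.inter hK)).add
    hPb.measurable_interior.aestronglyMeasurable

lemma eventually_secondVariationData (hPb : SubsolutionDefect u U v γ P b)
    (H : OnePhaseCone u U W) (hC : LipschitzWith C u) (hv : HomogeneousWeight Γ u v μ) (a : ℝ)
    (hL : 0 < L) :
    ∀ᶠ M in atTop, SecondVariationData u v (radialCutoff a L) (cutoffMeanCurv U L)
      (fun x => γ * v x / ‖x‖ ^ 2 + P x) b (logAnnulus ℝⁿ (2 * L)) C M := by
  have hK := isCompact_logAnnulus (E := ℝⁿ) (2 * L)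
  have hK0 := zero_notMem_logAnnulus (E := ℝⁿ) (L := 2 * L)
  have hζ := contDiff_radialCutoff (E := ℝⁿ) a hL
  obtain ⟨N, hN⟩ := hPb.exists_abs_le
  filter_upwards [H.eventually_forall_abs_cutoffMeanCurv_le hL,
    H.eventually_forall_norm_gradient_cutoffMeanCurv_le hL,
    H.eventually_forall_norm_le_of_continuousOn hK hK0 hζ.continuous.continuousOn,
    H.eventually_forall_norm_gradient_le hK hK0 hζ.contDiffOn,
    H.eventually_forall_abs_le hK hK0 hv.contDiffOn_one,
    H.eventually_forall_norm_gradient_le hK hK0 hv.contDiffOn_one,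
    hPb.eventually_forall_abs_div_sq_norm_add_le H.toSmoothFreeBoundary hv (2 * L),
    eventually_ge_atTop 1, eventually_ge_atTop N, eventually_ge_atTop (C : ℝ)]
    with M hh hdh hζM hdζ hvM hdv hG hone hNM hCM
  exact
    { lipschitz_u := hC
      u_nonneg := H.nonneg
      contDiffOn_u := H.contDiffOn_two
      lap_u := H.lap_eq_zero
      contDiffOn_v := hv.contDiffOn_two
      v_nonneg := hv.nonneg
      isCompact := hK
      differentiable_ζ := hζ.differentiable one_ne_zero
      ζ_nonneg := radialCutoff_nonneg a L
      ζ_eq_zero := fun _ => radialCutoff_eq_zero a hL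
      differentiableAt_h := fun x hx => ((H.contDiffOn_cutoffMeanCurv hL).differentiableOn
        one_ne_zero).differentiableAt (H.isOpen.mem_nhds (H.mem_of_pos hx))
      one_le := hone
      abs_h_le := hh
      norm_gradient_h_le := hdh
      ζ_le := fun x hx => (le_abs_self _).trans (hζM x hx)
      norm_gradient_ζ_le := hdζ
      v_le := fun x hx => (le_abs_self _).trans (hvM x hx)
      norm_gradient_v_le := hdv
      norm_gradient_u_le := fun x _ => (norm_gradient_le_of_lipschitzWith hC x).trans hCM
      abs_G_le := hG
      abs_b_le := fun x _ => (hN x).2.trans hNM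
      aestronglyMeasurable_G :=
        hPb.aestronglyMeasurable_div_sq_norm_add H.toSmoothFreeBoundary hv hK.measurableSet
      aestronglyMeasurable_b := hPb.measurable_boundary.aestronglyMeasurable
      le_lap := fun x hx => hPb.add_le_lap x hx.1 }

lemma exists_boundaryExpansion (hPb : SubsolutionDefect u U v γ P b)
    (H : SmoothFreeBoundary u U W) (hL : 0 < L) (hη : 0 < η) :
    ∃ s > 0, BoundaryExpansion u v (cutoffMeanCurv U L) b (logAnnulus ℝⁿ (2 * L)) η s := by
  obtain ⟨s, hs, hexp⟩ := H.exists_pos_forall_lt_of_eventually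
    (isCompact_logAnnulus (2 * L)) zero_notMem_logAnnulus fun z hz _ =>
      (H.eventually_abs_gradientDefect_le hz hη).and (hPb.eventually_sub_le z hz η hη)
  refine ⟨s, hs, fun x hx hux => ?_⟩
  rw [cutoffMeanCurv_of_mem_logAnnulus hL hx.2]
  exact hexp x hx hux

lemma integrableOn_interior (hPb : SubsolutionDefect u U v γ P b)
    (H : SmoothFreeBoundary u U W) (hv : HomogeneousWeight Γ u v μ) (a : ℝ) (hL : 0 < L) :
    IntegrableOn (fun x => P x * radialCutoff a L x ^ 2 * v x)
      (positivitySet u ∩ logAnnulus ℝⁿ (2 * L)) := by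
  have hK := isCompact_logAnnulus (E := ℝⁿ) (2 * L)
  have hζ := (contDiff_radialCutoff (E := ℝⁿ) a hL).continuous
  have hmeas := H.isOpen_positivitySet.measurableSet.inter hK.measurableSet
  obtain ⟨M, hM⟩ := hPb.exists_abs_le
  obtain ⟨N, hN⟩ := hK.exists_bound_of_continuousOn hζ.continuousOn
  obtain ⟨R, hR⟩ := (H.eventually_forall_abs_le hK zero_notMem_logAnnulus
    hv.contDiffOn_one).exists
  refine integrableOn_of_abs_le hmeas (measure_inter_compact_ne_top hK)
    ((hPb.measurable_interior.aestronglyMeasurable.mul (hζ.pow 2).aestronglyMeasurable).mul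
      ((hv.contDiffOn_two.continuousOn.mono inter_subset_left).aestronglyMeasurable hmeas))
    (C := M * N ^ 2 * R) fun x hx => ?_
  rw [abs_mul, abs_mul, abs_pow]
  have hM0 := (abs_nonneg _).trans (hM x).1
  gcongr
  exacts [(hM x).1, hN x hx.2, hR x hx]

lemma setIntegral_quadraticForm (hPb : SubsolutionDefect u U v γ P b)
    (H : SmoothFreeBoundary u U W) (hv : HomogeneousWeight Γ u v μ) (a : ℝ) (hL : 0 < L) :
    ∫ x in positivitySet u ∩ logAnnulus ℝⁿ (2 * L),
        ((γ * v x / ‖x‖ ^ 2 + P x) * radialCutoff a L x ^ 2 * v x -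
          v x ^ 2 * ‖gradient (radialCutoff a L) x‖ ^ 2) =
      (∫ x in positivitySet u ∩ logAnnulus ℝⁿ (2 * L),
        v x ^ 2 * (γ * radialCutoff a L x ^ 2 / ‖x‖ ^ 2 - ‖gradient (radialCutoff a L) x‖ ^ 2)) +
      ∫ x in positivitySet u ∩ logAnnulus ℝⁿ (2 * L), P x * radialCutoff a L x ^ 2 * v x := by
  obtain ⟨R, hR⟩ := (H.eventually_forall_abs_le (isCompact_logAnnulus (2 * L))
    zero_notMem_logAnnulus hv.contDiffOn_one).exists
  rw [← integral_add (integrableOn_sq_mul_radialCutoff H.isOpen_positivitySet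
    hv.contDiffOn_two.continuousOn hR a γ hL) (hPb.integrableOn_interior H hv a hL)]
  congr 1 with x
  ring

end SubsolutionDefect

/-- The defects `P` and `b` tested with the cutoff `ζ = radialCutoff a L`. The strip that the
perturbation `ε ζ v` removes from `{u > 0}` has width about `ε ζ v`, so its integral divided by `ε`
stands for `∫ ζ² v b` over the free boundary. -/
def totalDefect {n : ℕ} (u v P b : EuclideanSpace ℝ (Fin n) → ℝ) (a L ε : ℝ) : ℝ :=
  (∫ x in positivitySet u ∩ logAnnulus _ (2 * L), P x * radialCutoff a L x ^ 2 * v x) +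
    ε⁻¹ * (∫ x in positivitySet u ∩ logAnnulus _ (2 * L),
      (lostStrip u (perturbation (radialCutoff a L) v ε)).indicator
        (fun x => radialCutoff a L x * b x) x)

theorem IsSymMinimizer.exists_eventually_totalDefect_le {n : ℕ}
    [Nontrivial (EuclideanSpace ℝ (Fin n))]
    {Γ : Subgroup (EuclideanSpace ℝ (Fin n) ≃ₗᵢ[ℝ] EuclideanSpace ℝ (Fin n))}
    {u U v : EuclideanSpace ℝ (Fin n) → ℝ} {W : Set (EuclideanSpace ℝ (Fin n))} {a γ μ : ℝ}
    (hmin : IsSymMinimizer Γ u) (H : OnePhaseCone u U W) (hv : HomogeneousWeight Γ u v μ)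
    (ha : a = (n : ℝ) / 2 - 1 - μ) (hγ : a ^ 2 ≤ γ) :
    ∃ B : ℝ, ∀ P b, SubsolutionDefect u U v γ P b → ∀ L > 0, ∀ θ > B / L,
      ∀ᶠ ε in 𝓝[>] 0, totalDefect u v P b a L ε ≤ θ := by
  obtain ⟨C, hC⟩ := exists_lipschitzWith_of_homogeneous H.locallyLipschitz H.map_smul
  obtain ⟨B, hB⟩ := exists_neg_div_le_setIntegral_radialCutoff H.isOpen_positivitySet
    (fun h => H.ne_zero_of_pos h rfl) (fun t ht x => by simp [H.map_smul t ht, ht])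
    hv.contDiffOn_two.continuousOn hv.map_smul
    (fun L => (H.eventually_forall_abs_le (isCompact_logAnnulus L) zero_notMem_logAnnulus
      hv.contDiffOn_one).exists)
    (by rwa [finrank_euclideanSpace_fin]) hγ
  refine ⟨B, fun P b hPb L hL θ hθ => ?_⟩
  obtain ⟨M, hdata⟩ := (hPb.eventually_secondVariationData H hC hv a hL).exists
  filter_upwards [hdata.setIntegral_add_inv_mul_strip_le
    (fun _ => hPb.exists_boundaryExpansion H.toSmoothFreeBoundary hL)
    (fun _ => hdata.firstVariation_nonneg hmin (isSymmetricUnder_radialCutoff a L Γ)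
      hv.isSymmetricUnder) (sub_pos.2 hθ)] with ε hε
  rw [hPb.setIntegral_quadraticForm H.toSmoothFreeBoundary hv a hL] at hε
  rw [totalDefect]
  linarith [hB L hL]

end Subsolution

section Strip

lemma ofReal_div_le_volume_of_lipschitzWith {f : ℝ → ℝ} {K : NNReal} {t : ℝ}
    (hf : LipschitzWith K f) (hf0 : ∀ s, 0 ≤ f s) (hK : 0 < K) (h0 : t ≤ f 0) (h1 : f 1 = 0) :
    ENNReal.ofReal (t / K) ≤ volume {s ∈ Icc (0 : ℝ) 1 | 0 < f s ∧ f s < t} := by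
  have hK' : (0 : ℝ) < K := hK
  obtain ⟨s₀, ⟨hs₀, hfs₀⟩, hleast⟩ := (isCompact_Icc.inter_right
    (isClosed_eq hf.continuous continuous_const) :
      IsCompact (Icc (0 : ℝ) 1 ∩ {s | f s = 0})).exists_isLeast ⟨1, by simp, h1⟩
  have hlip (s : ℝ) (hs : s ≤ s₀) : f s ≤ K * (s₀ - s) := by
    have := hf.dist_le_mul s s₀
    rwa [Real.dist_eq, Real.dist_eq, hfs₀, sub_zero, abs_of_nonneg (hf0 s), abs_sub_comm,
      abs_of_nonneg (sub_nonneg.2 hs)] at this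
  have hstart : 0 ≤ s₀ - t / K := by
    rw [sub_nonneg, div_le_iff₀' hK']
    simpa using h0.trans (hlip 0 hs₀.1)
  have hsub : Ioo (s₀ - t / K) s₀ ⊆ {s ∈ Icc (0 : ℝ) 1 | 0 < f s ∧ f s < t} := by
    intro s ⟨hs, hss₀⟩
    have hsI : s ∈ Icc (0 : ℝ) 1 := ⟨hstart.trans hs.le, hss₀.le.trans hs₀.2⟩
    refine ⟨hsI, (hf0 s).lt_of_ne' fun h => hss₀.not_ge (hleast ⟨hsI, h⟩), ?_⟩
    rw [sub_lt_comm, lt_div_iff₀' hK'] at hs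
    exact (hlip s hss₀.le).trans_lt hs
  simpa using measure_mono (μ := volume) hsub

variable {E : Type*} [NormedAddCommGroup E] [NormedSpace ℝ E] [MeasurableSpace E]
  [BorelSpace E] [SecondCountableTopology E] {μ : Measure E}

lemma lintegral_volume_segment_inter [SFinite μ] [μ.IsAddRightInvariant] {S : Set E}
    (hS : MeasurableSet S) (w : E) :
    ∫⁻ x, volume {s ∈ Icc (0 : ℝ) 1 | x + s • w ∈ S} ∂μ = μ S := by
  have hmeas : MeasurableSet {p : E × ℝ | p.2 ∈ Icc (0 : ℝ) 1 ∧ p.1 + p.2 • w ∈ S} := by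
    refine (measurableSet_Icc.preimage measurable_snd).inter (hS.preimage ?_)
    fun_prop
  have hslice (s : ℝ) (hs : s ∈ Icc (0 : ℝ) 1) :
      μ {x | s ∈ Icc (0 : ℝ) 1 ∧ x + s • w ∈ S} = μ S := by
    simp only [hs, true_and]
    exact measure_preimage_add_right μ (s • w) S
  have hslice' (s : ℝ) (hs : s ∉ Icc (0 : ℝ) 1) :
      μ {x | s ∈ Icc (0 : ℝ) 1 ∧ x + s • w ∈ S} = 0 := by
    simp only [hs, false_and, ofPred_false, measure_empty]
  calc ∫⁻ x, volume {s ∈ Icc (0 : ℝ) 1 | x + s • w ∈ S} ∂μ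
      = ∫⁻ s : ℝ, μ {x | s ∈ Icc (0 : ℝ) 1 ∧ x + s • w ∈ S} :=
        (Measure.prod_apply hmeas).symm.trans (Measure.prod_apply_symm hmeas)
    _ = ∫⁻ s : ℝ, (Icc (0 : ℝ) 1).indicator (fun _ => μ S) s := by
        refine lintegral_congr fun s => ?_
        by_cases hs : s ∈ Icc (0 : ℝ) 1
        · rw [hslice s hs, indicator_of_mem hs]
        · rw [hslice' s hs, indicator_of_notMem hs]
    _ = μ S := by simp

/- Each segment from `x ∈ A` to the zero `x + w` of `u` spends time at least `t / K` in the strip;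
integrating over `A` and exchanging the integrals gives the bound. -/
lemma ofReal_div_mul_measure_le_measure_strip [SFinite μ] [μ.IsAddRightInvariant] {u : E → ℝ}
    {C K : NNReal} (hu : LipschitzWith C u) (hu0 : ∀ x, 0 ≤ u x) {A B : Set E}
    (hA : MeasurableSet A) (hB : MeasurableSet B) (hconv : Convex ℝ B) {w : E} (hK0 : 0 < K)
    (hK : C * ‖w‖₊ ≤ K) {t : ℝ}
    (hAB : ∀ x ∈ A, x ∈ B ∧ x + w ∈ B ∧ t ≤ u x ∧ u (x + w) = 0) :
    ENNReal.ofReal (t / K) * μ A ≤ μ ({x | 0 < u x ∧ u x < t} ∩ B) := by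
  have hS : MeasurableSet ({x | 0 < u x ∧ u x < t} ∩ B) :=
    ((isOpen_lt continuous_const hu.continuous).inter
      (isOpen_lt hu.continuous continuous_const)).measurableSet.inter hB
  rw [← lintegral_volume_segment_inter hS w, ← setLIntegral_const]
  refine (setLIntegral_mono' hA fun x hx => ?_).trans (setLIntegral_le_lintegral A _)
  obtain ⟨hxB, hxwB, htx, hxw⟩ := hAB x hx
  have hsegment : LipschitzWith ‖w‖₊ fun s : ℝ => x + s • w :=
    LipschitzWith.of_dist_le_mul fun s r => by
      rw [dist_add_left, dist_eq_norm, ← sub_smul, norm_smul, mul_comm, dist_eq_norm, coe_nnnorm]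
  have hlip : LipschitzWith K fun s : ℝ => u (x + s • w) := (hu.comp hsegment).weaken hK
  refine (ofReal_div_le_volume_of_lipschitzWith hlip (fun s => hu0 _) hK0 (by simpa)
    (by simpa)).trans (measure_mono ?_)
  rintro s ⟨hs, hus⟩
  exact ⟨hs, hus, hconv.add_smul_mem hxB hxwB hs⟩

lemma exists_eventually_mul_le_measureReal_strip [SFinite μ] [μ.IsAddRightInvariant]
    [μ.IsOpenPosMeasure] {u : E → ℝ} {C : NNReal} (hu : LipschitzWith C u) (hu0 : ∀ x, 0 ≤ u x)
    {B : Set E} (hB : IsOpen B) (hconv : Convex ℝ B) (hfin : μ B ≠ ⊤) {p q : E} (hp : p ∈ B)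
    (hup : 0 < u p) (hq : q ∈ B) (huq : ∀ᶠ x in 𝓝 q, u x = 0) :
    ∃ c > 0, ∀ᶠ t in 𝓝[>] 0, c * t ≤ μ.real ({x | 0 < u x ∧ u x < t} ∩ B) := by
  have htranslate : Tendsto (fun x => x + (q - p)) (𝓝 p) (𝓝 q) :=
    (continuous_add_const (q - p)).tendsto' p q (add_sub_cancel p q)
  have hnear : ∀ᶠ x in 𝓝 p, x ∈ B ∧ x + (q - p) ∈ B ∧ u p / 2 < u x ∧ u (x + (q - p)) = 0 :=
    (hB.eventually_mem hp).and <| (htranslate.eventually (hB.mem_nhds hq)).and <|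
      ((hu.continuous.tendsto p).eventually_const_lt (half_lt_self hup)).and
        (htranslate.eventually huq)
  obtain ⟨r, hr, hball⟩ := Metric.eventually_nhds_iff_ball.1 hnear
  have hballB : μ (ball p r) ≠ ⊤ := measure_ne_top_of_subset (fun x hx => (hball x hx).1) hfin
  let K : NNReal := C * ‖q - p‖₊ + 1
  have hK : (0 : ℝ) < K := by positivity
  refine ⟨μ.real (ball p r) / K,
    div_pos (ENNReal.toReal_pos (measure_ball_pos μ p hr).ne' hballB) hK, ?_⟩
  filter_upwards [Ioc_mem_nhdsGT (half_pos hup)] with t ht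
  have hstrip := ofReal_div_mul_measure_le_measure_strip (μ := μ) hu hu0 measurableSet_ball
    hB.measurableSet hconv (w := q - p) (K := K) (by positivity) le_self_add (t := t) fun x hx =>
      ⟨(hball x hx).1, (hball x hx).2.1, ht.2.trans (hball x hx).2.2.1.le, (hball x hx).2.2.2⟩
  have hreal := ENNReal.toReal_mono (measure_ne_top_of_subset inter_subset_right hfin) hstrip
  rwa [ENNReal.toReal_mul, ENNReal.toReal_ofReal (div_nonneg ht.1.le hK.le), mul_comm,
    ← mul_div_assoc, mul_div_right_comm] at hreal

end Strip

section LowerBounds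

lemma continuousOn_lap {n : ℕ} {v : EuclideanSpace ℝ (Fin n) → ℝ}
    {D : Set (EuclideanSpace ℝ (Fin n))} (hD : IsOpen D) (hv : ContDiffOn ℝ 2 v D) :
    ContinuousOn (lap v) D := by
  refine continuousOn_finsetSum _ fun i _ => ?_
  have hfirst : ContDiffOn ℝ 1 (fun y => fderiv ℝ v y (EuclideanSpace.single i 1)) D :=
    (hv.fderiv_of_isOpen hD (by norm_num)).clm_apply contDiffOn_const
  exact (hfirst.continuousOn_fderiv_of_isOpen hD le_rfl).clm_apply continuousOn_const

lemma mul_measureReal_le_setIntegral {X : Type*} [MeasurableSpace X] {μ : Measure X} {A S : Set X}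
    {f : X → ℝ} {c : ℝ} (hA : MeasurableSet A) (hS : MeasurableSet S) (hSA : S ⊆ A)
    (hfin : μ S ≠ ⊤) (hf : IntegrableOn f A μ) (hf0 : ∀ x ∈ A, 0 ≤ f x) (hc : ∀ x ∈ S, c ≤ f x) :
    c * μ.real S ≤ ∫ x in A, f x ∂μ :=
  (setIntegral_ge_of_const_le_real hS hfin hc (hf.mono_set hSA)).trans
    (setIntegral_mono_set hf ((ae_restrict_iff' hA).2 (ae_of_all _ hf0)) hSA.eventuallyLE)

lemma exists_pos_eventually_le_radialCutoff {E : Type*} [NormedAddCommGroup E]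
    [InnerProductSpace ℝ E] {K : Set E} (hK : IsCompact K) (hK0 : 0 ∉ K) (a : ℝ) :
    ∃ c > 0, ∀ᶠ L in atTop, ∀ x ∈ K, x ∈ logAnnulus E (2 * L) ∧ c ≤ radialCutoff a L x := by
  have hne : ∀ x ∈ K, x ≠ 0 := fun x hx => ne_of_mem_of_not_mem hx hK0
  have hpow : ContinuousOn (fun x : E => ‖x‖ ^ (-a)) K :=
    continuous_norm.continuousOn.rpow_const fun x hx => Or.inl (norm_ne_zero_iff.2 (hne x hx))
  have hlog : ContinuousOn (fun x : E => Real.log ‖x‖) K :=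
    continuous_norm.continuousOn.log fun x hx => norm_ne_zero_iff.2 (hne x hx)
  obtain ⟨c, hc, hcK⟩ := hK.exists_forall_le' hpow (a := 0)
    fun x hx => Real.rpow_pos_of_pos (norm_pos_iff.2 (hne x hx)) _
  obtain ⟨M, hM⟩ := hK.exists_bound_of_continuousOn hlog
  refine ⟨c, hc, ?_⟩
  filter_upwards [eventually_ge_atTop M, eventually_gt_atTop 0] with L hML hL x hx
  have hlogx : |Real.log ‖x‖| ≤ L := (hM x hx).trans hML
  refine ⟨(mem_logAnnulus_iff (hne x hx)).2 (hlogx.trans (by linarith)), ?_⟩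
  rw [radialCutoff_of_mem_logAnnulus a hL ((mem_logAnnulus_iff (hne x hx)).2 hlogx)]
  exact hcK x hx

end LowerBounds

section Instability

/-- A homogeneous weight satisfying `Δv ≥ γ v / |x|²` in `{u > 0}` and `∂_ν v ≤ H v` on the free
boundary. -/
structure HomogeneousSubsolution {n : ℕ}
    (Γ : Subgroup (EuclideanSpace ℝ (Fin n) ≃ₗᵢ[ℝ] EuclideanSpace ℝ (Fin n)))
    (u U v : EuclideanSpace ℝ (Fin n) → ℝ) (μ γ : ℝ) : Prop extends HomogeneousWeight Γ u v μ where
  le_lap : ∀ x ∈ positivitySet u, γ * v x / ‖x‖ ^ 2 ≤ lap v x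
  dNu_le : ∀ x ∈ freeBoundary u, dNu U v x ≤ meanCurv U x * v x

variable {n : ℕ} {Γ : Subgroup (EuclideanSpace ℝ (Fin n) ≃ₗᵢ[ℝ] EuclideanSpace ℝ (Fin n))}
  {u U v P b : EuclideanSpace ℝ (Fin n) → ℝ} {W K S T : Set (EuclideanSpace ℝ (Fin n))}
  {x z : EuclideanSpace ℝ (Fin n)} {C : NNReal} {a c m ε L γ μ κ : ℝ}

local notation "ℝⁿ" => EuclideanSpace ℝ (Fin n)

namespace SmoothFreeBoundary

lemma eventually_eq_zero_sub_smul_gradient (H : SmoothFreeBoundary u U W)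
    (hz : z ∈ freeBoundary u) {δ : ℝ} (hδ : IsNormalBall u U z δ) {t : ℝ} (ht : 0 < t)
    (htδ : t < δ) : ∀ᶠ x in 𝓝 (z + (-t) • gradient U z), u x = 0 := by
  have hq : z + (-t) • gradient U z ∈ ball z δ :=
    add_smul_mem_ball (H.norm_gradient_ext z hz) (by simpa [abs_of_pos ht] using htδ)
  have hcancel : z + (-t) • gradient U z + t • gradient U z = z := by
    rw [add_assoc, ← add_smul, neg_add_cancel, zero_smul, add_zero]
  have hmono := hδ.add_half_le _ hq t ht.le
    (by rw [hcancel]; exact mem_ball_self (ht.trans htδ))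
  rw [hcancel, H.ext_eq_zero hz.1] at hmono
  have hcont := hδ.continuousOn.continuousAt (isOpen_ball.mem_nhds hq)
  filter_upwards [hcont.tendsto.eventually_lt_const (show _ < (0 : ℝ) by linarith)] with x hx
  refine (H.nonneg x).antisymm' (not_lt.1 fun hux => ?_)
  exact (hux.trans_eq (H.ext_eq_of_pos hux).symm).not_gt hx

lemma exists_eventually_mul_le_strip (H : SmoothFreeBoundary u U W) (hC : LipschitzWith C u)
    (hz : z ∈ freeBoundary u) {r : ℝ} (hr : 0 < r) :
    ∃ c > 0, ∀ᶠ t in 𝓝[>] 0, c * t ≤ volume.real ({x | 0 < u x ∧ u x < t} ∩ ball z r) := by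
  obtain ⟨δ, hδ, hδr, hball⟩ := H.exists_isNormalBall hz hr
  have hmem {s : ℝ} (hs : |s| < δ) : z + s • gradient U z ∈ ball z r :=
    ball_subset_ball hδr (add_smul_mem_ball (H.norm_gradient_ext z hz) (by simpa using hs))
  have hhalf : |δ / 2| < δ := by rw [abs_of_pos (half_pos hδ)]; exact half_lt_self hδ
  exact exists_eventually_mul_le_measureReal_strip hC H.nonneg isOpen_ball (convex_ball z r)
    measure_ball_lt_top.ne (hmem hhalf)
    (H.pos_add_smul_gradient hz hball (half_pos hδ) (half_lt_self hδ))
    (hmem (by rwa [abs_neg]))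
    (H.eventually_eq_zero_sub_smul_gradient hz hball (half_pos hδ) (half_lt_self hδ))

lemma eventually_sub_meanCurv_mul_le (H : SmoothFreeBoundary u U W)
    (hv : ContDiffOn ℝ 1 v (positivitySet u ∪ freeBoundary u)) (hz : z ∈ freeBoundary u)
    (hκ : κ < -dNu U v z + meanCurv U z * v z) :
    ∀ᶠ x in 𝓝[positivitySet u] z,
      κ - meanCurv U x * v x ≤ ⟪gradient v x, gradient u x⟫ := by
  filter_upwards [(H.tendsto_inner_gradient_add hv hz).eventually_const_lt hκ] with x hx
  linarith

end SmoothFreeBoundary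

namespace HomogeneousSubsolution

lemma subsolutionDefect_interior (hv : HomogeneousSubsolution Γ u U v μ γ)
    (H : SmoothFreeBoundary u U W) (hS : MeasurableSet S)
    (hgap : ∀ x ∈ S, γ * v x / ‖x‖ ^ 2 + κ ≤ lap v x) :
    SubsolutionDefect u U v γ (S.indicator fun _ => κ) 0 where
  measurable_interior := measurable_const.indicator hS
  measurable_boundary := measurable_zero
  exists_abs_le := ⟨|κ|, fun x => ⟨by simpa using norm_indicator_le_norm_self (fun _ => κ) x,
    by simp⟩⟩
  add_le_lap x hx := by
    by_cases hxS : x ∈ S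
    · simpa [hxS] using hgap x hxS
    · simpa [hxS] using hv.le_lap x hx
  eventually_sub_le z hz η hη := by
    filter_upwards [H.eventually_sub_meanCurv_mul_le hv.contDiffOn_one hz (κ := -η)
      (by linarith [hv.dNu_le z hz])] with x hx
    simp only [Pi.zero_apply]
    linarith

lemma subsolutionDefect_boundary (hv : HomogeneousSubsolution Γ u U v μ γ)
    (H : SmoothFreeBoundary u U W) (hκ : 0 ≤ κ) (hS : MeasurableSet S) (hT : IsOpen T)
    (hST : closure S ⊆ T) (hgap : ∀ x ∈ T, 0 < u x →
      κ - meanCurv U x * v x ≤ ⟪gradient v x, gradient u x⟫) :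
    SubsolutionDefect u U v γ 0 (S.indicator fun _ => κ) where
  measurable_interior := measurable_zero
  measurable_boundary := measurable_const.indicator hS
  exists_abs_le := ⟨|κ|, fun x => ⟨by simp,
    by simpa using norm_indicator_le_norm_self (fun _ => κ) x⟩⟩
  add_le_lap x hx := by simpa using hv.le_lap x hx
  eventually_sub_le z hz η hη := by
    by_cases hzT : z ∈ T
    · filter_upwards [mem_nhdsWithin_of_mem_nhds (hT.mem_nhds hzT), self_mem_nhdsWithin]
        with x hxT hux
      have hle : S.indicator (fun _ => κ) x ≤ κ := indicator_le_self' (fun _ _ => hκ) x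
      linarith [hgap x hxT hux]
    · filter_upwards [H.eventually_sub_meanCurv_mul_le hv.contDiffOn_one hz (κ := -η)
        (by linarith [hv.dNu_le z hz]), mem_nhdsWithin_of_mem_nhds
        (isClosed_closure.isOpen_compl.mem_nhds fun h => hzT (hST h))] with x hx hxS
      rw [indicator_of_notMem fun h => hxS (subset_closure h)]
      linarith

end HomogeneousSubsolution

namespace SubsolutionDefect

lemma le_totalDefect_interior (hPb : SubsolutionDefect u U v γ (K.indicator fun _ => κ) 0)
    (H : SmoothFreeBoundary u U W) (hv : HomogeneousWeight Γ u v μ) (hκ : 0 ≤ κ)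
    (hK : IsCompact K) (hKu : K ⊆ positivitySet u) (hL : 0 < L) (hc : 0 ≤ c) (hm : 0 ≤ m)
    (hvK : ∀ x ∈ K, m ≤ v x)
    (hcK : ∀ x ∈ K, x ∈ logAnnulus ℝⁿ (2 * L) ∧ c ≤ radialCutoff a L x) (ε : ℝ) :
    κ * c ^ 2 * m * volume.real K ≤ totalDefect u v (K.indicator fun _ => κ) 0 a L ε := by
  have hzero : (∫ x in positivitySet u ∩ logAnnulus ℝⁿ (2 * L),
      (lostStrip u (perturbation (radialCutoff a L) v ε)).indicator
        (fun x => radialCutoff a L x * (0 : ℝⁿ → ℝ) x) x) = 0 := by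
    simp
  rw [totalDefect, hzero, mul_zero, add_zero]
  refine mul_measureReal_le_setIntegral
    (H.isOpen_positivitySet.measurableSet.inter (isCompact_logAnnulus _).measurableSet)
    hK.measurableSet (fun x hx => ⟨hKu hx, (hcK x hx).1⟩) hK.measure_lt_top.ne
    (hPb.integrableOn_interior H hv a hL) (fun x hx => ?_) fun x hx => ?_
  · exact mul_nonneg (mul_nonneg (indicator_nonneg (fun _ _ => hκ) x) (sq_nonneg _))
      (hv.nonneg x hx.1)
  · rw [indicator_of_mem hx]
    have hcx := (hcK x hx).2
    have hvx := hvK x hx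
    gcongr

lemma le_totalDefect_boundary (hPb : SubsolutionDefect u U v γ 0 (S.indicator fun _ => κ))
    (H : OnePhaseCone u U W) (hC : LipschitzWith C u) (hv : HomogeneousWeight Γ u v μ)
    (hκ : 0 ≤ κ) (hS : MeasurableSet S) (hL : 0 < L) (hm : 0 ≤ m)
    (hvS : ∀ x ∈ S, 0 < u x → m ≤ v x)
    (hcS : ∀ x ∈ S, x ∈ logAnnulus ℝⁿ (2 * L) ∧ c ≤ radialCutoff a L x) (hε : 0 < ε) :
    ε⁻¹ * (c * κ * volume.real ({x | 0 < u x ∧ u x < c * m * ε} ∩ S)) ≤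
      totalDefect u v 0 (S.indicator fun _ => κ) a L ε := by
  obtain ⟨M, hdata⟩ := (hPb.eventually_secondVariationData H hC hv a hL).exists
  have hK := isCompact_logAnnulus (E := ℝⁿ) (2 * L)
  have hsub : {x | 0 < u x ∧ u x < c * m * ε} ∩ S ⊆
      positivitySet u ∩ logAnnulus ℝⁿ (2 * L) := fun x hx => ⟨hx.1.1, (hcS x hx.2).1⟩
  have hbnonneg : ∀ x, 0 ≤ S.indicator (fun _ => κ) x := indicator_nonneg fun _ _ => hκ
  simp only [totalDefect, Pi.zero_apply, zero_mul, integral_zero, zero_add]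
  refine mul_le_mul_of_nonneg_left (mul_measureReal_le_setIntegral
    (H.isOpen_positivitySet.measurableSet.inter hK.measurableSet)
    (((isOpen_lt continuous_const H.continuous).inter
      (isOpen_lt H.continuous continuous_const)).measurableSet.inter hS) hsub
    (measure_ne_top_of_subset hsub (measure_inter_compact_ne_top hK))
    hdata.integrableOn_indicator_mul (fun x _ => ?_) fun x hx => ?_) (inv_nonneg.2 hε.le)
  · exact indicator_nonneg (fun y _ => mul_nonneg (radialCutoff_nonneg a L y) (hbnonneg y)) x
  · obtain ⟨⟨hux, hut⟩, hxS⟩ := hx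
    have hcx := (hcS x hxS).2
    have hvx := hvS x hxS hux
    have hstrip : x ∈ lostStrip u (perturbation (radialCutoff a L) v ε) := by
      refine ⟨hux, hut.le.trans ?_⟩
      rw [perturbation, mul_comm]
      gcongr
      exact radialCutoff_nonneg a L x
    rw [indicator_of_mem hstrip, indicator_of_mem hxS]
    gcongr

lemma eventually_le_totalDefect_boundary
    (hPb : SubsolutionDefect u U v γ 0 (S.indicator fun _ => κ)) (H : OnePhaseCone u U W)
    (hC : LipschitzWith C u) (hv : HomogeneousWeight Γ u v μ) (hκ : 0 ≤ κ)
    (hS : MeasurableSet S) (hL : 0 < L) (hc : 0 < c) (hm : 0 < m)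
    (hvS : ∀ x ∈ S, 0 < u x → m ≤ v x)
    (hcS : ∀ x ∈ S, x ∈ logAnnulus ℝⁿ (2 * L) ∧ c ≤ radialCutoff a L x) {d : ℝ}
    (hd : ∀ᶠ t in 𝓝[>] 0, d * t ≤ volume.real ({x | 0 < u x ∧ u x < t} ∩ S)) :
    ∀ᶠ ε in 𝓝[>] 0, c * κ * (d * (c * m)) ≤
      totalDefect u v 0 (S.indicator fun _ => κ) a L ε := by
  filter_upwards [eventually_nhdsGT_zero_mul_left (mul_pos hc hm) hd, self_mem_nhdsWithin]
    with ε hvol hε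
  have hε' : 0 < ε := hε
  refine le_trans ?_ (hPb.le_totalDefect_boundary H hC hv hκ hS hL hm.le hvS hcS hε')
  calc c * κ * (d * (c * m)) = ε⁻¹ * (c * κ * (d * (c * m * ε))) := by field_simp
    _ ≤ ε⁻¹ * (c * κ * volume.real ({x | 0 < u x ∧ u x < c * m * ε} ∩ S)) := by gcongr

end SubsolutionDefect

lemma IsSymMinimizer.not_eventually_le_totalDefect [Nontrivial ℝⁿ] (hmin : IsSymMinimizer Γ u)
    (H : OnePhaseCone u U W) (hv : HomogeneousWeight Γ u v μ)
    (hγ : ((n : ℝ) / 2 - 1 - μ) ^ 2 ≤ γ) (hPb : SubsolutionDefect u U v γ P b) {g : ℝ}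
    (hg : 0 < g) :
    ¬∀ᶠ L in atTop, ∀ᶠ ε in 𝓝[>] 0,
      g ≤ totalDefect u v P b ((n : ℝ) / 2 - 1 - μ) L ε := by
  intro hlower
  obtain ⟨B, hB⟩ := hmin.exists_eventually_totalDefect_le H hv rfl hγ
  have hdecay : Tendsto (fun L : ℝ => B / L) atTop (𝓝 0) :=
    tendsto_const_nhds.div_atTop tendsto_id
  obtain ⟨L, hL, hBL, hLpos⟩ := (hlower.and ((hdecay.eventually_lt_const (half_pos hg)).and
    (eventually_gt_atTop 0))).exists
  obtain ⟨ε, hle, hge⟩ := ((hB P b hPb L hLpos (g / 2) hBL).and hL).exists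
  exact (half_lt_self hg).not_ge (hge.trans hle)

namespace HomogeneousSubsolution

theorem not_isSymMinimizer_of_lt_lap (hv : HomogeneousSubsolution Γ u U v μ γ)
    (H : OnePhaseCone u U W) (hγ : ((n : ℝ) / 2 - 1 - μ) ^ 2 ≤ γ) (hx : 0 < u x)
    (hvx : 0 < v x) (hlt : γ * v x / ‖x‖ ^ 2 < lap v x) : ¬IsSymMinimizer Γ u := by
  intro hmin
  have hx0 := H.ne_zero_of_pos hx
  have : Nontrivial ℝⁿ := ⟨x, 0, hx0⟩
  have hnhds := H.isOpen_positivitySet.mem_nhds hx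
  obtain ⟨κ, hκ, hκlt⟩ := exists_between (sub_pos.2 hlt)
  have hvcont := hv.contDiffOn_two.continuousOn.continuousAt hnhds
  have hgap : Tendsto (fun y => lap v y - γ * v y / ‖y‖ ^ 2) (𝓝 x)
      (𝓝 (lap v x - γ * v x / ‖x‖ ^ 2)) :=
    ((continuousOn_lap H.isOpen_positivitySet hv.contDiffOn_two).continuousAt hnhds).sub
      ((continuousAt_const.mul hvcont).div (continuous_norm.pow 2).continuousAt
        (pow_ne_zero 2 (norm_ne_zero_iff.2 hx0)))
  obtain ⟨ρ, hρ, hK⟩ := nhds_basis_closedBall.eventually_iff.1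
    ((hgap.eventually_const_lt hκlt).and ((hvcont.eventually_const_lt (half_lt_self hvx)).and
      (H.isOpen_positivitySet.eventually_mem hx)))
  have hcompact := isCompact_closedBall x ρ
  obtain ⟨c, hc, hcut⟩ := exists_pos_eventually_le_radialCutoff hcompact
    (fun h0 => H.ne_zero_of_pos (hK h0).2.2 rfl) ((n : ℝ) / 2 - 1 - μ)
  have hPb := hv.subsolutionDefect_interior H.toSmoothFreeBoundary
    measurableSet_closedBall fun y (hy : y ∈ closedBall x ρ) => (lt_sub_iff_add_lt'.1 (hK hy).1).le
  have hvol : 0 < volume.real (closedBall x ρ) :=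
    ENNReal.toReal_pos (measure_closedBall_pos volume x hρ).ne' hcompact.measure_lt_top.ne
  refine hmin.not_eventually_le_totalDefect H hv.toHomogeneousWeight hγ hPb
    (g := κ * c ^ 2 * (v x / 2) * volume.real (closedBall x ρ)) (by positivity) ?_
  filter_upwards [hcut, eventually_gt_atTop 0] with L hcutL hL
  exact Eventually.of_forall (hPb.le_totalDefect_interior H.toSmoothFreeBoundary
    hv.toHomogeneousWeight hκ.le hcompact (fun y hy => (hK hy).2.2) hL hc.le (half_pos hvx).le
    (fun y hy => (hK hy).2.1.le) hcutL)

theorem not_isSymMinimizer_of_dNu_lt (hv : HomogeneousSubsolution Γ u U v μ γ)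
    (H : OnePhaseCone u U W) (hγ : ((n : ℝ) / 2 - 1 - μ) ^ 2 ≤ γ) (hz : z ∈ freeBoundary u)
    (hvz : 0 < v z) (hlt : dNu U v z < meanCurv U z * v z) : ¬IsSymMinimizer Γ u := by
  intro hmin
  have : Nontrivial ℝⁿ := ⟨z, 0, hz.2⟩
  obtain ⟨C, hC⟩ := exists_lipschitzWith_of_homogeneous H.locallyLipschitz H.map_smul
  obtain ⟨κ, hκ, hκlt⟩ := exists_between (sub_pos.2 hlt)
  have hvlim : Tendsto v (𝓝[positivitySet u] z) (𝓝 (v z)) :=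
    (hv.contDiffOn_one.continuousOn z (Or.inr hz)).mono_left (nhdsWithin_mono z subset_union_left)
  obtain ⟨R, hR, hball⟩ := nhds_basis_ball.eventually_iff.1 <|
    (eventually_nhdsWithin_iff.1 ((H.eventually_sub_meanCurv_mul_le hv.contDiffOn_one hz
      (hκlt.trans_eq (by ring))).and (hvlim.eventually_const_lt (half_lt_self hvz)))).and
    (isOpen_compl_singleton.eventually_mem hz.2)
  have hclosed : closedBall z (R / 2) ⊆ ball z R := closedBall_subset_ball (half_lt_self hR)
  have hsub : ball z (R / 2) ⊆ closedBall z (R / 2) := ball_subset_closedBall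
  obtain ⟨c, hc, hcut⟩ := exists_pos_eventually_le_radialCutoff
    (isCompact_closedBall z (R / 2)) (fun h0 => (hball (hclosed h0)).2 rfl)
    ((n : ℝ) / 2 - 1 - μ)
  obtain ⟨d, hd, hstrip⟩ := H.exists_eventually_mul_le_strip hC hz (half_pos hR)
  have hPb := hv.subsolutionDefect_boundary H.toSmoothFreeBoundary hκ.le measurableSet_ball
    isOpen_ball (closure_ball_subset_closedBall.trans hclosed)
    fun y hy huy => ((hball hy).1 huy).1
  refine hmin.not_eventually_le_totalDefect H hv.toHomogeneousWeight hγ hPb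
    (g := c * κ * (d * (c * (v z / 2)))) (by positivity) ?_
  filter_upwards [hcut, eventually_gt_atTop 0] with L hcutL hL
  exact hPb.eventually_le_totalDefect_boundary H hC hv.toHomogeneousWeight hκ.le measurableSet_ball
    hL hc (half_pos hvz) (fun y hy huy => ((hball (hclosed (hsub hy))).1 huy).2.le)
    (fun y hy => hcutL y (hsub hy)) hstrip

end HomogeneousSubsolution

end Instability

theorem homogeneous_subsolution_implies_unstable_general {n : ℕ}
    {Γ : Subgroup (EuclideanSpace ℝ (Fin n) ≃ₗᵢ[ℝ] EuclideanSpace ℝ (Fin n))}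
    {u U v : EuclideanSpace ℝ (Fin n) → ℝ} {W : Set (EuclideanSpace ℝ (Fin n))} {μ γ : ℝ}
    (H : OnePhaseCone u U W) (hv : HomogeneousSubsolution Γ u U v μ γ)
    (hγ : ((n : ℝ) / 2 - 1 - μ) ^ 2 ≤ γ)
    (hstrict : (∃ x ∈ positivitySet u, 0 < v x ∧ γ * v x / ‖x‖ ^ 2 < lap v x) ∨
      ∃ z ∈ freeBoundary u, 0 < v z ∧ dNu U v z < meanCurv U z * v z) :
    ¬IsSymMinimizer Γ u := by
  rcases hstrict with ⟨x, hx, hvx, hlt⟩ | ⟨z, hz, hvz, hlt⟩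
  · exact hv.not_isSymMinimizer_of_lt_lap H hγ hx hvx hlt
  · exact hv.not_isSymMinimizer_of_dNu_lt H hγ hz hvz hlt

/-- **Instability from a homogeneous strict subsolution** (Proposition 3.9).
Let `u` be locally Lipschitz, `Γ`-symmetric, `1`-homogeneous, harmonic in `{u>0}`, with
`Σ = ∂{u>0} \ {0}` a smooth embedded hypersurface (encoded by a smooth extension `Uext`) and
`|∇u| = 1` on `Σ`.  If there is a `Γ`-symmetric nonnegative strict subsolution `v̄`,
homogeneous of degree `-μ`, of `Δv̄ ≥ γ v̄/|x|²` in `{u>0}` with `∂_ν v̄ ≤ H v̄` on `Σ` and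
`γ ≥ (n/2 - 1 - μ)²`, then `u` is not a `Γ`-symmetric minimizer against `Γ`-symmetric
competitors. -/
theorem homogeneous_subsolution_implies_unstable {n : ℕ} (hn : 3 ≤ n)
    (Γ : Subgroup (EuclideanSpace ℝ (Fin n) ≃ₗᵢ[ℝ] EuclideanSpace ℝ (Fin n)))
    (hfin : Finite Γ)
    (hfree : ∀ g ∈ Γ, (∃ x : EuclideanSpace ℝ (Fin n), x ≠ 0 ∧ g x = x) → g = 1)
    (u : EuclideanSpace ℝ (Fin n) → ℝ)
    (hu0 : ∀ x, 0 ≤ u x) (huLip : LocallyLipschitz u)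
    (huSym : IsSymmetricUnder Γ u)
    (huHom : ∀ t : ℝ, 0 < t → ∀ x, u (t • x) = t * u x)
    (huHarm : ∀ x ∈ {x | 0 < u x}, lap u x = 0)
    -- smooth extension of `u` across `Σ`
    (Uext : EuclideanSpace ℝ (Fin n) → ℝ) (W : Set (EuclideanSpace ℝ (Fin n)))
    (hW : IsOpen W) (hWsup : closure {x | 0 < u x} \ {0} ⊆ W)
    (hUsm : ContDiffOn ℝ (⊤ : ℕ∞) Uext W)
    (hUeq : ∀ x ∈ closure {x | 0 < u x}, Uext x = u x)
    (hgrad1 : ∀ x ∈ freeBoundary u, ‖gradient Uext x‖ = 1)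
    (hsurf : ∀ x ∈ freeBoundary u, ∃ ε > 0,
      freeBoundary u ∩ ball x ε = {y ∈ ball x ε | Uext y = 0})
    -- the strict subsolution `v̄`, homogeneous of degree `-μ`
    (μ : ℝ) (γ : ℝ) (hγ : ((n : ℝ) / 2 - 1 - μ) ^ 2 ≤ γ)
    (vbar : EuclideanSpace ℝ (Fin n) → ℝ)
    (hvSym : IsSymmetricUnder Γ vbar)
    (hvHom : ∀ t : ℝ, 0 < t → ∀ x : EuclideanSpace ℝ (Fin n), x ≠ 0 →
      vbar (t • x) = t ^ (-μ) * vbar x)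
    (hv0 : ∀ x ∈ closure {x | 0 < u x} \ {0}, 0 ≤ vbar x)
    (hvC2 : ContDiffOn ℝ 2 vbar {x | 0 < u x})
    (hvC1 : ContDiffOn ℝ 1 vbar ({x | 0 < u x} ∪ freeBoundary u))
    (hvNe : ∃ x, 0 < u x ∧ vbar x ≠ 0)
    (hSub : ∀ x ∈ {x | 0 < u x}, γ * vbar x / ‖x‖ ^ 2 ≤ lap vbar x)
    (hBdy : ∀ x ∈ freeBoundary u, dNu Uext vbar x ≤ meanCurv Uext x * vbar x)
    (hStrict :
      (∃ x₀ ∈ {x | 0 < u x}, 0 < vbar x₀ ∧ γ * vbar x₀ / ‖x₀‖ ^ 2 < lap vbar x₀) ∨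
      (∃ x₀ ∈ freeBoundary u, 0 < vbar x₀ ∧
        dNu Uext vbar x₀ < meanCurv Uext x₀ * vbar x₀)) :
    ¬ IsSymMinimizer Γ u :=
  homogeneous_subsolution_implies_unstable_general (W := W)
    ⟨⟨huLip.continuous, hu0, eq_zero_of_homogeneous huHom, hW, hWsup, hUsm, hUeq, hgrad1, hsurf⟩,
      huLip, huHom, huHarm⟩
    ⟨⟨hvSym, hvHom, fun x hx => hv0 x ⟨subset_closure hx, by
        rintro rfl
        exact hx.ne' (eq_zero_of_homogeneous huHom)⟩, hvC2, hvC1⟩, hSub, hBdy⟩ hγ hStrict
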